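/- Let K ⊂ {|x| < 1} ⊂ ℝ⁴ be a smooth, bounded obstacle that is star-shaped with respect to the origin. Let φ ∈ C^∞(ℝ₊ × (ℝ⁴∖K)) solve □_h φ = F with φ|_{∂K} = 0, φ(0,·) = f, ∂_t φ(0,·) = g, where f, g are smooth, supported in |x| < R, satisfy the compatibility conditions and the smallness condition Σ_{|μ|≤N+1} ‖∂_x^μ f‖_{L²} + Σ_{|μ|≤N} ‖∂_x^μ g‖_{L²} ≤ ε, and suppose Σ_{|μ|≤N} ‖∂^μ □φ(0,·)‖_{L²(ℝ⁴∖K)} ≤ Cε. Suppose the coefficients h^{αβ}(t,x) satisfy h^{αβ} = h^{βα} and |h| = Σ_{α,β=0}^4 |h^{αβ}(t,x)| ≤ δ for a sufficiently small δ. Then for any nonnegative integer N and any T > 0: Σ_{|μ|≤N} ‖⟨x⟩^{−1/2−} ∂^μ φ'‖_{L²(S_T^K)} + Σ_{|μ|≤N} ‖⟨x⟩^{−3/2} ∂^μ φ‖_{L²(S_T^K)} + Σ_{|μ|≤N} ‖∂^μ φ'(T,·)‖_{L²(ℝ⁴∖K)} ≲ ε + Σ_{j≤N} ∫₀^T ‖□_h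 ∂_t^j φ(t,·)‖_{L²(ℝ⁴∖K)} dt + Σ_{j≤N} ∫₀^T ‖(|∂h| + |h|/r) |∇∂_t^j φ|‖_{L²(ℝ⁴∖K)} dt + Σ_{|μ|≤N−1} ‖□∂^μ φ‖_{L²(S_T^K)} + Σ_{|μ|≤N−1} ‖□∂^μ φ(T,·)‖_{L²(ℝ⁴∖K)}. -/

import Mathlib

/-!
The proof combines a first order energy and Morawetz estimate for the functions `∂ₜʲφ` with weighted
elliptic regularity in the exterior domain `{0 ≤ ρ}`.

*First order estimates.* If `ψ` vanishes on the boundary, so does `∂ₜψ`, and `∇ψ` is parallel to `∇ρ`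
there. Multiplying `□_h ψ` by `∂ₜψ` and integrating over a truncated backward cone gives the energy
estimate `energy`. Multiplying by `a(x) x·∇ψ + ω₀ ψ`, with `a = 100⟨x⟩⁻¹ - ⟨x⟩⁻¹⁻ᵈ`, gives the localized
energy: the current has divergence at most the source terms minus
`(d/2)⟨x⟩⁻¹⁻ᵈ|ψ'|² + ½⟨x⟩⁻³ψ²` (`kss_div`), its boundary flux has a sign because the obstacle is
star-shaped (`kss_bdry`, `star_radial`), and its time components are controlled by the energy through
Hardy's inequality (`hardy`). The outcome is `kss`. The constants in `a` are chosen so that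
`|h| ≤ 1/100` is enough to absorb the perturbation, whatever `d` is; the terms with `|h|/r` and `|∂h|`
remain on the right-hand side. Integration by parts over `{0 ≤ ρ}` is done without surface measure, by
approximating the characteristic function of `{0 < ρ}` by smooth functions of `ρ`
(`integral_div_nonpos`).

*Higher derivatives.* The fields `∂ₜ` preserve the Dirichlet condition, so `kss` applies to `∂ₜʲφ`.
Spatial derivatives are recovered from `Δ = ∂ₜ² - □` by elliptic regularity in weighted `L²`
(`elliptic`), which is derived from a finite family of vector fields tangential to `{ρ = 0}`
(`TF`, `tangentialFields`): these fields and `Δ` together control all second derivatives. Since the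
elliptic estimate holds at each time, it integrates against any measure in `t`; the Lebesgue measure on
`[0,T]` and the Dirac measure at `T` yield the space-time and the fixed-time terms (`W_full`).

*Data.* At `t = 0` the derivatives `∂ₜʲφ` are expressed through `f`, `g` and `□φ(0,·)` by
`∂ₜ² = Δ + □` (`init_L2`), so that all initial energies are bounded by a multiple of `ε`.
-/

open MeasureTheory Real Set
open scoped ENNReal FourierTransform

noncomputable section

/-- Euclidean space ℝⁿ. -/
abbrev Eu (n : ℕ) : Type := EuclideanSpace ℝ (Fin n)

/-- Spatial partial derivative ∂_i of a function on ℝⁿ. -/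
def sd {n : ℕ} (i : Fin n) (h : Eu n → ℝ) : Eu n → ℝ :=
  fun x => fderiv ℝ h x (EuclideanSpace.single i 1)

/-- Iterated spatial derivatives ∂_x^μ. -/
def sdIter {n : ℕ} : {m : ℕ} → (Fin m → Fin n) → (Eu n → ℝ) → Eu n → ℝ
  | 0, _, h => h
  | m + 1, μ, h => sd (μ 0) (sdIter (fun i : Fin m => μ i.succ) h)

/-- Time derivative ∂_t of u(t,x). -/
def td {n : ℕ} (u : ℝ → Eu n → ℝ) : ℝ → Eu n → ℝ :=
  fun t x => deriv (fun s => u s x) t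

/-- Space-time partial derivative ∂_α, with ∂₀ = ∂_t. -/
def pd {n : ℕ} (α : Fin (n + 1)) (u : ℝ → Eu n → ℝ) : ℝ → Eu n → ℝ :=
  if h : α = 0 then td u else fun t x => sd (α.pred h) (u t) x

/-- Iterated space-time derivatives ∂^μ. -/
def pdIter {n : ℕ} : {m : ℕ} → (Fin m → Fin (n + 1)) → (ℝ → Eu n → ℝ) → ℝ → Eu n → ℝ
  | 0, _, u => u
  | m + 1, μ, u => pd (μ 0) (pdIter (fun i : Fin m => μ i.succ) u)

/-- Iterated spatial derivatives of a space-time function. -/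
def sdIterT {n m : ℕ} (μ : Fin m → Fin n) (u : ℝ → Eu n → ℝ) : ℝ → Eu n → ℝ :=
  fun t x => sdIter μ (u t) x

/-- The d'Alembertian □ = ∂_t² − Δ. -/
def dAlembert {n : ℕ} (u : ℝ → Eu n → ℝ) : ℝ → Eu n → ℝ :=
  fun t x => td (td u) t x - ∑ i : Fin n, sd i (sd i (u t)) x

/-- |u'| : the magnitude of the space-time gradient (∂_t u, ∇_x u). -/
def gradMag {n : ℕ} (u : ℝ → Eu n → ℝ) : ℝ → Eu n → ℝ :=
  fun t x => Real.sqrt (∑ α : Fin (n + 1), pd α u t x ^ 2)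

/-- Smoothness of a space-time function. -/
def SmoothTX {n : ℕ} (u : ℝ → Eu n → ℝ) : Prop :=
  ContDiff ℝ (⊤ : ℕ∞) fun p : ℝ × Eu n => u p.1 p.2

/-- L² norm over a region S ⊆ ℝⁿ. -/
def L2x {n : ℕ} (S : Set (Eu n)) (f : Eu n → ℝ) : ℝ≥0∞ :=
  eLpNorm f 2 (volume.restrict S)

/-- Space-time L² norm over [0,T] × S. -/
def L2st {n : ℕ} (T : ℝ) (S : Set (Eu n)) (u : ℝ → Eu n → ℝ) : ℝ≥0∞ :=
  eLpNorm (fun p : ℝ × Eu n => u p.1 p.2) 2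
    ((volume.restrict (Icc 0 T)).prod (volume.restrict S))

/-- Japanese bracket ⟨x⟩ = (1+|x|²)^{1/2}. -/
def jap {n : ℕ} (x : Eu n) : ℝ := Real.sqrt (1 + ‖x‖ ^ 2)

/-- Homogeneous Sobolev norm ‖f‖_{Ḣ^s} = ‖ |ξ|^s 𝓕f(ξ) ‖_{L²}. -/
def sobolevHom {n : ℕ} (s : ℝ) (f : Eu n → ℝ) : ℝ≥0∞ :=
  eLpNorm (fun ξ : Eu n => ‖ξ‖ ^ s * ‖𝓕 (fun x : Eu n => (f x : ℂ)) ξ‖) 2 volume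

/-- A smooth compact obstacle K = {ρ ≤ 0} given by a smooth defining function. -/
structure SmoothObstacle (n : ℕ) where
  ρ : Eu n → ℝ
  smooth : ContDiff ℝ (⊤ : ℕ∞) ρ
  K : Set (Eu n)
  K_def : K = {x | ρ x ≤ 0}
  compact : IsCompact K
  grad_ne : ∀ x, ρ x = 0 → fderiv ℝ ρ x ≠ 0

/-- Ordered pairs (j,k), j < k, indexing the rotation fields Ω_{jk} on ℝ⁴. -/
abbrev OP : Type := {p : Fin 4 × Fin 4 // p.1 < p.2}

/-- Rotation vector field Ω_{jk} = x_j ∂_k − x_k ∂_j. -/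
def rot (j k : Fin 4) (h : Eu 4 → ℝ) : Eu 4 → ℝ :=
  fun x => x j * sd k h x - x k * sd j h x

/-- Products Ω^μ of rotation vector fields. -/
def rotIter : {m : ℕ} → (Fin m → OP) → (Eu 4 → ℝ) → Eu 4 → ℝ
  | 0, _, h => h
  | m + 1, μ, h => rot (μ 0).1.1 (μ 0).1.2 (rotIter (fun i : Fin m => μ i.succ) h)

/-- Radial derivative ∇_r = (x/|x|)·∇. -/
def radialD (h : Eu 4 → ℝ) : Eu 4 → ℝ :=
  fun x => fderiv ℝ h x (‖x‖⁻¹ • x)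

/-- Iterated radial derivatives ∇_r^j. -/
def radialIter : ℕ → (Eu 4 → ℝ) → Eu 4 → ℝ
  | 0, h => h
  | j + 1, h => radialD (radialIter j h)

/-- Magnitude of the spatial gradient ∇_x h. -/
def spGradMag (h : Eu 4 → ℝ) : Eu 4 → ℝ :=
  fun x => Real.sqrt (∑ i : Fin 4, sd i h x ^ 2)

/-- Index set for the fields Z = {∂_α, Ω_{jk}}. -/
abbrev ZIdx : Type := Fin 5 ⊕ OP

/-- Action of a single field Z. -/
def applyZ : ZIdx → (ℝ → Eu 4 → ℝ) → ℝ → Eu 4 → ℝ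
  | Sum.inl α, u => pd (n := 4) α u
  | Sum.inr p, u => fun t x => rot p.1.1 p.1.2 (u t) x

/-- Products Z^μ of the fields Z. -/
def ZIter : {m : ℕ} → (Fin m → ZIdx) → (ℝ → Eu 4 → ℝ) → ℝ → Eu 4 → ℝ
  | 0, _, u => u
  | m + 1, μ, u => applyZ (μ 0) (ZIter (fun i : Fin m => μ i.succ) u)

/-- The perturbed d'Alembertian □_h φ = □φ + h^{αβ} ∂_α ∂_β φ. -/
def boxH (h : Fin 5 → Fin 5 → ℝ → Eu 4 → ℝ) (φ : ℝ → Eu 4 → ℝ) : ℝ → Eu 4 → ℝ :=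
  fun t x => dAlembert φ t x
    + ∑ α : Fin 5, ∑ β : Fin 5, h α β t x * pd (n := 4) α (pd (n := 4) β φ) t x

/-- |h| = Σ_{α,β} |h^{αβ}|. -/
def habs (h : Fin 5 → Fin 5 → ℝ → Eu 4 → ℝ) : ℝ → Eu 4 → ℝ :=
  fun t x => ∑ α : Fin 5, ∑ β : Fin 5, |h α β t x|

/-- |∂h| = Σ_{α,β,γ} |∂_γ h^{αβ}|. -/
def dhabs (h : Fin 5 → Fin 5 → ℝ → Eu 4 → ℝ) : ℝ → Eu 4 → ℝ :=
  fun t x => ∑ γ : Fin 5, ∑ α : Fin 5, ∑ β : Fin 5, |pd (n := 4) γ (h α β) t x|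

/-- Mixed norm ‖G‖_{L¹_t L¹_r L²_ω(ℝ₊×ℝ⁴)}. -/
def mixedNorm (G : ℝ → Eu 4 → ℝ) : ℝ≥0∞ :=
  ∫⁻ t in Ioi (0 : ℝ), ∫⁻ r in Ioi (0 : ℝ),
    eLpNorm (fun ω : Metric.sphere (0 : Eu 4) 1 => G t (r • (ω : Eu 4))) 2
        (volume : Measure (Eu 4)).toSphere
      * ENNReal.ofReal (r ^ 3)

/-- The quantity M(T) (for `kmax = 50`) and A(T) (for `kmax = 49`) from the iteration. -/
def Mgen (kmax : ℕ) (Kc : Set (Eu 4)) (δ : ℝ) (u : ℝ → Eu 4 → ℝ) (T : ℝ) : ℝ≥0∞ :=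
  (∑ m ∈ Finset.range (kmax + 1), ∑ μ : Fin m → Fin 5,
      ((⨆ t ∈ Icc (0 : ℝ) T, L2x Kc fun x => gradMag (pdIter (n := 4) μ u) t x)
        + L2st T Kc fun t x => jap x ^ (-(1/2 : ℝ) - δ) * gradMag (pdIter (n := 4) μ u) t x))
  + (∑ m ∈ Finset.range kmax, ∑ μ : Fin m → ZIdx,
      ((L2st T Kc fun t x => jap x ^ (-(1/2 : ℝ) - δ) * gradMag (ZIter μ u) t x)
        + (L2st T (Kc ∩ {x : Eu 4 | 2 < ‖x‖}) fun t x =>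
            jap x ^ (-(1/2 : ℝ) - 2*δ) * ZIter μ u t x)
        + ⨆ t ∈ Icc (0 : ℝ) T, L2x Kc fun x => gradMag (ZIter μ u) t x))
  + L2st T (Kc ∩ {x : Eu 4 | ‖x‖ < 3}) u

/-- The data (f,g) satisfy the compatibility conditions to infinite order for the
Dirichlet problem □u = Q(u) on the exterior of {ρ ≤ 0}: there is a smooth function
attaining the data, vanishing on the boundary, and solving the equation
to infinite order at t = 0 (its Taylor coefficients at t = 0 are the formal ψ_k). -/
def CompatInfty {n : ℕ} (ρ : Eu n → ℝ) (f g : Eu n → ℝ)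
    (Q : (ℝ → Eu n → ℝ) → ℝ → Eu n → ℝ) : Prop :=
  ∃ U : ℝ → Eu n → ℝ, SmoothTX U ∧ (∀ x, U 0 x = f x) ∧ (∀ x, td U 0 x = g x) ∧
    (∀ t x, ρ x = 0 → U t x = 0) ∧
    ∀ k : ℕ, ∀ x, 0 ≤ ρ x → td^[k] (fun s y => dAlembert U s y - Q U s y) 0 x = 0

/-- The general quasilinear nonlinearity Q(u,u',u'') = A(u,u') + B^{αβ}(u,u') ∂_α∂_β u. -/
def Qnl {n : ℕ} (A : ℝ × (Fin (n + 1) → ℝ) → ℝ)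
    (B : Fin (n + 1) → Fin (n + 1) → ℝ × (Fin (n + 1) → ℝ) → ℝ)
    (u : ℝ → Eu n → ℝ) : ℝ → Eu n → ℝ :=
  fun t x => A (u t x, fun α => pd α u t x)
    + ∑ α, ∑ β, B α β (u t x, fun γ => pd γ u t x) * pd α (pd β u) t x

/-- The quadratically truncated nonlinearity, evaluated on the pair (v,w);
the iteration RHS is `iterRHS a b A B u_{l-1} u_l`. -/
def iterRHS (a : Fin 5 → ℝ) (b A : Fin 5 → Fin 5 → ℝ) (B : Fin 5 → Fin 5 → Fin 5 → ℝ)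
    (v w : ℝ → Eu 4 → ℝ) : ℝ → Eu 4 → ℝ :=
  fun t x => (∑ α : Fin 5, a α * v t x * pd (n := 4) α v t x)
    + (∑ α : Fin 5, ∑ β : Fin 5, b α β * pd (n := 4) α v t x * pd (n := 4) β v t x)
    + (∑ α : Fin 5, ∑ β : Fin 5, A α β * v t x * pd (n := 4) α (pd (n := 4) β w) t x)
    + (∑ α : Fin 5, ∑ β : Fin 5, ∑ γ : Fin 5,
        B α β γ * pd (n := 4) α v t x * pd (n := 4) β (pd (n := 4) γ w) t x)

namespace PLE
open Filter Topology

/-! ### Calculus of the coordinate derivatives -/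

/-- Smoothness of a function on `ℝⁿ`. -/
abbrev Sm {n : ℕ} (u : Eu n → ℝ) : Prop := ContDiff ℝ (⊤ : ℕ∞) u

section
variable {n : ℕ}

lemma Sm.diff {u : Eu n → ℝ} (hu : Sm u) : Differentiable ℝ u :=
  hu.differentiable (by simp)

lemma Sm.cont {u : Eu n → ℝ} (hu : Sm u) : Continuous u := ContDiff.continuous hu

lemma sm_sd {u : Eu n → ℝ} (hu : Sm u) (i : Fin n) : Sm (sd i u) := by
  unfold sd
  exact (hu.fderiv_right (m := (⊤ : ℕ∞)) (by simp)).clm_apply contDiff_const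

lemma sd_add {u v : Eu n → ℝ} (hu : Sm u) (hv : Sm v) (i : Fin n) (x : Eu n) :
    sd i (fun y => u y + v y) x = sd i u x + sd i v x := by
  unfold sd
  rw [fderiv_fun_add (hu.diff x) (hv.diff x)]; rfl

lemma sd_sub {u v : Eu n → ℝ} (hu : Sm u) (hv : Sm v) (i : Fin n) (x : Eu n) :
    sd i (fun y => u y - v y) x = sd i u x - sd i v x := by
  unfold sd
  rw [fderiv_fun_sub (hu.diff x) (hv.diff x)]; rfl

lemma sd_mul {u v : Eu n → ℝ} (hu : Sm u) (hv : Sm v) (i : Fin n) (x : Eu n) :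
    sd i (fun y => u y * v y) x = u x * sd i v x + sd i u x * v x := by
  unfold sd
  rw [fderiv_fun_mul (hu.diff x) (hv.diff x)]
  simp [mul_comm]

lemma sd_sum {ι : Type*} (s : Finset ι) {u : ι → Eu n → ℝ} (hu : ∀ k, Sm (u k)) (i : Fin n)
    (x : Eu n) : sd i (fun y => ∑ k ∈ s, u k y) x = ∑ k ∈ s, sd i (u k) x := by
  unfold sd
  rw [fderiv_fun_sum (fun k _ => (hu k).diff x)]
  simp

lemma sd_const (c : ℝ) (i : Fin n) (x : Eu n) : sd i (fun _ => c) x = 0 := by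
  simp [sd]

lemma sd_neg {u : Eu n → ℝ} (i : Fin n) (x : Eu n) :
    sd i (fun y => - u y) x = - sd i u x := by
  unfold sd
  rw [fderiv_fun_neg]; rfl

lemma sd_comm {u : Eu n → ℝ} (hu : Sm u) (i j : Fin n) : sd i (sd j u) = sd j (sd i u) := by
  funext x
  have key : ∀ a b : Fin n, sd a (sd b u) x
      = fderiv ℝ (fderiv ℝ u) x (EuclideanSpace.single a 1) (EuclideanSpace.single b 1) := by
    intro a b
    have hd : DifferentiableAt ℝ (fderiv ℝ u) x :=
      ((hu.fderiv_right (m := (⊤ : ℕ∞)) (by simp)).differentiable (by simp)) x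
    change fderiv ℝ (fun y => fderiv ℝ u y (EuclideanSpace.single b 1)) x
      (EuclideanSpace.single a 1) = _
    rw [fderiv_clm_apply hd (differentiableAt_const _)]
    simp
  rw [key, key]
  have hs : IsSymmSndFDerivAt ℝ u x := (hu.contDiffAt).isSymmSndFDerivAt
    (by simp only [minSmoothness_of_isRCLikeNormedField]; exact WithTop.coe_le_coe.2 le_top)
  exact hs _ _

lemma sm_sdIter : ∀ {m : ℕ} (μ : Fin m → Fin n) {u : Eu n → ℝ}, Sm u → Sm (sdIter μ u)
  | 0, _, _, hu => hu
  | _ + 1, μ, _, hu => sm_sd (sm_sdIter (fun i => μ i.succ) hu) (μ 0)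

lemma hcs_sd {u : Eu n → ℝ} (hc : HasCompactSupport u) (i : Fin n) :
    HasCompactSupport (sd i u) := hc.fderiv_apply (𝕜 := ℝ) _

lemma sd_eq_of_eventuallyEq {u v : Eu n → ℝ} {x : Eu n} (h : u =ᶠ[𝓝 x] v) (i : Fin n) :
    sd i u =ᶠ[𝓝 x] sd i v := by
  filter_upwards [h.fderiv (𝕜 := ℝ)] with y hy
  simp only [sd, hy]

lemma sdIter_eventuallyEq : ∀ {m : ℕ} (μ : Fin m → Fin n) {u v : Eu n → ℝ} {x : Eu n},
    u =ᶠ[𝓝 x] v → sdIter μ u =ᶠ[𝓝 x] sdIter μ v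
  | 0, _, _, _, _, h => h
  | _ + 1, μ, _, _, _, h => sd_eq_of_eventuallyEq (sdIter_eventuallyEq (fun i => μ i.succ) h) (μ 0)

lemma integral_sd_eq_zero {u : Eu n → ℝ} (hu : Sm u) (hc : HasCompactSupport u) (i : Fin n) :
    ∫ x, sd i u x = 0 := by
  have h1 : Integrable (sd i u) := (sm_sd hu i).cont.integrable_of_hasCompactSupport (hcs_sd hc i)
  have h0 : Integrable u := hu.cont.integrable_of_hasCompactSupport hc
  have := integral_mul_fderiv_eq_neg_fderiv_mul_of_integrable (μ := (volume : Measure (Eu n)))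
    (f := fun _ => (1 : ℝ)) (g := u) (v := EuclideanSpace.single i 1)
    (by simp) (by simp only [one_mul]; exact h1) (by simpa using h0)
    (fun x _ => differentiableAt_const _) (fun x _ => hu.diff x)
  simpa [sd] using this

/-- On a regular level set `{ρ = 0}`, the gradient of a function vanishing there is parallel to
`∇ρ`. -/
lemma exists_multiplier {ρ u : Eu n → ℝ} (hρ : Sm ρ) (hu : Sm u)
    (h0 : ∀ y, ρ y = 0 → u y = 0) {x : Eu n} (hx : ρ x = 0) (hg : fderiv ℝ ρ x ≠ 0) :
    ∃ l : ℝ, ∀ i, sd i u x = l * sd i ρ x := by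
  have hext : IsLocalExtrOn u {y | ρ y = ρ x} x := by
    left
    filter_upwards [self_mem_nhdsWithin] with y hy
    rw [h0 x hx, h0 y (by change ρ y = ρ x at hy; rw [hy, hx])]
  have h1 : HasStrictFDerivAt ρ (fderiv ℝ ρ x) x :=
    (hρ.contDiffAt).hasStrictFDerivAt (by simp)
  have h2 : HasStrictFDerivAt u (fderiv ℝ u x) x :=
    (hu.contDiffAt).hasStrictFDerivAt (by simp)
  obtain ⟨a, b, hab, h⟩ := hext.exists_multipliers_of_hasStrictFDerivAt_1d h1 h2
  have hb : b ≠ 0 := by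
    rintro rfl
    have ha : a ≠ 0 := by
      rintro rfl; exact hab rfl
    simp only [zero_smul, add_zero] at h
    exact hg ((smul_eq_zero.1 h).resolve_left ha)
  refine ⟨-a / b, fun i => ?_⟩
  have h3 := congrArg (fun L => L (EuclideanSpace.single i (1 : ℝ))) h
  simp at h3
  simp only [sd]
  field_simp
  linarith

lemma exists_sd_ne {ρ : Eu n → ℝ} {x : Eu n} (hg : fderiv ℝ ρ x ≠ 0) : ∃ i, sd i ρ x ≠ 0 := by
  by_contra! hcon
  apply hg
  ext v
  have : v = ∑ i, v i • EuclideanSpace.single i (1 : ℝ) := by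
    have := (EuclideanSpace.basisFun (Fin n) ℝ).sum_repr v
    simpa using this.symm
  rw [this, map_sum]
  simp only [map_smul]
  simp only [sd] at hcon
  simp [hcon]

lemma gradSq_pos {ρ : Eu n → ℝ} {x : Eu n} (hg : fderiv ℝ ρ x ≠ 0) : 0 < ∑ i, sd i ρ x ^ 2 := by
  obtain ⟨i, hi⟩ := exists_sd_ne hg
  exact Finset.sum_pos' (fun _ _ => sq_nonneg _) ⟨i, Finset.mem_univ _, by positivity⟩

/-! ### The divergence inequality on `{0 ≤ ρ}` -/

/-- A regular level set is Lebesgue-null: along each coordinate line, the zeros of `ρ` at which that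
coordinate derivative is non-zero are isolated. -/
lemma volume_level {ρ : Eu n → ℝ} (hρ : Sm ρ) (hg : ∀ x, ρ x = 0 → fderiv ℝ ρ x ≠ 0) :
    volume {x | ρ x = 0} = 0 := by
  have hcov : {x | ρ x = 0} ⊆ ⋃ i : Fin n, {x | ρ x = 0 ∧ sd i ρ x ≠ 0} := by
    intro x hx
    obtain ⟨i, hi⟩ := exists_sd_ne (hg x hx)
    exact mem_iUnion.2 ⟨i, hx, hi⟩
  refine measure_mono_null hcov (measure_iUnion_null fun i => ?_)
  have hmeas : MeasurableSet {x | ρ x = 0 ∧ sd i ρ x ≠ 0} :=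
    (measurableSet_eq_fun hρ.cont.measurable measurable_const).inter
      (measurableSet_eq_fun (sm_sd hρ i).cont.measurable measurable_const).compl
  let L : ℝ →L[ℝ] Eu n := (ContinuousLinearMap.id ℝ ℝ).smulRight (EuclideanSpace.single i (1 : ℝ))
  have key : ∀ᵐ x ∂(volume : Measure (Eu n)), x ∈ {x | ρ x = 0 ∧ sd i ρ x ≠ 0}ᶜ := by
    refine ae_mem_of_ae_add_linearMap_mem L.toLinearMap volume volume hmeas.compl (fun y => ?_)
    change volume {t : ℝ | ¬ (y + L t ∈ {x | ρ x = 0 ∧ sd i ρ x ≠ 0}ᶜ)} = 0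
    apply measure_null_of_locally_null
    intro t ht
    simp only [mem_compl_iff, not_not, mem_ofPred_eq] at ht
    have hd : HasDerivAt (fun s : ℝ => ρ (y + L s)) (sd i ρ (y + L t)) t := by
      have h1 : HasDerivAt (fun s : ℝ => y + L s) (EuclideanSpace.single i (1 : ℝ)) t := by
        have := (L.hasDerivAt (x := t)).const_add y
        simpa [L] using this
      exact ((hρ.diff _).hasFDerivAt).comp_hasDerivAt t h1
    have he := hd.eventually_ne (c := 0) ht.2
    refine ⟨{t}, ?_, by simp⟩
    rw [mem_nhdsWithin_iff_eventually]
    rw [eventually_nhdsWithin_iff] at he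
    filter_upwards [he] with s hs hs2
    by_contra hne
    simp only [mem_compl_iff, not_not, mem_ofPred_eq] at hs2
    exact hs hne hs2.1
  simpa [ae_iff] using key

lemma ae_nonneg_iff_pos {ρ : Eu n → ℝ} (hρ : Sm ρ) (hg : ∀ x, ρ x = 0 → fderiv ℝ ρ x ≠ 0) :
    ({x | 0 ≤ ρ x} : Set (Eu n)) =ᵐ[volume] {x | 0 < ρ x} := by
  have h := volume_level hρ hg
  have h' : ∀ᵐ x ∂(volume : Measure (Eu n)), ¬ (ρ x = 0) := by simpa [ae_iff] using h
  filter_upwards [h'] with x hx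
  apply propext
  change 0 ≤ ρ x ↔ 0 < ρ x
  exact ⟨fun h => lt_of_le_of_ne h (Ne.symm hx), le_of_lt⟩

lemma measurableSet_ext {ρ : Eu n → ℝ} (hρ : Sm ρ) : MeasurableSet {x | 0 ≤ ρ x} :=
  measurableSet_le measurable_const hρ.cont.measurable

lemma sd_comp {ρ : Eu n → ℝ} (hρ : Sm ρ) {η : ℝ → ℝ} (hη : ContDiff ℝ (⊤ : ℕ∞) η) (i : Fin n)
    (x : Eu n) : sd i (fun y => η (ρ y)) x = deriv η (ρ x) * sd i ρ x := by
  have h1 : HasDerivAt η (deriv η (ρ x)) (ρ x) :=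
    ((hη.differentiable (by simp)) _).hasDerivAt
  have := h1.comp_hasFDerivAt x (hρ.diff x).hasFDerivAt
  have h2 := this.fderiv
  simp only [sd]
  change (fderiv ℝ (η ∘ ρ) x) _ = _
  rw [h2]
  simp

lemma st_deriv_nonneg (y : ℝ) : 0 ≤ deriv smoothTransition y :=
  Real.smoothTransition.monotone.deriv_nonneg

lemma st_contDiff : ContDiff ℝ (⊤ : ℕ∞) smoothTransition := Real.smoothTransition.contDiff

/-- Divergence inequality with a boundary sign. No surface measure is needed: the characteristic
function of `{0 < ρ}` is approximated by smooth functions of `(k + 1) ρ`, whose gradients are nonnegative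
multiples of `∇ρ`; the total mass of these gradients is bounded by the same integration by parts
applied to `χ ∇ρ`. -/
lemma integral_div_nonpos {ρ : Eu n → ℝ} (hρ : Sm ρ) (hg : ∀ x, ρ x = 0 → fderiv ℝ ρ x ≠ 0)
    {V : Fin n → Eu n → ℝ} (hV : ∀ i, Sm (V i)) {K : Set (Eu n)} (hK : IsCompact K)
    (hVK : ∀ i x, x ∉ K → V i x = 0)
    (hb : ∀ x, ρ x = 0 → 0 ≤ ∑ i, V i x * sd i ρ x) :
    ∫ x in {x | 0 ≤ ρ x}, ∑ i, sd i (V i) x ≤ 0 := by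
  classical
  -- integration by parts against `θ k`
  have hVc : ∀ i, HasCompactSupport (V i) := fun i => HasCompactSupport.intro hK (hVK i)
  let θ : ℕ → Eu n → ℝ := fun k x => smoothTransition ((k + 1 : ℝ) * ρ x)
  let θ' : ℕ → Eu n → ℝ := fun k x => deriv smoothTransition ((k + 1 : ℝ) * ρ x) * (k + 1 : ℝ)
  have hθs : ∀ k, Sm (θ k) := fun k => st_contDiff.comp (contDiff_const.mul hρ)
  have hθd : ∀ k i x, sd i (θ k) x = θ' k x * sd i ρ x := by
    intro k i x
    have h1 : Sm (fun y => (k + 1 : ℝ) * ρ y) := contDiff_const.mul hρ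
    have := sd_comp h1 st_contDiff i x
    simp only [θ, θ', this]
    rw [sd_mul contDiff_const hρ, sd_const]
    ring
  have hθ'0 : ∀ k x, 0 ≤ θ' k x := fun k x => mul_nonneg (st_deriv_nonneg _) (by positivity)
  have hθ'z : ∀ (k : ℕ) x, ρ x < 0 ∨ 1 < (k + 1 : ℝ) * ρ x → θ' k x = 0 := by
    intro k x hx
    have hk : (0 : ℝ) < k + 1 := by positivity
    simp only [θ']
    rcases hx with hx | hx
    · have : smoothTransition =ᶠ[𝓝 ((k + 1 : ℝ) * ρ x)] fun _ => 0 := by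
        filter_upwards [Iio_mem_nhds (mul_neg_of_pos_of_neg hk hx)] with y hy
        exact smoothTransition.zero_of_nonpos (le_of_lt hy)
      rw [this.deriv_eq]; simp
    · have : smoothTransition =ᶠ[𝓝 ((k + 1 : ℝ) * ρ x)] fun _ => 1 := by
        filter_upwards [Ioi_mem_nhds hx] with y hy
        exact smoothTransition.one_of_one_le (le_of_lt hy)
      rw [this.deriv_eq]; simp
  have ibp : ∀ (W : Fin n → Eu n → ℝ), (∀ i, Sm (W i)) → (∀ i, HasCompactSupport (W i)) → ∀ k,
      ∫ x, θ k x * ∑ i, sd i (W i) x = - ∫ x, θ' k x * ∑ i, W i x * sd i ρ x := by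
    intro W hW hWc k
    have h0 : ∫ x, ∑ i, sd i (fun y => θ k y * W i y) x = 0 := by
      rw [integral_finsetSum]
      · refine Finset.sum_eq_zero fun i _ => integral_sd_eq_zero ((hθs k).mul (hW i)) ?_ i
        exact (hWc i).mul_left
      · intro i _
        exact (sm_sd ((hθs k).mul (hW i)) i).cont.integrable_of_hasCompactSupport
          (hcs_sd (hWc i).mul_left i)
    have hI1 : Integrable fun x => θ k x * ∑ i, sd i (W i) x := by
      simp only [Finset.mul_sum]
      refine integrable_finsetSum _ fun i _ => ?_
      exact ((hθs k).cont.mul (sm_sd (hW i) i).cont).integrable_of_hasCompactSupport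
        (hcs_sd (hWc i) i).mul_left
    have hθ'c : Continuous (θ' k) := by
      have : Continuous (deriv smoothTransition) := st_contDiff.continuous_deriv (by simp)
      exact (this.comp (continuous_const.mul hρ.cont)).mul continuous_const
    have hI2 : Integrable fun x => θ' k x * ∑ i, W i x * sd i ρ x := by
      simp only [Finset.mul_sum]
      refine integrable_finsetSum _ fun i _ => ?_
      exact (hθ'c.mul ((hW i).cont.mul (sm_sd hρ i).cont)).integrable_of_hasCompactSupport
        ((hWc i).mul_right).mul_left
    have h1 : (fun x => ∑ i, sd i (fun y => θ k y * W i y) x)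
        = fun x => θ k x * ∑ i, sd i (W i) x + θ' k x * ∑ i, W i x * sd i ρ x := by
      funext x
      rw [Finset.mul_sum, Finset.mul_sum, ← Finset.sum_add_distrib]
      refine Finset.sum_congr rfl fun i _ => ?_
      rw [sd_mul (hθs k) (hW i), hθd]; ring
    rw [h1, integral_add hI1 hI2] at h0
    linarith
  -- passage to the limit
  have hlim : ∀ x, ρ x ≠ 0 → Tendsto (fun k => θ k x) atTop
      (𝓝 (indicator {x | 0 ≤ ρ x} (fun _ => (1 : ℝ)) x)) := by
    intro x hx
    rcases lt_or_gt_of_ne hx with h | h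
    · have : ∀ k, θ k x = 0 := fun k => smoothTransition.zero_of_nonpos
        (mul_nonpos_of_nonneg_of_nonpos (by positivity) h.le)
      simp only [this]
      rw [indicator_of_notMem (by simpa using h)]
      exact tendsto_const_nhds
    · rw [indicator_of_mem (show x ∈ {x | 0 ≤ ρ x} from h.le)]
      refine tendsto_const_nhds.congr' ?_
      obtain ⟨k0, hk0⟩ := exists_nat_gt (1 / ρ x)
      filter_upwards [eventually_ge_atTop k0] with k hk
      refine (smoothTransition.one_of_one_le ?_).symm
      have h2 : (k0 : ℝ) ≤ k := by exact_mod_cast hk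
      rw [div_lt_iff₀ h] at hk0
      nlinarith
  have hdivc : Continuous fun x => ∑ i, sd i (V i) x :=
    continuous_finsetSum _ fun i _ => (sm_sd (hV i) i).cont
  have hdivI : Integrable fun x => ∑ i, sd i (V i) x :=
    integrable_finsetSum _ fun i _ =>
      (sm_sd (hV i) i).cont.integrable_of_hasCompactSupport (hcs_sd (hVc i) i)
  have hT : Tendsto (fun k => ∫ x, θ k x * ∑ i, sd i (V i) x) atTop
      (𝓝 (∫ x in {x | 0 ≤ ρ x}, ∑ i, sd i (V i) x)) := by
    rw [← integral_indicator (measurableSet_ext hρ)]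
    refine tendsto_integral_of_dominated_convergence (fun x => |∑ i, sd i (V i) x|) ?_ hdivI.abs
      ?_ ?_
    · intro k
      exact ((hθs k).cont.mul hdivc).aestronglyMeasurable
    · intro k
      refine Eventually.of_forall fun x => ?_
      rw [norm_mul, Real.norm_eq_abs, Real.norm_eq_abs]
      refine mul_le_of_le_one_left (abs_nonneg _) ?_
      rw [abs_of_nonneg (smoothTransition.nonneg _)]
      exact smoothTransition.le_one _
    · have h' : ∀ᵐ x ∂(volume : Measure (Eu n)), ¬ (ρ x = 0) := by
        simpa [ae_iff] using volume_level hρ hg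
      filter_upwards [h'] with x hx
      have := (hlim x hx).mul_const (∑ i, sd i (V i) x)
      convert this using 2
      by_cases hxx : 0 ≤ ρ x <;> simp [indicator, hxx]
  -- a cutoff equal to one on `K`
  obtain ⟨χ, hχs, hχc, hχ1, hχ0⟩ : ∃ χ : Eu n → ℝ, Sm χ ∧ HasCompactSupport χ ∧
      (∀ x ∈ K, χ x = 1) ∧ ∀ x, 0 ≤ χ x := by
    obtain ⟨r, hr⟩ := hK.isBounded.subset_closedBall (0 : Eu n)
    let f : ContDiffBump (0 : Eu n) := ⟨max r 1, max r 1 + 1, by positivity, by linarith⟩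
    refine ⟨f, f.contDiff, f.hasCompactSupport, fun x hx => ?_, fun x => f.nonneg⟩
    exact f.one_of_mem_closedBall (Metric.closedBall_subset_closedBall (le_max_left _ _) (hr hx))
  let W : Fin n → Eu n → ℝ := fun i y => χ y * sd i ρ y
  have hW : ∀ i, Sm (W i) := fun i => hχs.mul (sm_sd hρ i)
  have hWc : ∀ i, HasCompactSupport (W i) := fun i => hχc.mul_right
  have hWI : Integrable fun x => ∑ i, sd i (W i) x :=
    integrable_finsetSum _ fun i _ =>
      (sm_sd (hW i) i).cont.integrable_of_hasCompactSupport (hcs_sd (hWc i) i)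
  let C0 : ℝ := ∫ x, |∑ i, sd i (W i) x|
  have hmass : ∀ k, ∫ x, θ' k x * ∑ i, W i x * sd i ρ x ≤ C0 := by
    intro k
    have h := ibp W hW hWc k
    have h2 : - ∫ x, θ k x * ∑ i, sd i (W i) x ≤ C0 := by
      rw [← integral_neg]
      refine integral_mono ?_ hWI.abs fun x => ?_
      · simp only [Finset.mul_sum]
        refine (integrable_finsetSum _ fun i _ => ?_).neg
        exact ((hθs k).cont.mul (sm_sd (hW i) i).cont).integrable_of_hasCompactSupport
          (hcs_sd (hWc i) i).mul_left
      · have h1 : |θ k x| ≤ 1 := by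
          rw [abs_of_nonneg (smoothTransition.nonneg _)]
          exact smoothTransition.le_one _
        calc -(θ k x * ∑ i, sd i (W i) x) ≤ |θ k x * ∑ i, sd i (W i) x| := neg_le_abs _
          _ = |θ k x| * |∑ i, sd i (W i) x| := abs_mul _ _
          _ ≤ |∑ i, sd i (W i) x| := mul_le_of_le_one_left (abs_nonneg _) h1
    linarith
  have hC0 : 0 ≤ C0 := integral_nonneg fun x => abs_nonneg _
  have hθ'c : ∀ k, Continuous (θ' k) := fun k => by
    have : Continuous (deriv smoothTransition) := st_contDiff.continuous_deriv (by simp)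
    exact (this.comp (continuous_const.mul hρ.cont)).mul continuous_const
  have hI : ∀ (U : Fin n → Eu n → ℝ), (∀ i, Sm (U i)) → (∀ i, HasCompactSupport (U i)) → ∀ k,
      Integrable fun x => θ' k x * ∑ i, U i x * sd i ρ x := by
    intro U hU hUc k
    simp only [Finset.mul_sum]
    refine integrable_finsetSum _ fun i _ => ?_
    exact ((hθ'c k).mul ((hU i).cont.mul (sm_sd hρ i).cont)).integrable_of_hasCompactSupport
      ((hUc i).mul_right).mul_left
  have hstep : ∀ κ : ℝ, 0 < κ → ∫ x in {x | 0 ≤ ρ x}, ∑ i, sd i (V i) x ≤ κ * C0 := by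
    intro κ hκ
    -- points of `K` at which `V · ∇ρ` is too negative stay away from the boundary
    let bad : Set (Eu n) := K ∩ {x | ∑ i, V i x * sd i ρ x + κ * ∑ i, sd i ρ x ^ 2 ≤ 0}
    have hbad : IsCompact bad := by
      refine hK.inter_right (isClosed_le ?_ continuous_const)
      refine (continuous_finsetSum _ fun i _ => (hV i).cont.mul (sm_sd hρ i).cont).add
        (continuous_const.mul (continuous_finsetSum _ fun i _ => (sm_sd hρ i).cont.pow 2))
    obtain ⟨s0, hs0, hbs⟩ : ∃ s0 > 0, ∀ x ∈ bad, s0 ≤ |ρ x| := by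
      rcases bad.eq_empty_or_nonempty with he | hne
      · exact ⟨1, one_pos, by simp [he]⟩
      · obtain ⟨x0, hx0, hmin⟩ := hbad.exists_isMinOn hne hρ.cont.abs.continuousOn
        refine ⟨|ρ x0|, abs_pos.2 fun h0 => ?_, fun x hx => hmin hx⟩
        have h1 := hb x0 h0
        have h2 := mul_pos hκ (gradSq_pos (hg x0 h0))
        have h3 := hx0.2
        change ∑ i, V i x0 * sd i ρ x0 + κ * ∑ i, sd i ρ x0 ^ 2 ≤ 0 at h3
        linarith
    refine le_of_tendsto hT ?_
    obtain ⟨k0, hk0⟩ := exists_nat_gt (1 / s0)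
    filter_upwards [eventually_ge_atTop k0] with k hk
    have h2 : (k0 : ℝ) ≤ k := by exact_mod_cast hk
    rw [div_lt_iff₀ hs0] at hk0
    rw [ibp V hV hVc k, ← integral_neg]
    calc ∫ x, -(θ' k x * ∑ i, V i x * sd i ρ x)
        ≤ ∫ x, κ * (θ' k x * ∑ i, W i x * sd i ρ x) := by
          refine integral_mono (hI V hV hVc k).neg ((hI W hW hWc k).const_mul κ) fun x => ?_
          change -(θ' k x * ∑ i, V i x * sd i ρ x) ≤ κ * (θ' k x * ∑ i, W i x * sd i ρ x)
          have hWx : ∑ i, W i x * sd i ρ x = χ x * ∑ i, sd i ρ x ^ 2 := by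
            rw [Finset.mul_sum]; exact Finset.sum_congr rfl fun i _ => by simp only [W]; ring
          rw [hWx]
          have hS : 0 ≤ ∑ i, sd i ρ x ^ 2 := Finset.sum_nonneg fun _ _ => sq_nonneg _
          by_cases hxK : x ∈ K
          · rw [hχ1 x hxK]
            by_cases hz : ρ x < 0 ∨ 1 < (k + 1 : ℝ) * ρ x
            · rw [hθ'z k x hz]; simp
            · push Not at hz
              have hxb : x ∉ bad := by
                intro hxb
                have := hbs x hxb
                rw [abs_of_nonneg hz.1] at this
                nlinarith [hz.1, hz.2]
              have h4 : 0 < ∑ i, V i x * sd i ρ x + κ * ∑ i, sd i ρ x ^ 2 := by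
                by_contra hcon
                exact hxb ⟨hxK, not_lt.1 hcon⟩
              nlinarith [hθ'0 k x]
          · have : ∑ i, V i x * sd i ρ x = 0 :=
              Finset.sum_eq_zero fun i _ => by rw [hVK i x hxK]; ring
            rw [this, mul_zero, neg_zero]
            exact mul_nonneg hκ.le (mul_nonneg (hθ'0 k x) (mul_nonneg (hχ0 x) hS))
      _ = κ * ∫ x, θ' k x * ∑ i, W i x * sd i ρ x := integral_const_mul _ _
      _ ≤ κ * C0 := mul_le_mul_of_nonneg_left (hmass k) hκ.le
  refine le_of_forall_pos_le_add fun κ hκ => ?_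
  have := hstep (κ / (C0 + 1)) (by positivity)
  refine this.trans ?_
  rw [zero_add, div_mul_eq_mul_div, div_le_iff₀ (by positivity)]
  nlinarith

/-- Divergence theorem for fields tangential to the boundary. -/
lemma integral_div_eq_zero {ρ : Eu n → ℝ} (hρ : Sm ρ) (hg : ∀ x, ρ x = 0 → fderiv ℝ ρ x ≠ 0)
    {V : Fin n → Eu n → ℝ} (hV : ∀ i, Sm (V i)) {K : Set (Eu n)} (hK : IsCompact K)
    (hVK : ∀ i x, x ∉ K → V i x = 0)
    (hb : ∀ x, ρ x = 0 → ∑ i, V i x * sd i ρ x = 0) :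
    ∫ x in {x | 0 ≤ ρ x}, ∑ i, sd i (V i) x = 0 := by
  refine le_antisymm (integral_div_nonpos hρ hg hV hK hVK fun x hx => (hb x hx).ge) ?_
  have := integral_div_nonpos hρ hg (V := fun i x => - V i x) (fun i => (hV i).neg) hK
    (fun i x hx => by rw [hVK i x hx, neg_zero])
    (fun x hx => by simp [hb x hx])
  simp only [sd_neg, Finset.sum_neg_distrib] at this
  rw [integral_neg] at this
  linarith

lemma ofReal_integral_le {α : Type*} [MeasurableSpace α] {μ : Measure α} {f : α → ℝ}
    (hf : Integrable f μ) : ENNReal.ofReal (∫ x, f x ∂μ) ≤ ∫⁻ x, ENNReal.ofReal (f x) ∂μ := by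
  rw [integral_eq_lintegral_pos_part_sub_lintegral_neg_part hf]
  refine (ENNReal.ofReal_le_ofReal (sub_le_self _ ENNReal.toReal_nonneg)).trans ?_
  exact ENNReal.ofReal_toReal_le

/-- A pointwise inequality `q ≤ div V + r`, with `V` tangential to the boundary, integrates to
`∫ q ≤ ∫ r`. -/
lemma lintegral_le_of_div {ρ : Eu n → ℝ} (hρ : Sm ρ) (hg : ∀ x, ρ x = 0 → fderiv ℝ ρ x ≠ 0)
    {V : Fin n → Eu n → ℝ} (hV : ∀ i, Sm (V i)) {K : Set (Eu n)} (hK : IsCompact K)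
    (hVK : ∀ i x, x ∉ K → V i x = 0)
    (hb : ∀ x, ρ x = 0 → ∑ i, V i x * sd i ρ x = 0)
    {q r : Eu n → ℝ} (hq : Continuous q) (hq0 : ∀ x, 0 ≤ q x) (hqK : ∀ x, x ∉ K → q x = 0)
    (hle : ∀ x, 0 ≤ ρ x → q x ≤ ∑ i, sd i (V i) x + r x) :
    ∫⁻ x in {x | 0 ≤ ρ x}, ENNReal.ofReal (q x) ≤ ∫⁻ x in {x | 0 ≤ ρ x}, ENNReal.ofReal (r x) := by
  have hqI : Integrable q := hq.integrable_of_hasCompactSupport (HasCompactSupport.intro hK hqK)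
  have hVc : ∀ i, HasCompactSupport (V i) := fun i => HasCompactSupport.intro hK (hVK i)
  have hdivI : Integrable fun x => ∑ i, sd i (V i) x :=
    integrable_finsetSum _ fun i _ =>
      (sm_sd (hV i) i).cont.integrable_of_hasCompactSupport (hcs_sd (hVc i) i)
  rw [← ofReal_integral_eq_lintegral_ofReal hqI.integrableOn (Eventually.of_forall hq0)]
  have h1 : ∫ x in {x | 0 ≤ ρ x}, q x
      = ∫ x in {x | 0 ≤ ρ x}, (q x - ∑ i, sd i (V i) x) := by
    rw [integral_sub hqI.integrableOn hdivI.integrableOn,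
      integral_div_eq_zero hρ hg hV hK hVK hb, sub_zero]
  rw [h1]
  refine (ofReal_integral_le (hqI.integrableOn.sub hdivI.integrableOn)).trans ?_
  refine setLIntegral_mono_ae' (measurableSet_ext hρ) (Eventually.of_forall fun x hx => ?_)
  have h2 := hle x hx
  refine ENNReal.ofReal_le_ofReal ?_
  simp only [Pi.sub_apply]
  linarith

end

/-! ### Weights and cutoffs -/

/-- The weight `⟨x⟩^{-p}`. -/
def jw {n : ℕ} (p : ℝ) (x : Eu n) : ℝ := jap x ^ (-p)

section
variable {n : ℕ}

lemma one_le_jap (x : Eu n) : 1 ≤ jap x := by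
  unfold jap
  rw [Real.one_le_sqrt]
  nlinarith [sq_nonneg ‖x‖]

lemma jap_pos (x : Eu n) : 0 < jap x := lt_of_lt_of_le one_pos (one_le_jap x)

lemma norm_le_jap (x : Eu n) : ‖x‖ ≤ jap x := by
  unfold jap
  refine Real.le_sqrt_of_sq_le ?_
  linarith

lemma jap_sq (x : Eu n) : jap x ^ 2 = 1 + ‖x‖ ^ 2 := by
  unfold jap
  rw [Real.sq_sqrt (by positivity)]

lemma abs_coord_le_norm (x : Eu n) (i : Fin n) : |x i| ≤ ‖x‖ := by
  have := PiLp.norm_apply_le x i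
  simpa using this

lemma abs_coord_le_jap (x : Eu n) (i : Fin n) : |x i| ≤ jap x :=
  (abs_coord_le_norm x i).trans (norm_le_jap x)

lemma sm_jap : Sm (jap : Eu n → ℝ) := by
  unfold jap
  refine ContDiff.sqrt (contDiff_const.add (contDiff_norm_sq ℝ)) fun x => ?_
  positivity

lemma sm_coord (i : Fin n) : Sm (fun x : Eu n => x i) :=
  (EuclideanSpace.proj i : Eu n →L[ℝ] ℝ).contDiff

lemma sd_coord (i j : Fin n) (x : Eu n) : sd i (fun y : Eu n => y j) x = if i = j then 1 else 0 := by
  have h : HasFDerivAt (fun y : Eu n => y j) (EuclideanSpace.proj j : Eu n →L[ℝ] ℝ) x :=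
    (EuclideanSpace.proj j : Eu n →L[ℝ] ℝ).hasFDerivAt
  simp only [sd, h.fderiv]
  simp [eq_comm]

lemma sd_normsq (i : Fin n) (x : Eu n) : sd i (fun y : Eu n => 1 + ‖y‖ ^ 2) x = 2 * x i := by
  have h : HasFDerivAt (fun y : Eu n => 1 + ‖y‖ ^ 2) (2 • innerSL ℝ x) x :=
    (hasStrictFDerivAt_norm_sq x).hasFDerivAt.const_add 1
  simp only [sd, h.fderiv]
  simp [EuclideanSpace.inner_single_right]

lemma jw_pos (p : ℝ) (x : Eu n) : 0 < jw p x := Real.rpow_pos_of_pos (jap_pos x) _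

lemma sm_jw (p : ℝ) : Sm (jw p : Eu n → ℝ) := by
  unfold jw
  exact ContDiff.rpow_const_of_ne sm_jap fun x => (jap_pos x).ne'

lemma jw_mul (p q : ℝ) (x : Eu n) : jw p x * jw q x = jw (p + q) x := by
  unfold jw
  rw [← Real.rpow_add (jap_pos x)]
  congr 1; ring

lemma jw_zero (x : Eu n) : jw 0 x = 1 := by simp [jw]

lemma jw_anti {p q : ℝ} (h : p ≤ q) (x : Eu n) : jw q x ≤ jw p x :=
  Real.rpow_le_rpow_of_exponent_le (one_le_jap x) (by linarith)

lemma jw_le_one {p : ℝ} (h : 0 ≤ p) (x : Eu n) : jw p x ≤ 1 := by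
  have := jw_anti h x
  rwa [jw_zero] at this

lemma jap_mul_jw (p : ℝ) (x : Eu n) : jap x * jw (p + 1) x = jw p x := by
  unfold jw
  nth_rw 1 [← Real.rpow_one (jap x)]
  rw [← Real.rpow_add (jap_pos x)]
  congr 1; ring

lemma abs_coord_mul_jw (p : ℝ) (x : Eu n) (i : Fin n) : |x i| * jw (p + 1) x ≤ jw p x := by
  rw [← jap_mul_jw p x]
  exact mul_le_mul_of_nonneg_right (abs_coord_le_jap x i) (jw_pos _ _).le

lemma normsq_mul_jw (p : ℝ) (x : Eu n) : ‖x‖ ^ 2 * jw (p + 2) x = jw p x - jw (p + 2) x := by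
  have h1 : jw p x = jap x ^ 2 * jw (p + 2) x := by
    rw [sq, mul_assoc]
    have := jap_mul_jw (p + 1) x
    rw [show p + 1 + 1 = p + 2 by ring] at this
    rw [this, jap_mul_jw]
  rw [h1, jap_sq]; ring

lemma jw_eq_normsq (p : ℝ) (x : Eu n) : jw p x = (1 + ‖x‖ ^ 2) ^ (-p / 2) := by
  unfold jw jap
  rw [Real.sqrt_eq_rpow, ← Real.rpow_mul (by positivity)]
  congr 1; ring

lemma sd_jw (p : ℝ) (i : Fin n) (x : Eu n) : sd i (jw p) x = - p * x i * jw (p + 2) x := by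
  have h : HasFDerivAt (fun y : Eu n => 1 + ‖y‖ ^ 2) (2 • innerSL ℝ x) x :=
    (hasStrictFDerivAt_norm_sq x).hasFDerivAt.const_add 1
  have h2 := h.rpow_const (p := -p / 2) (Or.inl (by positivity))
  have he : (jw p : Eu n → ℝ) = fun y => (1 + ‖y‖ ^ 2) ^ (-p / 2) := funext (jw_eq_normsq p)
  simp only [sd, he, h2.fderiv]
  rw [jw_eq_normsq]
  rw [show -(p + 2) / 2 = -p / 2 - 1 by ring]
  simp [EuclideanSpace.inner_single_right]
  ring

lemma sd_jap (i : Fin n) (x : Eu n) : sd i jap x = x i * jw 1 x := by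
  have h : (jap : Eu n → ℝ) = jw (-1) := by
    funext y; simp [jw]
  rw [h, sd_jw]
  rw [show (-1 : ℝ) + 2 = 1 by norm_num]; ring

lemma abs_sd_jap (i : Fin n) (x : Eu n) : |sd i jap x| ≤ 1 := by
  rw [sd_jap, abs_mul, abs_of_pos (jw_pos _ _)]
  have := abs_coord_mul_jw 0 x i
  rwa [zero_add, jw_zero] at this

lemma exists_st_bound : ∃ B : ℝ, 0 < B ∧ ∀ y, |deriv smoothTransition y| ≤ B := by
  have hc : Continuous (deriv smoothTransition) := st_contDiff.continuous_deriv (by simp)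
  obtain ⟨B, hB⟩ := (isCompact_Icc (a := (0 : ℝ)) (b := 1)).exists_bound_of_continuousOn
    hc.continuousOn
  refine ⟨max B 1, by positivity, fun y => ?_⟩
  by_cases hy : y ∈ Icc (0 : ℝ) 1
  · exact (hB y hy).trans (le_max_left _ _)
  · have : deriv smoothTransition y = 0 := by
      rw [mem_Icc, not_and_or, not_le, not_le] at hy
      rcases hy with h | h
      · have : smoothTransition =ᶠ[𝓝 y] fun _ => 0 := by
          filter_upwards [Iio_mem_nhds h] with z hz
          exact smoothTransition.zero_of_nonpos (le_of_lt hz)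
        rw [this.deriv_eq]; simp
      · have : smoothTransition =ᶠ[𝓝 y] fun _ => 1 := by
          filter_upwards [Ioi_mem_nhds h] with z hz
          exact smoothTransition.one_of_one_le (le_of_lt hz)
        rw [this.deriv_eq]; simp
    rw [this, abs_zero]
    positivity

/-- A smooth radial cutoff, equal to one where `⟨x⟩ ≤ A` and to zero where `⟨x⟩ ≥ 2A`. -/
def cut {n : ℕ} (A : ℝ) (x : Eu n) : ℝ := smoothTransition (2 - jap x / A)

lemma sm_cut (A : ℝ) : Sm (cut A : Eu n → ℝ) := by
  unfold cut
  exact st_contDiff.comp (contDiff_const.sub (sm_jap.div_const A))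

lemma cut_nonneg (A : ℝ) (x : Eu n) : 0 ≤ cut A x := smoothTransition.nonneg _
lemma cut_le_one (A : ℝ) (x : Eu n) : cut A x ≤ 1 := smoothTransition.le_one _

/-- The compact sets `{⟨x⟩ ≤ A}` exhausting `ℝⁿ`. -/
def JB (n : ℕ) (A : ℝ) : Set (Eu n) := {x | jap x ≤ A}

lemma isCompact_JB (A : ℝ) : IsCompact (JB n A) := by
  refine (isCompact_closedBall (0 : Eu n) A).of_isClosed_subset
    (isClosed_le sm_jap.cont continuous_const) fun x hx => ?_
  rw [mem_closedBall_zero_iff]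
  exact (norm_le_jap x).trans hx

lemma cut_eq_zero {A : ℝ} (hA : 0 < A) {x : Eu n} (hx : x ∉ JB n (2 * A)) : cut A x = 0 := by
  refine smoothTransition.zero_of_nonpos ?_
  have h : 2 * A < jap x := not_le.1 hx
  rw [sub_nonpos, le_div_iff₀ hA]
  exact h.le

lemma cut_eq_one {A : ℝ} (hA : 0 < A) {x : Eu n} (hx : jap x ≤ A) : cut A x = 1 := by
  refine smoothTransition.one_of_one_le ?_
  have : jap x / A ≤ 1 := (div_le_one hA).2 hx
  linarith

lemma tendsto_cut (x : Eu n) : Tendsto (fun k : ℕ => cut ((k : ℝ) + 1) x) atTop (𝓝 1) := by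
  refine tendsto_const_nhds.congr' ?_
  obtain ⟨k0, hk0⟩ := exists_nat_gt (jap x)
  filter_upwards [eventually_ge_atTop k0] with k hk
  have : (k0 : ℝ) ≤ k := by exact_mod_cast hk
  exact (cut_eq_one (by positivity) (by linarith)).symm

lemma abs_sd_cut {B : ℝ} (hB : ∀ y, |deriv smoothTransition y| ≤ B) {A : ℝ} (hA : 0 < A)
    (i : Fin n) (x : Eu n) : |sd i (cut A) x| ≤ B / A := by
  have h1 : Sm (fun y : Eu n => 2 - jap y / A) := contDiff_const.sub (sm_jap.div_const A)
  have h := sd_comp h1 st_contDiff i x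
  have h2 : sd i (fun y : Eu n => 2 - jap y / A) x = - (A⁻¹ * sd i jap x) := by
    simp only [div_eq_inv_mul]
    rw [sd_sub contDiff_const (contDiff_const.mul sm_jap), sd_const,
      sd_mul contDiff_const sm_jap, sd_const]
    ring
  change |sd i (fun y : Eu n => smoothTransition (2 - jap y / A)) x| ≤ _
  rw [h, h2, abs_mul, abs_neg, abs_mul, abs_of_pos (inv_pos.2 hA), div_eq_mul_inv]
  have hB0 : 0 ≤ B := (abs_nonneg _).trans (hB 0)
  refine mul_le_mul (hB _) ?_ (by positivity) hB0
  exact mul_le_of_le_one_right (by positivity) (abs_sd_jap i x)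

/-- Fatou's lemma along the cutoffs `cut (k+1)`. -/
lemma lintegral_le_of_cut {S : Set (Eu n)} {f : Eu n → ℝ} (hf : Continuous f) {R : ℝ≥0∞}
    (h : ∀ k : ℕ, ∫⁻ x in S, ENNReal.ofReal (cut ((k : ℝ) + 1) x ^ 2 * f x) ≤ R) :
    ∫⁻ x in S, ENNReal.ofReal (f x) ≤ R := by
  have h1 : ∀ x, Tendsto (fun k : ℕ => ENNReal.ofReal (cut ((k : ℝ) + 1) x ^ 2 * f x)) atTop
      (𝓝 (ENNReal.ofReal (f x))) := by
    intro x
    have := ((tendsto_cut x).pow 2).mul_const (f x)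
    rw [one_pow, one_mul] at this
    exact (ENNReal.continuous_ofReal.tendsto _).comp this
  calc ∫⁻ x in S, ENNReal.ofReal (f x)
      = ∫⁻ x in S, liminf (fun k : ℕ => ENNReal.ofReal (cut ((k : ℝ) + 1) x ^ 2 * f x)) atTop := by
        refine lintegral_congr fun x => (h1 x).liminf_eq.symm
    _ ≤ liminf (fun k : ℕ => ∫⁻ x in S, ENNReal.ofReal (cut ((k : ℝ) + 1) x ^ 2 * f x)) atTop := by
        refine lintegral_liminf_le fun k => ?_
        exact (((sm_cut _).cont.pow 2).mul hf).measurable.ennreal_ofReal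
    _ ≤ R := by
        refine liminf_le_of_le (by isBoundedDefault) fun b hb => ?_
        obtain ⟨k, hk⟩ := hb.exists
        exact hk.trans (h k)
end

/-! ### Jets and bounded coefficients -/

section
variable {n : ℕ}

/-- The sum of the squares of all spatial derivatives of order at most `k`. -/
def J {n : ℕ} : ℕ → (Eu n → ℝ) → Eu n → ℝ
  | 0, v, x => v x ^ 2
  | k + 1, v, x => v x ^ 2 + ∑ i, J k (sd i v) x

lemma J_nonneg : ∀ (k : ℕ) (v : Eu n → ℝ) (x : Eu n), 0 ≤ J k v x
  | 0, _, _ => sq_nonneg _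
  | k + 1, v, x => add_nonneg (sq_nonneg _) (Finset.sum_nonneg fun i _ => J_nonneg k (sd i v) x)

lemma J_cont : ∀ (k : ℕ) {v : Eu n → ℝ}, Sm v → Continuous (J k v)
  | 0, _, hv => hv.cont.pow 2
  | k + 1, _, hv => (hv.cont.pow 2).add
      (continuous_finsetSum _ fun i _ => J_cont k (sm_sd hv i))

lemma sq_le_J (k : ℕ) (v : Eu n → ℝ) (x : Eu n) : v x ^ 2 ≤ J k v x := by
  cases k with
  | zero => exact le_rfl
  | succ k => exact le_add_of_nonneg_right (Finset.sum_nonneg fun i _ => J_nonneg k (sd i v) x)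

lemma J_sd_le (k : ℕ) (v : Eu n → ℝ) (i : Fin n) (x : Eu n) : J k (sd i v) x ≤ J (k + 1) v x := by
  have h := Finset.single_le_sum (f := fun i => J k (sd i v) x)
    (fun i _ => J_nonneg k (sd i v) x) (Finset.mem_univ i)
  have h2 : J (k + 1) v x = v x ^ 2 + ∑ i, J k (sd i v) x := rfl
  have h3 := sq_nonneg (v x)
  linarith

lemma J_mono_succ : ∀ (k : ℕ) (v : Eu n → ℝ) (x : Eu n), J k v x ≤ J (k + 1) v x
  | 0, v, x => sq_le_J 1 v x
  | k + 1, v, x => by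
      change v x ^ 2 + ∑ i, J k (sd i v) x ≤ v x ^ 2 + ∑ i, J (k + 1) (sd i v) x
      gcongr with i _
      exact J_mono_succ k (sd i v) x

lemma J_sum {ι : Type*} [Fintype ι] : ∀ (k : ℕ) (v : ι → Eu n → ℝ), (∀ s, Sm (v s)) → ∀ x,
    J k (fun y => ∑ s, v s y) x ≤ (Fintype.card ι : ℝ) * ∑ s, J k (v s) x
  | 0, v, hv, x => by
      have := sq_sum_le_card_mul_sum_sq (s := Finset.univ) (f := fun s => v s x)
      simpa [J] using this
  | k + 1, v, hv, x => by
      have h0 := sq_sum_le_card_mul_sum_sq (s := Finset.univ) (f := fun s => v s x)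
      have h1 : ∀ i, J k (sd i (fun y => ∑ s, v s y)) x
          ≤ (Fintype.card ι : ℝ) * ∑ s, J k (sd i (v s)) x := fun i => by
        have he : sd i (fun y => ∑ s, v s y) = fun y => ∑ s, sd i (v s) y :=
          funext fun y => sd_sum _ hv i y
        rw [he]
        exact J_sum k _ (fun s => sm_sd (hv s) i) x
      change (∑ s, v s x) ^ 2 + ∑ i, J k (sd i (fun y => ∑ s, v s y)) x
        ≤ (Fintype.card ι : ℝ) * ∑ s, (v s x ^ 2 + ∑ i, J k (sd i (v s)) x)
      have h2 := Finset.sum_le_sum fun i (_ : i ∈ Finset.univ) => h1 i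
      rw [← Finset.mul_sum, Finset.sum_comm] at h2
      rw [Finset.sum_add_distrib, mul_add]
      rw [Finset.card_univ] at h0
      exact add_le_add h0 h2

lemma J_add (k : ℕ) {v w : Eu n → ℝ} (hv : Sm v) (hw : Sm w) (x : Eu n) :
    J k (fun y => v y + w y) x ≤ 2 * (J k v x + J k w x) := by
  have h := J_sum (ι := Bool) k (fun b => cond b v w) (by intro b; cases b <;> assumption) x
  simpa using h

lemma J_neg : ∀ (k : ℕ) (v : Eu n → ℝ) (x : Eu n), J k (fun y => - v y) x = J k v x
  | 0, v, x => by simp [J]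
  | k + 1, v, x => by
      have : ∀ i, sd i (fun y => - v y) = fun y => - sd i v y := fun i => funext fun y => sd_neg i y
      simp only [J, this, J_neg k]
      ring

lemma J_sub (k : ℕ) {v w : Eu n → ℝ} (hv : Sm v) (hw : Sm w) (x : Eu n) :
    J k (fun y => v y - w y) x ≤ 2 * (J k v x + J k w x) := by
  have hw' : Sm fun y => - w y := contDiff_neg.comp hw
  have h := J_add k hv hw' x
  rw [J_neg] at h
  simpa [sub_eq_add_neg] using h

/-- Smooth functions all of whose derivatives are bounded. -/
def BS (c : Eu n → ℝ) : Prop := Sm c ∧ ∀ k, ∃ C : ℝ, ∀ x, J k c x ≤ C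

lemma BS.sm {c : Eu n → ℝ} (h : BS c) : Sm c := h.1

lemma BS.sd {c : Eu n → ℝ} (h : BS c) (i : Fin n) : BS (sd i c) :=
  ⟨sm_sd h.1 i, fun k => (h.2 (k + 1)).imp fun _ hC x => (J_sd_le k c i x).trans (hC x)⟩

lemma BS.bound {c : Eu n → ℝ} (h : BS c) : ∃ C : ℝ, 0 ≤ C ∧ ∀ x, |c x| ≤ C := by
  obtain ⟨C, hC⟩ := h.2 0
  refine ⟨√C, Real.sqrt_nonneg _, fun x => Real.abs_le_sqrt (hC x)⟩

lemma J_mul : ∀ (k : ℕ) {c : Eu n → ℝ}, BS c → ∃ C : ℝ, 0 ≤ C ∧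
    ∀ v : Eu n → ℝ, Sm v → ∀ x, J k (fun y => c y * v y) x ≤ C * J k v x
  | 0, c, hc => by
      obtain ⟨C, hC⟩ := hc.2 0
      refine ⟨C, (J_nonneg 0 c 0).trans (hC 0), fun v _ x => ?_⟩
      simp only [J, mul_pow]
      exact mul_le_mul_of_nonneg_right (hC x) (sq_nonneg _)
  | k + 1, c, hc => by
      obtain ⟨C0, hC0⟩ := hc.2 0
      have hC0' : 0 ≤ C0 := (J_nonneg 0 c 0).trans (hC0 0)
      obtain ⟨C1, h1, hC1⟩ := J_mul k hc
      choose C2 h2 hC2 using fun i => J_mul k (hc.sd i)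
      refine ⟨C0 + 2 * C1 + ∑ i, 2 * C2 i, ?_, fun v hv x => ?_⟩
      · have := Finset.sum_nonneg fun i (_ : i ∈ Finset.univ) => mul_nonneg zero_le_two (h2 i)
        positivity
      have hi : ∀ i, J k (sd i (fun y => c y * v y)) x
          ≤ 2 * C1 * J k (sd i v) x + 2 * C2 i * J (k + 1) v x := fun i => by
        have he : sd i (fun y => c y * v y) = fun y => c y * sd i v y + sd i c y * v y :=
          funext fun y => sd_mul hc.1 hv i y
        rw [he]
        have a := J_add k (hc.1.mul (sm_sd hv i)) ((sm_sd hc.1 i).mul hv) x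
        have b := hC1 _ (sm_sd hv i) x
        have d := hC2 i v hv x
        have e := mul_le_mul_of_nonneg_left (J_mono_succ k v x) (h2 i)
        linarith
      have h3 := Finset.sum_le_sum fun i (_ : i ∈ Finset.univ) => hi i
      rw [Finset.sum_add_distrib, ← Finset.mul_sum, ← Finset.sum_mul] at h3
      have h4 : J (k + 1) (fun y => c y * v y) x
        = (c x * v x) ^ 2 + ∑ i, J k (sd i (fun y => c y * v y)) x := rfl
      have h5 : J (k + 1) v x = v x ^ 2 + ∑ i, J k (sd i v) x := rfl
      have h6 : (c x * v x) ^ 2 ≤ C0 * v x ^ 2 := by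
        rw [mul_pow]; exact mul_le_mul_of_nonneg_right (hC0 x) (sq_nonneg _)
      have h7 : 0 ≤ ∑ i, J k (sd i v) x := Finset.sum_nonneg fun i _ => J_nonneg _ _ _
      rw [h4]
      rw [add_mul, add_mul]
      nlinarith [mul_nonneg hC0' h7, mul_nonneg h1 (sq_nonneg (v x))]

lemma BS.mul {c d : Eu n → ℝ} (hc : BS c) (hd : BS d) : BS fun y => c y * d y := by
  refine ⟨hc.1.mul hd.1, fun k => ?_⟩
  obtain ⟨C, h0, hC⟩ := J_mul k hc
  obtain ⟨D, hD⟩ := hd.2 k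
  exact ⟨C * D, fun x => (hC d hd.1 x).trans (mul_le_mul_of_nonneg_left (hD x) h0)⟩

lemma BS.sub {c d : Eu n → ℝ} (hc : BS c) (hd : BS d) : BS fun y => c y - d y := by
  refine ⟨hc.1.sub hd.1, fun k => ?_⟩
  obtain ⟨C, hC⟩ := hc.2 k
  obtain ⟨D, hD⟩ := hd.2 k
  exact ⟨2 * (C + D), fun x => (J_sub k hc.1 hd.1 x).trans (by linarith [hC x, hD x])⟩

lemma BS.sum {ι : Type*} [Fintype ι] {c : ι → Eu n → ℝ} (hc : ∀ s, BS (c s)) :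
    BS fun y => ∑ s, c s y := by
  refine ⟨ContDiff.sum fun s _ => (hc s).1, fun k => ?_⟩
  choose C hC using fun s => (hc s).2 k
  refine ⟨(Fintype.card ι : ℝ) * ∑ s, C s, fun x => (J_sum k c (fun s => (hc s).1) x).trans ?_⟩
  gcongr with s _
  exact hC s x

lemma J_const (a : ℝ) : ∀ (k : ℕ) (x : Eu n), J k (fun _ => a) x = a ^ 2 ∧ J k (fun _ : Eu n => (0 : ℝ)) x = 0
  | 0, x => by simp [J]
  | k + 1, x => by
      have : ∀ (b : ℝ) (i : Fin n), sd i (fun _ : Eu n => b) = fun _ => 0 :=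
        fun b i => funext fun y => sd_const b i y
      simp [J, this, (J_const a k x).2]

lemma BS.const (a : ℝ) : BS (fun _ : Eu n => a) :=
  ⟨contDiff_const, fun k => ⟨a ^ 2, fun x => (J_const a k x).1.le⟩⟩

lemma J_eventuallyEq : ∀ (k : ℕ) {u v : Eu n → ℝ} {x : Eu n}, u =ᶠ[𝓝 x] v → J k u x = J k v x
  | 0, u, v, x, h => by simp only [J, h.eq_of_nhds]
  | k + 1, u, v, x, h => by
      have := fun i => J_eventuallyEq k (sd_eq_of_eventuallyEq h i)
      simp only [J, h.eq_of_nhds, this]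

lemma BS.of_compact {c : Eu n → ℝ} (hc : Sm c) {K : Set (Eu n)} (hK : IsCompact K)
    (h0 : ∀ x, x ∉ K → c x = 0) : BS c := by
  refine ⟨hc, fun k => ?_⟩
  obtain ⟨C, hC⟩ := hK.exists_bound_of_continuousOn (J_cont k hc).continuousOn
  refine ⟨max C 0, fun x => ?_⟩
  by_cases hx : x ∈ K
  · exact (le_abs_self _).trans ((hC x hx).trans (le_max_left _ _))
  · have : c =ᶠ[𝓝 x] fun _ => 0 := by
      filter_upwards [hK.isClosed.isOpen_compl.mem_nhds hx] with y hy using h0 y hy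
    rw [J_eventuallyEq k this, (J_const 0 k x).2]
    exact le_max_right _ _

/-! ### Tangential vector fields -/

/-- The first order operator `∑ cᵢ ∂ᵢ`. -/
def vf {n : ℕ} (c : Fin n → Eu n → ℝ) (u : Eu n → ℝ) (x : Eu n) : ℝ := ∑ i, c i x * sd i u x

/-- The Laplacian. -/
def lap {n : ℕ} (u : Eu n → ℝ) (x : Eu n) : ℝ := ∑ i, sd i (sd i u) x

lemma sm_vf {c : Fin n → Eu n → ℝ} (hc : ∀ i, Sm (c i)) {u : Eu n → ℝ} (hu : Sm u) :
    Sm (vf c u) := ContDiff.sum fun i _ => (hc i).mul (sm_sd hu i)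

lemma sm_lap {u : Eu n → ℝ} (hu : Sm u) : Sm (lap u) :=
  ContDiff.sum fun i _ => sm_sd (sm_sd hu i) i

lemma sd_lap {u : Eu n → ℝ} (hu : Sm u) (j : Fin n) : sd j (lap u) = lap (sd j u) := by
  funext x
  change sd j (fun y => ∑ i, sd i (sd i u) y) x = _
  rw [sd_sum _ fun i => sm_sd (sm_sd hu i) i]
  refine Finset.sum_congr rfl fun i _ => ?_
  rw [sd_comm (sm_sd hu i) j i, sd_comm hu j i]

lemma sd_vf {c : Fin n → Eu n → ℝ} (hc : ∀ i, Sm (c i)) {u : Eu n → ℝ} (hu : Sm u) (j : Fin n)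
    (x : Eu n) : sd j (vf c u) x = vf c (sd j u) x + vf (fun i => sd j (c i)) u x := by
  change sd j (fun y => ∑ i, c i y * sd i u y) x = _
  rw [sd_sum _ fun i => (hc i).mul (sm_sd hu i), vf, vf, ← Finset.sum_add_distrib]
  refine Finset.sum_congr rfl fun i _ => ?_
  rw [sd_mul (hc i) (sm_sd hu i), sd_comm hu j i]

/-- The commutator `[Δ, ∑ cᵢ ∂ᵢ]`. -/
lemma lap_vf {c : Fin n → Eu n → ℝ} (hc : ∀ i, Sm (c i)) {u : Eu n → ℝ} (hu : Sm u) (x : Eu n) :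
    lap (vf c u) x = vf c (lap u) x
      + (vf (fun i => lap (c i)) u x + 2 * ∑ j, vf (fun i => sd j (c i)) (sd j u) x) := by
  have h : ∀ j, sd j (sd j (vf c u)) x = vf c (sd j (sd j u)) x
      + 2 * vf (fun i => sd j (c i)) (sd j u) x + vf (fun i => sd j (sd j (c i))) u x := fun j => by
    have he : sd j (vf c u) = fun x => vf c (sd j u) x + vf (fun i => sd j (c i)) u x :=
      funext fun y => sd_vf hc hu j y
    rw [he, sd_add (sm_vf hc (sm_sd hu j)) (sm_vf (fun i => sm_sd (hc i) j) hu),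
      sd_vf hc (sm_sd hu j), sd_vf (fun i => sm_sd (hc i) j) hu]
    ring
  have h1 : vf c (lap u) x = ∑ j, vf c (sd j (sd j u)) x := by
    simp only [vf]
    rw [Finset.sum_comm]
    refine Finset.sum_congr rfl fun i _ => ?_
    rw [sd_lap hu i, lap, Finset.mul_sum]
    refine Finset.sum_congr rfl fun j _ => ?_
    rw [sd_comm (sm_sd hu j) i j, sd_comm hu i j]
  have h2 : vf (fun i => lap (c i)) u x = ∑ j, vf (fun i => sd j (sd j (c i))) u x := by
    simp only [vf, lap, Finset.sum_mul]
    rw [Finset.sum_comm]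
  rw [lap, Finset.sum_congr rfl fun j _ => h j, Finset.sum_add_distrib, Finset.sum_add_distrib,
    ← Finset.mul_sum, ← h1, ← h2]
  ring

lemma J_vf (k : ℕ) {c : Fin n → Eu n → ℝ} (hc : ∀ i, BS (c i)) : ∃ C : ℝ, 0 ≤ C ∧
    ∀ u : Eu n → ℝ, Sm u → ∀ x, J k (vf c u) x ≤ C * ∑ i, J k (sd i u) x := by
  choose C h0 hC using fun i => J_mul k (hc i)
  refine ⟨(n : ℝ) * ∑ i, C i, ?_, fun u hu x => ?_⟩
  · have := Finset.sum_nonneg fun i (_ : i ∈ Finset.univ) => h0 i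
    positivity
  have h1 := J_sum k (fun i y => c i y * sd i u y) (fun i => (hc i).1.mul (sm_sd hu i)) x
  rw [Fintype.card_fin] at h1
  refine h1.trans ?_
  rw [mul_assoc]
  refine mul_le_mul_of_nonneg_left ?_ (by positivity)
  rw [Finset.mul_sum]
  refine Finset.sum_le_sum fun i _ => (hC i _ (sm_sd hu i) x).trans ?_
  refine mul_le_mul_of_nonneg_right ?_ (J_nonneg _ _ _)
  exact Finset.single_le_sum (f := C) (fun i _ => h0 i) (Finset.mem_univ i)

/-- A finite family of vector fields which is tangential to `{ρ = 0}` and which, together with the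
Laplacian, controls all second derivatives. -/
structure TF {n : ℕ} (ρ : Eu n → ℝ) where
  ι : Type
  inst : Fintype ι
  c : ι → Fin n → Eu n → ℝ
  bs : ∀ s i, BS (c s i)
  tang : ∀ u : Eu n → ℝ, Sm u → (∀ x, ρ x = 0 → u x = 0) → ∀ s x, ρ x = 0 → vf (c s) u x = 0
  a : Fin n → Fin n → Eu n → ℝ
  b : Fin n → Fin n → ι → Fin n → Eu n → ℝ
  bsa : ∀ j k, BS (a j k)
  bsb : ∀ j k s l, BS (b j k s l)
  coer : ∀ u : Eu n → ℝ, Sm u → ∀ j k x,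
    sd j (sd k u) x = a j k x * lap u x + ∑ s, ∑ l, b j k s l x * vf (c s) (sd l u) x

attribute [instance] TF.inst
end

section
variable {n : ℕ}

lemma bs_cut_mul {A : ℝ} (hA : 0 < A) {f : Eu n → ℝ} (hf : Sm f) : BS fun x => cut A x * f x :=
  BS.of_compact ((sm_cut A).mul hf) (isCompact_JB (2 * A)) fun x hx => by
    rw [cut_eq_zero hA hx, zero_mul]

lemma bs_ite {p : Prop} [Decidable p] {f : Eu n → ℝ} (hf : BS f) :
    BS fun x => if p then f x else 0 := by
  by_cases h : p
  · simpa [h] using hf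
  · simpa [h] using BS.const 0

/-- The fields `θ (∂ᵢρ ∂ⱼ - ∂ⱼρ ∂ᵢ)` and `κ ∂ᵢ` with `κ = 1 - θ² |∇ρ|² / (|∇ρ|² + ρ²)`. Since `∇ρ` does
not vanish on `{ρ = 0}`, the denominator is positive everywhere, and `κ = 0` on `{ρ = 0}`. -/
def tangentialFields {ρ : Eu n → ℝ} (hρ : Sm ρ) (hg : ∀ x, ρ x = 0 → fderiv ℝ ρ x ≠ 0)
    (hb : ∀ x, ρ x = 0 → ‖x‖ ≤ 1) : TF ρ := by
  let G : Eu n → ℝ := fun x => ∑ i, sd i ρ x ^ 2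
  let q : Eu n → ℝ := fun x => (G x + ρ x ^ 2)⁻¹
  let θ : Eu n → ℝ := cut 2
  let κ : Eu n → ℝ := fun x => 1 - θ x * (θ x * (G x * q x))
  have hG : Sm G := ContDiff.sum fun i _ => (sm_sd hρ i).pow 2
  have hG0 : ∀ x, 0 ≤ G x := fun x => Finset.sum_nonneg fun i _ => sq_nonneg _
  have hpos : ∀ x, 0 < G x + ρ x ^ 2 := fun x => by
    by_cases hx : ρ x = 0
    · have := gradSq_pos (hg x hx)
      rw [hx]; simpa [G] using this
    · have := hG0 x
      positivity
  have hq : Sm q := (hG.add (hρ.pow 2)).inv fun x => (hpos x).ne'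
  have hθ : Sm θ := sm_cut 2
  have hθ1 : ∀ x, ρ x = 0 → θ x = 1 := fun x hx => by
    refine cut_eq_one two_pos ?_
    rw [jap, Real.sqrt_le_left zero_le_two]
    have := hb x hx
    nlinarith [norm_nonneg x]
  have hκ : BS κ := (BS.const 1).sub (bs_cut_mul two_pos (hθ.mul (hG.mul hq)))
  have hκ0 : ∀ x, ρ x = 0 → κ x = 0 := fun x hx => by
    have h1 : G x * q x = 1 := by
      have := (hpos x).ne'
      simp only [q, hx, ne_eq, OfNat.ofNat_ne_zero, not_false_eq_true, zero_pow, add_zero] at this ⊢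
      exact mul_inv_cancel₀ this
    simp [κ, hθ1 x hx, h1]
  let c : ((Fin n × Fin n) ⊕ Fin n) → Fin n → Eu n → ℝ := fun s k x => match s with
    | Sum.inl (i, j) => (if j = k then θ x * sd i ρ x else 0) - (if i = k then θ x * sd j ρ x else 0)
    | Sum.inr i => if i = k then κ x else 0
  have hc1 : ∀ i j u x, vf (c (Sum.inl (i, j))) u x
      = θ x * (sd i ρ x * sd j u x - sd j ρ x * sd i u x) := fun i j u x => by
    simp only [vf, c, sub_mul, ite_mul, zero_mul, Finset.sum_sub_distrib, Finset.sum_ite_eq,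
      Finset.mem_univ, if_true]
    ring
  have hc2 : ∀ i u x, vf (c (Sum.inr i)) u x = κ x * sd i u x := fun i u x => by
    simp [vf, c]
  refine
    { ι := (Fin n × Fin n) ⊕ Fin n
      inst := inferInstance
      c := c
      bs := ?_
      tang := ?_
      a := fun j k x => θ x * (θ x * (q x * (sd j ρ x * sd k ρ x)))
      b := fun j k s l x => match s with
        | Sum.inl (i, i') => (if i' = j ∧ l = k then θ x * (q x * sd i ρ x) else 0)
            - (if i = k ∧ i' = l then θ x * (q x * sd j ρ x) else 0)
        | Sum.inr i => if i = j ∧ l = k then 1 else 0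
      bsa := ?_
      bsb := ?_
      coer := ?_ }
  · rintro (⟨i, j⟩ | i) k
    · exact (bs_ite (bs_cut_mul two_pos (sm_sd hρ i))).sub (bs_ite (bs_cut_mul two_pos (sm_sd hρ j)))
    · exact bs_ite hκ
  · rintro u hu h0 (⟨i, j⟩ | i) x hx
    · obtain ⟨l, hl⟩ := exists_multiplier hρ hu h0 hx (hg x hx)
      rw [hc1, hl, hl]; ring
    · rw [hc2, hκ0 x hx, zero_mul]
  · exact fun j k => bs_cut_mul two_pos (hθ.mul (hq.mul ((sm_sd hρ j).mul (sm_sd hρ k))))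
  · rintro j k (⟨i, i'⟩ | i) l
    · exact (bs_ite (bs_cut_mul two_pos (hq.mul (sm_sd hρ i)))).sub
        (bs_ite (bs_cut_mul two_pos (hq.mul (sm_sd hρ j))))
    · exact bs_ite (BS.const 1)
  · intro u hu j k x
    rw [Fintype.sum_sum_type, Fintype.sum_prod_type]
    simp only [hc1, hc2]
    have e1 : ∑ i, ∑ l, (if i = j ∧ l = k then (1 : ℝ) else 0) * (κ x * sd i (sd l u) x)
        = κ x * sd j (sd k u) x := by
      simp [ite_and, ite_mul]
    have e2 : ∑ i, ∑ i', ∑ l, ((if i' = j ∧ l = k then θ x * (q x * sd i ρ x) else 0)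
          - (if i = k ∧ i' = l then θ x * (q x * sd j ρ x) else 0))
          * (θ x * (sd i ρ x * sd i' (sd l u) x - sd i' ρ x * sd i (sd l u) x))
        = θ x * θ x * q x * (∑ i, sd i ρ x * (sd i ρ x * sd j (sd k u) x - sd j ρ x * sd i (sd k u) x)
          - sd j ρ x * ∑ l, (sd k ρ x * sd l (sd l u) x - sd l ρ x * sd k (sd l u) x)) := by
      simp only [ite_and, sub_mul, ite_mul, zero_mul, Finset.sum_sub_distrib, Finset.sum_ite_eq,
        Finset.sum_ite_eq', Finset.mem_univ, if_true, Finset.sum_ite_irrel, Finset.sum_const_zero,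
        Finset.mul_sum, mul_sub]
      rw [sub_sub_sub_comm]
      congr 1
      · congr 1 <;> exact Finset.sum_congr rfl fun i _ => by ring
      · congr 1 <;> exact Finset.sum_congr rfl fun i _ => by ring
    have e3 : ∑ i, sd i ρ x * (sd i ρ x * sd j (sd k u) x - sd j ρ x * sd i (sd k u) x)
        - sd j ρ x * ∑ l, (sd k ρ x * sd l (sd l u) x - sd l ρ x * sd k (sd l u) x)
        = G x * sd j (sd k u) x - sd j ρ x * sd k ρ x * lap u x := by
      simp only [G, lap, mul_sub, Finset.sum_sub_distrib, Finset.mul_sum, Finset.sum_mul]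
      have h1 : ∑ i, sd i ρ x * (sd j ρ x * sd i (sd k u) x)
        = ∑ i, sd j ρ x * (sd i ρ x * sd k (sd i u) x) := Finset.sum_congr rfl fun i _ => by
          rw [sd_comm hu i k]; ring
      rw [h1]
      have h2 : ∑ i, sd i ρ x * (sd i ρ x * sd j (sd k u) x)
        = ∑ i, sd i ρ x ^ 2 * sd j (sd k u) x := Finset.sum_congr rfl fun i _ => by ring
      have h3 : ∑ i, sd j ρ x * (sd k ρ x * sd i (sd i u) x)
        = ∑ i, sd j ρ x * sd k ρ x * sd i (sd i u) x := Finset.sum_congr rfl fun i _ => by ring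
      rw [h2, h3]; ring
    rw [e1, e2, e3]
    simp only [κ]
    ring

/-! ### Elliptic regularity for the Dirichlet problem -/

lemma TF.J_coer {ρ : Eu n → ℝ} (Z : TF ρ) (m : ℕ) : ∃ C : ℝ, 0 ≤ C ∧ ∀ u : Eu n → ℝ, Sm u →
    ∀ j k x, J m (sd j (sd k u)) x
      ≤ C * (J m (lap u) x + ∑ s, ∑ l, J m (vf (Z.c s) (sd l u)) x) := by
  choose Ca ha hCa using fun j k => J_mul m (Z.bsa j k)
  choose Cb hb hCb using fun j k s l => J_mul m (Z.bsb j k s l)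
  let D : ℝ := ∑ j, ∑ k, (Ca j k + ∑ s, ∑ l, Cb j k s l)
  have hD1 : ∀ j k, Ca j k + ∑ s, ∑ l, Cb j k s l ≤ D := fun j k => by
    have hn : ∀ j k, 0 ≤ Ca j k + ∑ s, ∑ l, Cb j k s l := fun j k =>
      add_nonneg (ha j k) (Finset.sum_nonneg fun s _ => Finset.sum_nonneg fun l _ => hb j k s l)
    refine (Finset.single_le_sum (f := fun k => Ca j k + ∑ s, ∑ l, Cb j k s l)
      (fun k _ => hn j k) (Finset.mem_univ k)).trans ?_
    exact Finset.single_le_sum (f := fun j => ∑ k, (Ca j k + ∑ s, ∑ l, Cb j k s l))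
      (fun j _ => Finset.sum_nonneg fun k _ => hn j k) (Finset.mem_univ j)
  have hCaD : ∀ j k, Ca j k ≤ D := fun j k => (hD1 j k).trans' <| le_add_of_nonneg_right <|
    Finset.sum_nonneg fun s _ => Finset.sum_nonneg fun l _ => hb j k s l
  have hCbD : ∀ j k s l, Cb j k s l ≤ D := fun j k s l => by
    refine le_trans ?_ (hD1 j k)
    refine le_trans ?_ (le_add_of_nonneg_left (ha j k))
    refine (Finset.single_le_sum (f := fun l => Cb j k s l)
      (fun l _ => hb j k s l) (Finset.mem_univ l)).trans ?_
    exact Finset.single_le_sum (f := fun s => ∑ l, Cb j k s l)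
      (fun s _ => Finset.sum_nonneg fun l _ => hb j k s l) (Finset.mem_univ s)
  let N : ℝ := (Fintype.card (Z.ι × Fin n) : ℝ)
  have hN : 0 ≤ N := Nat.cast_nonneg _
  have hD0 : 0 ≤ D := Finset.sum_nonneg fun j _ => Finset.sum_nonneg fun k _ =>
    add_nonneg (ha j k) (Finset.sum_nonneg fun s _ => Finset.sum_nonneg fun l _ => hb j k s l)
  refine ⟨2 * (1 + N) * D, by positivity, fun u hu j k x => ?_⟩
  have he : sd j (sd k u) = fun x => Z.a j k x * lap u x
      + ∑ p : Z.ι × Fin n, Z.b j k p.1 p.2 x * vf (Z.c p.1) (sd p.2 u) x := by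
    funext x
    rw [Z.coer u hu j k x, Fintype.sum_prod_type]
  have hs : ∀ p : Z.ι × Fin n, Sm (vf (Z.c p.1) (sd p.2 u)) := fun p =>
    sm_vf (fun i => (Z.bs _ i).1) (sm_sd hu _)
  have hs2 : ∀ p : Z.ι × Fin n, Sm fun x => Z.b j k p.1 p.2 x * vf (Z.c p.1) (sd p.2 u) x :=
    fun p => (Z.bsb _ _ _ _).1.mul (hs p)
  rw [he]
  refine (J_add m ((Z.bsa j k).1.mul (sm_lap hu)) (ContDiff.sum fun p _ => hs2 p) x).trans ?_
  have h1 := hCa j k _ (sm_lap hu) x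
  have h1' := mul_le_mul_of_nonneg_right (hCaD j k) (J_nonneg m (lap u) x)
  have h2 := J_sum m _ hs2 x
  have h3 : ∑ p : Z.ι × Fin n, J m (fun x => Z.b j k p.1 p.2 x * vf (Z.c p.1) (sd p.2 u) x) x
      ≤ D * ∑ s, ∑ l, J m (vf (Z.c s) (sd l u)) x := by
    rw [← Fintype.sum_prod_type', Finset.mul_sum]
    refine Finset.sum_le_sum fun p _ => (hCb j k p.1 p.2 _ (hs p) x).trans ?_
    exact mul_le_mul_of_nonneg_right (hCbD _ _ _ _) (J_nonneg _ _ _)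
  have h4 := mul_le_mul_of_nonneg_left h3 hN
  have h5 : 0 ≤ ∑ s, ∑ l, J m (vf (Z.c s) (sd l u)) x :=
    Finset.sum_nonneg fun s _ => Finset.sum_nonneg fun l _ => J_nonneg _ _ _
  have h6 := J_nonneg m (lap u) x
  have h7 := mul_nonneg hN (mul_nonneg hD0 h6)
  have h8 := mul_nonneg hD0 h5
  nlinarith
end

section
variable {n : ℕ}

/-- The truncated weight `⟨x⟩^{-p}` times the cutoff at scale `A`. -/
def wcut {n : ℕ} (p A : ℝ) (x : Eu n) : ℝ := jw p x * cut A x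

lemma sm_wcut (p A : ℝ) : Sm (wcut p A : Eu n → ℝ) := (sm_jw p).mul (sm_cut A)

lemma wcut_nonneg (p A : ℝ) (x : Eu n) : 0 ≤ wcut p A x :=
  mul_nonneg (jw_pos _ _).le (cut_nonneg _ _)

lemma wcut_le (p A : ℝ) (x : Eu n) : wcut p A x ≤ jw p x :=
  mul_le_of_le_one_right (jw_pos _ _).le (cut_le_one _ _)

lemma abs_sd_jw {p : ℝ} (hp : 0 ≤ p) (i : Fin n) (x : Eu n) : |sd i (jw p) x| ≤ p * jw (p + 1) x := by
  rw [sd_jw, abs_mul, abs_mul, abs_neg, abs_of_nonneg hp, abs_of_pos (jw_pos _ _), mul_assoc]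
  refine mul_le_mul_of_nonneg_left ?_ hp
  have := abs_coord_mul_jw (p + 1) x i
  rwa [show p + 1 + 1 = p + 2 by ring] at this

lemma exists_wcut_bound {p : ℝ} (hp : 0 ≤ p) : ∃ B : ℝ, 0 ≤ B ∧ ∀ A : ℝ, 1 ≤ A →
    ∀ (i : Fin n) (x : Eu n), |sd i (wcut p A) x| ≤ B * jw p x := by
  obtain ⟨B, hB0, hB⟩ := exists_st_bound
  refine ⟨B + p, by positivity, fun A hA i x => ?_⟩
  have h1 : sd i (wcut p A) x = jw p x * sd i (cut A) x + sd i (jw p) x * cut A x :=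
    sd_mul (sm_jw p) (sm_cut A) i x
  have h2 := abs_sd_cut hB (by linarith) i x (A := A)
  have h3 : B / A ≤ B := div_le_self hB0.le hA
  have h4 := abs_sd_jw hp i x
  have h5 := jw_anti (by linarith : p ≤ p + 1) x
  have h6 := jw_pos p x
  rw [h1]
  refine (abs_add_le _ _).trans ?_
  rw [abs_mul, abs_mul, abs_of_pos h6, abs_of_nonneg (cut_nonneg A x)]
  have h7 : jw p x * |sd i (cut A) x| ≤ jw p x * B := mul_le_mul_of_nonneg_left (by linarith) h6.le
  have h8 : |sd i (jw p) x| * cut A x ≤ p * jw p x :=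
    (mul_le_of_le_one_right (abs_nonneg _) (cut_le_one _ _)).trans
      (h4.trans (mul_le_mul_of_nonneg_left h5 hp))
  linarith

/-- The squared length of the gradient. -/
def gsq {n : ℕ} (u : Eu n → ℝ) (x : Eu n) : ℝ := ∑ i, sd i u x ^ 2

lemma gsq_nonneg (u : Eu n → ℝ) (x : Eu n) : 0 ≤ gsq u x := Finset.sum_nonneg fun _ _ => sq_nonneg _

/-- The squared length of the Hessian. -/
def hsq {n : ℕ} (u : Eu n → ℝ) (x : Eu n) : ℝ := ∑ i, ∑ j, sd i (sd j u) x ^ 2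

lemma hsq_nonneg (u : Eu n → ℝ) (x : Eu n) : 0 ≤ hsq u x :=
  Finset.sum_nonneg fun _ _ => Finset.sum_nonneg fun _ _ => sq_nonneg _

/-- The vector field integrated in the second order estimate for `v = ∑ cᵢ ∂ᵢ u`. -/
def ellV {n : ℕ} (η : Eu n → ℝ) (c : Fin n → Eu n → ℝ) (u : Eu n → ℝ) (i : Fin n) (x : Eu n) : ℝ :=
  η x ^ 2 * (vf c u x * (sd i (vf c u) x - c i x * lap u x))

lemma sm_ellV {η : Eu n → ℝ} (hη : Sm η) {c : Fin n → Eu n → ℝ} (hc : ∀ i, Sm (c i)) {u : Eu n → ℝ}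
    (hu : Sm u) (i : Fin n) : Sm (ellV η c u i) :=
  (hη.pow 2).mul ((sm_vf hc hu).mul ((sm_sd (sm_vf hc hu) i).sub ((hc i).mul (sm_lap hu))))

lemma div_ellV {η : Eu n → ℝ} (hη : Sm η) {c : Fin n → Eu n → ℝ} (hc : ∀ i, Sm (c i)) {u : Eu n → ℝ}
    (hu : Sm u) (x : Eu n) :
    ∑ i, sd i (ellV η c u i) x
      = (∑ i, (2 * η x * sd i η x * vf c u x * (sd i (vf c u) x - c i x * lap u x)
          + η x ^ 2 * sd i (vf c u) x ^ 2 - η x ^ 2 * lap u x * c i x * sd i (vf c u) x))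
        + η x ^ 2 * vf c u x * (vf (fun i => lap (c i)) u x
            + 2 * ∑ j, vf (fun i => sd j (c i)) (sd j u) x)
        - η x ^ 2 * vf c u x * lap u x * ∑ i, sd i (c i) x := by
  have hv := sm_vf hc hu
  have hL := sm_lap hu
  have h : ∀ i, sd i (ellV η c u i) x
      = (2 * η x * sd i η x * vf c u x * (sd i (vf c u) x - c i x * lap u x)
          + η x ^ 2 * sd i (vf c u) x ^ 2 - η x ^ 2 * lap u x * c i x * sd i (vf c u) x)
        + η x ^ 2 * vf c u x * sd i (sd i (vf c u)) x - η x ^ 2 * vf c u x * (c i x * sd i (lap u) x)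
        - η x ^ 2 * vf c u x * lap u x * sd i (c i) x := fun i => by
    unfold ellV
    have hη2 : sd i (fun y => η y ^ 2) x = 2 * η x * sd i η x := by
      have : (fun y => η y ^ 2) = fun y => η y * η y := by funext y; ring
      rw [this, sd_mul hη hη]; ring
    rw [sd_mul (hη.pow 2) (hv.mul ((sm_sd hv i).sub ((hc i).mul hL))), hη2,
      sd_mul hv ((sm_sd hv i).sub ((hc i).mul hL)), sd_sub (sm_sd hv i) ((hc i).mul hL),
      sd_mul (hc i) hL]
    ring
  rw [Finset.sum_congr rfl fun i _ => h i, Finset.sum_sub_distrib, Finset.sum_sub_distrib,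
    Finset.sum_add_distrib, ← Finset.mul_sum, ← Finset.mul_sum, ← Finset.mul_sum]
  have h2 := lap_vf hc hu x
  have h3 : vf c (lap u) x = ∑ i, c i x * sd i (lap u) x := rfl
  have h4 : lap (vf c u) x = ∑ i, sd i (sd i (vf c u)) x := rfl
  rw [← h3, ← h4, h2]
  ring

lemma bound_finset {ι : Type*} [Fintype ι] {α : Type*} {f : ι → α → ℝ}
    (h : ∀ s, ∃ C : ℝ, 0 ≤ C ∧ ∀ x, |f s x| ≤ C) : ∃ C : ℝ, 0 ≤ C ∧ ∀ s x, |f s x| ≤ C := by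
  choose C h0 hC using h
  refine ⟨∑ s, C s, Finset.sum_nonneg fun s _ => h0 s, fun s x => (hC s x).trans ?_⟩
  exact Finset.single_le_sum (f := C) (fun s _ => h0 s) (Finset.mem_univ s)

lemma vf_sq {c : Fin n → Eu n → ℝ} (hc : ∀ i, BS (c i)) : ∃ C : ℝ, 0 ≤ C ∧
    ∀ u : Eu n → ℝ, Sm u → ∀ x, vf c u x ^ 2 ≤ C * gsq u x := J_vf 0 hc

lemma BS.lap {c : Eu n → ℝ} (h : BS c) : BS (lap c) := BS.sum fun i => (h.sd i).sd i

set_option maxHeartbeats 1000000 in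
/-- Pointwise form of the energy estimate for `Z u = ∑ cᵢ ∂ᵢ u` with a truncated weight: the gradient
of `Z u` is bounded by a divergence and an arbitrarily small multiple of the Hessian, up to terms
involving only `Δu` and `∇u`. -/
lemma ell_pointwise {p : ℝ} (hp : 0 ≤ p) {c : Fin n → Eu n → ℝ} (hc : ∀ i, BS (c i)) {κ : ℝ}
    (hκ : 0 < κ) : ∃ C : ℝ, 0 ≤ C ∧ ∀ A : ℝ, 1 ≤ A → ∀ u : Eu n → ℝ, Sm u → ∀ x,
      2⁻¹ * (wcut p A x ^ 2 * gsq (vf c u) x) ≤ ∑ i, sd i (ellV (wcut p A) c u i) x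
        + κ * (wcut p A x ^ 2 * hsq u x) + C * (jw p x ^ 2 * (lap u x ^ 2 + gsq u x)) := by
  obtain ⟨B, hB0, hB⟩ := exists_wcut_bound (n := n) hp
  obtain ⟨M, hM0, hM⟩ := bound_finset fun i => (hc i).bound
  obtain ⟨M', hM'0, hM'⟩ := (BS.sum fun i => (hc i).sd i).bound
  obtain ⟨C1, hC10, hC1⟩ := vf_sq hc
  obtain ⟨C2, hC20, hC2⟩ := vf_sq fun i => (hc i).lap
  choose C3 hC30 hC3 using fun j => vf_sq fun i => (hc i).sd j
  -- the commutator `[Δ, Z]` is of second order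
  obtain ⟨C4, hC40, hC4⟩ : ∃ C4 : ℝ, 0 ≤ C4 ∧ ∀ u : Eu n → ℝ, Sm u → ∀ x,
      (vf (fun i => lap (c i)) u x + 2 * ∑ j, vf (fun i => sd j (c i)) (sd j u) x) ^ 2
        ≤ C4 * (gsq u x + hsq u x) := by
    have hs : 0 ≤ ∑ j, C3 j := Finset.sum_nonneg fun j _ => hC30 j
    refine ⟨2 * C2 + 8 * n * ∑ j, C3 j, by positivity, fun u hu x => ?_⟩
    have h1 := hC2 u hu x
    have h2 : (∑ j, vf (fun i => sd j (c i)) (sd j u) x) ^ 2 ≤ n * ((∑ j, C3 j) * hsq u x) := by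
      refine (sq_sum_le_card_mul_sum_sq (s := Finset.univ)).trans ?_
      rw [Finset.card_univ, Fintype.card_fin]
      refine mul_le_mul_of_nonneg_left ?_ (Nat.cast_nonneg n)
      have : hsq u x = ∑ j, gsq (sd j u) x := by
        unfold hsq gsq; rw [Finset.sum_comm]
      rw [this, Finset.mul_sum]
      refine Finset.sum_le_sum fun j _ => (hC3 j _ (sm_sd hu j) x).trans ?_
      refine mul_le_mul_of_nonneg_right ?_ (gsq_nonneg _ _)
      exact Finset.single_le_sum (f := C3) (fun i _ => hC30 i) (Finset.mem_univ j)
    have h3 := gsq_nonneg u x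
    have h4 := hsq_nonneg u x
    have h5 : 0 ≤ C2 * hsq u x := mul_nonneg hC20 h4
    have h6 : 0 ≤ n * (∑ j, C3 j) * gsq u x := by positivity
    nlinarith [sq_nonneg (vf (fun i => lap (c i)) u x - 2 * ∑ j, vf (fun i => sd j (c i)) (sd j u) x)]
  let k : ℝ := κ / (C4 + 1)
  have hk : 0 < k := by positivity
  have hk2 : k * C4 ≤ κ := by
    have : k * (C4 + 1) = κ := by simp only [k]; field_simp
    nlinarith
  refine ⟨n * (5 * B ^ 2 * C1 + 2 * M ^ 2) + κ + C1 / (4 * k) + C1 + M' ^ 2, by positivity,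
    fun A hA u hu x => ?_⟩
  rw [div_ellV (sm_wcut p A) (fun i => (hc i).1) hu x]
  have e0 := wcut_nonneg p A x
  have e1 := wcut_le p A x
  have w0 := (jw_pos p x).le
  set e := wcut p A x
  set w := jw p x
  set v := vf c u x
  set L := lap u x
  set g := gsq u x
  set H := hsq u x
  have hg0 : 0 ≤ g := gsq_nonneg u x
  have hH0 : 0 ≤ H := hsq_nonneg u x
  set X := vf (fun i => lap (c i)) u x + 2 * ∑ j, vf (fun i => sd j (c i)) (sd j u) x
  have hX : X ^ 2 ≤ C4 * (g + H) := hC4 u hu x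
  have hv : v ^ 2 ≤ C1 * g := hC1 u hu x
  have hd : |∑ i, sd i (c i) x| ≤ M' := hM' x
  set d := ∑ i, sd i (c i) x
  have hew : e ^ 2 ≤ w ^ 2 := pow_le_pow_left₀ e0 e1 2
  -- termwise Cauchy-Schwarz
  have hi : ∀ i, 2⁻¹ * (e ^ 2 * sd i (vf c u) x ^ 2) - (5 * B ^ 2 * C1 * w ^ 2 * g + 2 * M ^ 2 * w ^ 2 * L ^ 2)
      ≤ 2 * e * sd i (wcut p A) x * v * (sd i (vf c u) x - c i x * L)
          + e ^ 2 * sd i (vf c u) x ^ 2 - e ^ 2 * L * c i x * sd i (vf c u) x := fun i => by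
    have hη : sd i (wcut p A) x ^ 2 ≤ B ^ 2 * w ^ 2 := by
      rw [← mul_pow, ← sq_abs]
      exact pow_le_pow_left₀ (abs_nonneg _) (hB A hA i x) 2
    have hci : c i x ^ 2 ≤ M ^ 2 := by
      rw [← sq_abs]
      exact pow_le_pow_left₀ (abs_nonneg _) (hM i x) 2
    set y := sd i (wcut p A) x
    set z := sd i (vf c u) x
    set ci := c i x
    have a1 : v ^ 2 * y ^ 2 ≤ C1 * g * (B ^ 2 * w ^ 2) :=
      mul_le_mul hv hη (sq_nonneg _) (by positivity)
    have a2 : e ^ 2 * (L ^ 2 * ci ^ 2) ≤ w ^ 2 * (L ^ 2 * M ^ 2) :=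
      mul_le_mul hew (mul_le_mul_of_nonneg_left hci (sq_nonneg _)) (by positivity) (by positivity)
    nlinarith [sq_nonneg (e * z / 2 + 2 * v * y), sq_nonneg (e * z / 2 - e * (L * ci)),
      sq_nonneg (v * y - e * (ci * L))]
  have hsum := Finset.sum_le_sum fun i (_ : i ∈ Finset.univ) => hi i
  rw [Finset.sum_sub_distrib, ← Finset.mul_sum, ← Finset.mul_sum, Finset.sum_const, Finset.card_univ,
    Fintype.card_fin, nsmul_eq_mul] at hsum
  have hG : ∑ i, sd i (vf c u) x ^ 2 = gsq (vf c u) x := rfl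
  rw [hG] at hsum
  have b1 : - (k * (e ^ 2 * X ^ 2) + e ^ 2 * v ^ 2 / (4 * k)) ≤ e ^ 2 * v * X := by
    have : k * (e ^ 2 * X ^ 2) + e ^ 2 * v ^ 2 / (4 * k) + e ^ 2 * v * X
      = k * (e * X + e * v / (2 * k)) ^ 2 := by field_simp; ring
    have := mul_nonneg hk.le (sq_nonneg (e * X + e * v / (2 * k)))
    linarith
  have b2 : e ^ 2 * v * L * d ≤ e ^ 2 * (v ^ 2 + M' ^ 2 * L ^ 2) := by
    have : d ^ 2 ≤ M' ^ 2 := by rw [← sq_abs]; exact pow_le_pow_left₀ (abs_nonneg _) hd 2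
    have h2 : v * L * d ≤ v ^ 2 + M' ^ 2 * L ^ 2 := by
      nlinarith [sq_nonneg (v - L * d), mul_le_mul_of_nonneg_right this (sq_nonneg L), sq_nonneg v,
        sq_nonneg (L * d)]
    calc e ^ 2 * v * L * d = e ^ 2 * (v * L * d) := by ring
      _ ≤ _ := mul_le_mul_of_nonneg_left h2 (sq_nonneg _)
  have b3 : k * (e ^ 2 * X ^ 2) ≤ κ * (w ^ 2 * g) + κ * (e ^ 2 * H) := by
    have h1 : k * (e ^ 2 * X ^ 2) ≤ k * (e ^ 2 * (C4 * (g + H))) := by gcongr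
    have h2 : k * (e ^ 2 * (C4 * (g + H))) = (k * C4) * (e ^ 2 * g + e ^ 2 * H) := by ring
    have h3 : (k * C4) * (e ^ 2 * g + e ^ 2 * H) ≤ κ * (e ^ 2 * g + e ^ 2 * H) :=
      mul_le_mul_of_nonneg_right hk2 (by positivity)
    have h4 : κ * (e ^ 2 * g) ≤ κ * (w ^ 2 * g) := by gcongr
    linarith
  have b4 : e ^ 2 * v ^ 2 ≤ C1 * (w ^ 2 * g) := by
    calc e ^ 2 * v ^ 2 ≤ w ^ 2 * (C1 * g) := mul_le_mul hew hv (sq_nonneg _) (by positivity)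
      _ = _ := by ring
  have b5 : e ^ 2 * v ^ 2 / (4 * k) ≤ C1 / (4 * k) * (w ^ 2 * g) := by
    rw [div_mul_eq_mul_div]
    gcongr
  have b6 : e ^ 2 * (M' ^ 2 * L ^ 2) ≤ w ^ 2 * (M' ^ 2 * L ^ 2) := by gcongr
  have hn : (0 : ℝ) ≤ n := Nat.cast_nonneg n
  have p1 : 0 ≤ n * (5 * B ^ 2 * C1) * (w ^ 2 * L ^ 2) := by positivity
  have p2 : 0 ≤ n * (2 * M ^ 2) * (w ^ 2 * g) := by positivity
  have p3 : 0 ≤ (κ + C1 / (4 * k) + C1) * (w ^ 2 * L ^ 2) := by positivity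
  have p4 : 0 ≤ M' ^ 2 * (w ^ 2 * g) := by positivity
  rw [mul_add] at b2
  linarith [hsum, b1, b2, b3, b4, b5, b6, p1, p2, p3, p4]
end

section
variable {n : ℕ}

lemma cont_gsq {u : Eu n → ℝ} (hu : Sm u) : Continuous (gsq u) :=
  continuous_finsetSum _ fun i _ => (sm_sd hu i).cont.pow 2

lemma cont_hsq {u : Eu n → ℝ} (hu : Sm u) : Continuous (hsq u) :=
  continuous_finsetSum _ fun i _ => continuous_finsetSum _ fun j _ => (sm_sd (sm_sd hu j) i).cont.pow 2

lemma TF.hsq_le {ρ : Eu n → ℝ} (Z : TF ρ) : ∃ C : ℝ, 0 ≤ C ∧ ∀ u : Eu n → ℝ, Sm u → ∀ x,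
    hsq u x ≤ C * (lap u x ^ 2 + gsq u x + ∑ s, gsq (vf (Z.c s) u) x) := by
  obtain ⟨C1, h1, hC1⟩ := Z.J_coer 0
  choose C2 h2 hC2 using fun (p : Z.ι × Fin n) => vf_sq fun i => (Z.bs p.1 i).sd p.2
  have h2s : 0 ≤ ∑ p, C2 p := Finset.sum_nonneg fun p _ => h2 p
  refine ⟨n * n * (C1 * (2 + 2 * ∑ p, C2 p)), by positivity, fun u hu x => ?_⟩
  have hS : 0 ≤ ∑ s, gsq (vf (Z.c s) u) x := Finset.sum_nonneg fun s _ => gsq_nonneg _ _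
  have hg := gsq_nonneg u x
  have hsl : ∑ s, ∑ l, J 0 (vf (Z.c s) (sd l u)) x
      ≤ 2 * ∑ s, gsq (vf (Z.c s) u) x + 2 * (∑ p, C2 p) * gsq u x := by
    have : ∑ p, C2 p = ∑ s, ∑ l, C2 (s, l) := Fintype.sum_prod_type _
    rw [this, Finset.mul_sum, mul_assoc, Finset.sum_mul, Finset.mul_sum, ← Finset.sum_add_distrib]
    refine Finset.sum_le_sum fun s _ => ?_
    rw [gsq, Finset.mul_sum, Finset.sum_mul, Finset.mul_sum, ← Finset.sum_add_distrib]
    refine Finset.sum_le_sum fun l _ => ?_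
    have e := sd_vf (fun i => (Z.bs s i).1) hu l x
    have f := hC2 (s, l) u hu x
    simp only at f
    change vf (Z.c s) (sd l u) x ^ 2 ≤ _
    have : vf (Z.c s) (sd l u) x = sd l (vf (Z.c s) u) x - vf (fun i => sd l (Z.c s i)) u x := by
      rw [e]; ring
    rw [this]
    nlinarith [sq_nonneg (sd l (vf (Z.c s) u) x + vf (fun i => sd l (Z.c s i)) u x)]
  have hone : ∀ i j, sd i (sd j u) x ^ 2
      ≤ C1 * (2 + 2 * ∑ p, C2 p) * (lap u x ^ 2 + gsq u x + ∑ s, gsq (vf (Z.c s) u) x) := fun i j => by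
    refine (hC1 u hu i j x).trans ?_
    rw [mul_assoc]
    refine mul_le_mul_of_nonneg_left ?_ h1
    change lap u x ^ 2 + _ ≤ _
    have := sq_nonneg (lap u x)
    nlinarith [mul_nonneg h2s this, mul_nonneg h2s hg, mul_nonneg h2s hS]
  refine (Finset.sum_le_sum fun i _ => Finset.sum_le_sum fun j _ => hone i j).trans ?_
  simp only [Finset.sum_const, Finset.card_univ, Fintype.card_fin, nsmul_eq_mul]
  exact le_of_eq (by ring)

/-- The weighted second order estimate. -/
lemma elliptic_zero {ρ : Eu n → ℝ} (hρ : Sm ρ) (hg : ∀ x, ρ x = 0 → fderiv ℝ ρ x ≠ 0) (Z : TF ρ)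
    {p : ℝ} (hp : 0 ≤ p) : ∃ C : ℝ, 0 ≤ C ∧ ∀ u : Eu n → ℝ, Sm u → (∀ x, ρ x = 0 → u x = 0) →
      ∫⁻ x in {x | 0 ≤ ρ x}, ENNReal.ofReal (jw p x ^ 2 * hsq u x)
        ≤ ∫⁻ x in {x | 0 ≤ ρ x},
            ENNReal.ofReal (C * (jw p x ^ 2 * (lap u x ^ 2 + gsq u x))) := by
  obtain ⟨C4, h4, hC4⟩ := Z.hsq_le
  let M : ℝ := Fintype.card Z.ι
  have hM : 0 ≤ M := Nat.cast_nonneg _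
  let κ : ℝ := 1 / (4 * ((M + 1) * (C4 + 1)))
  have hκ : 0 < κ := by positivity
  choose C5 h5 hC5 using fun s => ell_pointwise hp (Z.bs s) hκ
  have h5s : 0 ≤ ∑ s, C5 s := Finset.sum_nonneg fun s _ => h5 s
  have hκM : M * κ * C4 ≤ 4⁻¹ := by
    have h1 : κ * ((M + 1) * (C4 + 1)) = 4⁻¹ := by simp only [κ]; field_simp
    nlinarith [mul_nonneg hκ.le hM, mul_nonneg hκ.le h4]
  have hκM' : M * κ ≤ 4⁻¹ := by
    have h1 : κ * ((M + 1) * (C4 + 1)) = 4⁻¹ := by simp only [κ]; field_simp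
    nlinarith [mul_nonneg hκ.le hM, mul_nonneg hκ.le h4, mul_nonneg (mul_nonneg hκ.le hM) h4]
  refine ⟨C4 * (2 + 4 * ∑ s, C5 s), by positivity, fun u hu h0 => ?_⟩
  refine lintegral_le_of_cut (f := fun x => jw p x ^ 2 * hsq u x) (((sm_jw p).cont.pow 2).mul (cont_hsq hu)) fun k => ?_
  have hA : (1 : ℝ) ≤ (k : ℝ) + 1 := by have := Nat.cast_nonneg (α := ℝ) k; linarith
  set A : ℝ := (k : ℝ) + 1
  have hA0 : 0 < A := by linarith
  have hVs : ∀ s i, Sm (ellV (wcut p A) (Z.c s) u i) := fun s i =>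
    sm_ellV (sm_wcut p A) (fun i => (Z.bs s i).1) hu i
  have hw0 : ∀ x, x ∉ JB n (2 * A) → wcut p A x = 0 := fun x hx => by
    rw [wcut, cut_eq_zero hA0 hx, mul_zero]
  refine lintegral_le_of_div hρ hg (V := fun i x => 4 * C4 * ∑ s, ellV (wcut p A) (Z.c s) u i x)
    (fun i => contDiff_const.mul (ContDiff.sum fun s _ => hVs s i)) (isCompact_JB (2 * A)) ?_ ?_ ?_ ?_ ?_
    ?_
  · intro i x hx
    simp [ellV, hw0 x hx]
  · intro x hx
    have : ∀ s, vf (Z.c s) u x = 0 := fun s => Z.tang u hu h0 s x hx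
    simp [ellV, this]
  · exact ((sm_cut A).cont.pow 2).mul (((sm_jw p).cont.pow 2).mul (cont_hsq hu))
  · intro x
    have := hsq_nonneg u x
    positivity
  · intro x hx
    rw [cut_eq_zero hA0 hx]; ring
  · intro x _
    have e1 : ∀ i, sd i (fun x => 4 * C4 * ∑ s, ellV (wcut p A) (Z.c s) u i x) x
        = 4 * C4 * ∑ s, sd i (ellV (wcut p A) (Z.c s) u i) x := fun i => by
      rw [sd_mul contDiff_const (ContDiff.sum fun s _ => hVs s i), sd_const,
        sd_sum _ fun s => hVs s i]
      ring
    rw [Finset.sum_congr rfl fun i _ => e1 i, ← Finset.mul_sum, Finset.sum_comm]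
    have e2 : cut A x ^ 2 * (jw p x ^ 2 * hsq u x) = wcut p A x ^ 2 * hsq u x := by
      rw [wcut]; ring
    rw [e2]
    have e3 := Finset.sum_le_sum fun s (_ : s ∈ Finset.univ) => hC5 s A hA u hu x
    rw [Finset.sum_add_distrib, Finset.sum_add_distrib, ← Finset.mul_sum, ← Finset.mul_sum,
      Finset.sum_const, Finset.card_univ, nsmul_eq_mul, ← Finset.sum_mul] at e3
    have e4 := hC4 u hu x
    have hew : wcut p A x ^ 2 ≤ jw p x ^ 2 := pow_le_pow_left₀ (wcut_nonneg _ _ _) (wcut_le _ _ _) 2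
    have hg0 := gsq_nonneg u x
    have hL := sq_nonneg (lap u x)
    have hS : 0 ≤ ∑ s, gsq (vf (Z.c s) u) x := Finset.sum_nonneg fun s _ => gsq_nonneg _ _
    have hH := hsq_nonneg u x
    set D := ∑ s, ∑ i, sd i (ellV (wcut p A) (Z.c s) u i) x
    set Q := ∑ s, gsq (vf (Z.c s) u) x
    set e := wcut p A x ^ 2
    set w := jw p x ^ 2
    have he0 : 0 ≤ e := sq_nonneg _
    have hw0 : 0 ≤ w := sq_nonneg _
    set y := lap u x ^ 2 + gsq u x
    have hy : 0 ≤ y := add_nonneg hL hg0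
    have e5 : e * hsq u x ≤ C4 * (e * y) + C4 * (e * Q) := by
      have := mul_le_mul_of_nonneg_left e4 he0
      linarith
    have e6 : e * y ≤ w * y := mul_le_mul_of_nonneg_right hew hy
    have e7 : M * (κ * (e * hsq u x)) ≤ 4⁻¹ * (w * y) + 4⁻¹ * (e * Q) := by
      have a1 : M * κ * (e * hsq u x) ≤ M * κ * (C4 * (e * y) + C4 * (e * Q)) :=
        mul_le_mul_of_nonneg_left e5 (by positivity)
      have a2 : M * κ * C4 * (e * y) ≤ 4⁻¹ * (e * y) :=
        mul_le_mul_of_nonneg_right hκM (by positivity)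
      have a3 : M * κ * C4 * (e * Q) ≤ 4⁻¹ * (e * Q) :=
        mul_le_mul_of_nonneg_right hκM (by positivity)
      linarith
    have hM' : (Fintype.card Z.ι : ℝ) = M := rfl
    rw [hM'] at e3
    have e3' : 2⁻¹ * (e * Q) ≤ D + M * (κ * (e * hsq u x)) + (∑ s, C5 s) * (w * y) := e3
    have e8 : e * Q ≤ 4 * D + w * y + 4 * (∑ s, C5 s) * (w * y) := by linarith
    have e9 := mul_le_mul_of_nonneg_left e8 h4
    have e10 := mul_le_mul_of_nonneg_left e6 h4
    linarith

/-- Domination of one functional of `u` by another, uniformly in `u` and `x`. -/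
def Dom (f y : (Eu n → ℝ) → Eu n → ℝ) : Prop :=
  ∃ C : ℝ, 0 ≤ C ∧ ∀ u : Eu n → ℝ, Sm u → ∀ x, f u x ≤ C * y u x

lemma Dom.of_le {f y : (Eu n → ℝ) → Eu n → ℝ} (h : ∀ u, Sm u → ∀ x, f u x ≤ y u x) : Dom f y :=
  ⟨1, zero_le_one, fun u hu x => by rw [one_mul]; exact h u hu x⟩

lemma Dom.trans {f g y : (Eu n → ℝ) → Eu n → ℝ} (h1 : Dom f g) (h2 : Dom g y) : Dom f y := by
  obtain ⟨C, hC, h1⟩ := h1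
  obtain ⟨D, hD, h2⟩ := h2
  refine ⟨C * D, mul_nonneg hC hD, fun u hu x => (h1 u hu x).trans ?_⟩
  rw [mul_assoc]
  exact mul_le_mul_of_nonneg_left (h2 u hu x) hC

lemma Dom.add {f g y : (Eu n → ℝ) → Eu n → ℝ} (h1 : Dom f y) (h2 : Dom g y) :
    Dom (fun u x => f u x + g u x) y := by
  obtain ⟨C, hC, h1⟩ := h1
  obtain ⟨D, hD, h2⟩ := h2
  exact ⟨C + D, add_nonneg hC hD, fun u hu x => by linarith [h1 u hu x, h2 u hu x]⟩

lemma Dom.const_mul {f y : (Eu n → ℝ) → Eu n → ℝ} {a : ℝ} (ha : 0 ≤ a) (h : Dom f y) :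
    Dom (fun u x => a * f u x) y := by
  obtain ⟨C, hC, h⟩ := h
  refine ⟨a * C, mul_nonneg ha hC, fun u hu x => ?_⟩
  rw [mul_assoc]
  exact mul_le_mul_of_nonneg_left (h u hu x) ha

lemma Dom.sum {ι : Type*} [Fintype ι] {f : ι → (Eu n → ℝ) → Eu n → ℝ} {y : (Eu n → ℝ) → Eu n → ℝ}
    (h : ∀ s, Dom (f s) y) : Dom (fun u x => ∑ s, f s u x) y := by
  choose C hC h using h
  refine ⟨∑ s, C s, Finset.sum_nonneg fun s _ => hC s, fun u hu x => ?_⟩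
  rw [Finset.sum_mul]
  exact Finset.sum_le_sum fun s _ => h s u hu x

lemma Dom.comp {f y : (Eu n → ℝ) → Eu n → ℝ} (h : Dom f y) {T : (Eu n → ℝ) → Eu n → ℝ}
    (hT : ∀ u, Sm u → Sm (T u)) : Dom (fun u => f (T u)) fun u => y (T u) :=
  h.imp fun _ h => ⟨h.1, fun u hu x => h.2 (T u) (hT u hu) x⟩

lemma Dom.J_add {m : ℕ} {S T : (Eu n → ℝ) → Eu n → ℝ} {y : (Eu n → ℝ) → Eu n → ℝ}
    (hS : ∀ u, Sm u → Sm (S u)) (hT : ∀ u, Sm u → Sm (T u))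
    (h1 : Dom (fun u => J m (S u)) y) (h2 : Dom (fun u => J m (T u)) y) :
    Dom (fun u => J m (fun x => S u x + T u x)) y :=
  (Dom.of_le fun u hu x => PLE.J_add m (hS u hu) (hT u hu) x).trans ((h1.add h2).const_mul zero_le_two)

lemma Dom.J_sub {m : ℕ} {S T : (Eu n → ℝ) → Eu n → ℝ} {y : (Eu n → ℝ) → Eu n → ℝ}
    (hS : ∀ u, Sm u → Sm (S u)) (hT : ∀ u, Sm u → Sm (T u))
    (h1 : Dom (fun u => J m (S u)) y) (h2 : Dom (fun u => J m (T u)) y) :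
    Dom (fun u => J m (fun x => S u x - T u x)) y :=
  (Dom.of_le fun u hu x => PLE.J_sub m (hS u hu) (hT u hu) x).trans ((h1.add h2).const_mul zero_le_two)

lemma Dom.J_sum {ι : Type*} [Fintype ι] {m : ℕ} {S : ι → (Eu n → ℝ) → Eu n → ℝ}
    {y : (Eu n → ℝ) → Eu n → ℝ} (hS : ∀ s u, Sm u → Sm (S s u))
    (h : ∀ s, Dom (fun u => J m (S s u)) y) : Dom (fun u => J m (fun x => ∑ s, S s u x)) y :=
  (Dom.of_le fun u hu x => PLE.J_sum m (fun s => S s u) (fun s => hS s u hu) x).trans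
    ((Dom.sum h).const_mul (Nat.cast_nonneg _))

lemma Dom.J_vf {m : ℕ} {c : Fin n → Eu n → ℝ} (hc : ∀ i, BS (c i)) :
    Dom (fun u => J m (vf c u)) fun u x => ∑ i, J m (sd i u) x := PLE.J_vf m hc

/-- The functional on the right of the elliptic estimate of order `m + 2`. -/
def ellR {n : ℕ} (m : ℕ) (u : Eu n → ℝ) (x : Eu n) : ℝ := J m (lap u) x + ∑ i, J m (sd i u) x

lemma ellR_nonneg (m : ℕ) (u : Eu n → ℝ) (x : Eu n) : 0 ≤ ellR m u x :=
  add_nonneg (J_nonneg _ _ _) (Finset.sum_nonneg fun i _ => J_nonneg _ _ _)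

lemma J_sd_le_ellR (m : ℕ) (i : Fin n) (u : Eu n → ℝ) (x : Eu n) : J m (sd i u) x ≤ ellR m u x :=
  (Finset.single_le_sum (f := fun i => J m (sd i u) x) (fun i _ => J_nonneg m (sd i u) x)
    (Finset.mem_univ i)).trans (le_add_of_nonneg_left (J_nonneg _ _ _))

lemma dom_sd (m : ℕ) (i : Fin n) : Dom (fun u => J m (sd i u)) (ellR (m + 1)) :=
  Dom.of_le fun u _ x => (J_mono_succ m _ x).trans (J_sd_le_ellR (m + 1) i u x)

lemma dom_sd_sd (m : ℕ) (i j : Fin n) : Dom (fun u => J m (sd i (sd j u))) (ellR (m + 1)) :=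
  Dom.of_le fun u _ x => (J_sd_le m _ i x).trans (J_sd_le_ellR (m + 1) j u x)

lemma dom_sd_lap (m : ℕ) (i : Fin n) : Dom (fun u => J m (sd i (lap u))) (ellR (m + 1)) :=
  Dom.of_le fun u _ x => (J_sd_le m _ i x).trans
    (le_add_of_nonneg_right (Finset.sum_nonneg fun i _ => J_nonneg _ _ _))

lemma dom_vf {m : ℕ} {c : Fin n → Eu n → ℝ} (hc : ∀ i, BS (c i)) :
    Dom (fun u => J m (vf c u)) (ellR (m + 1)) :=
  (Dom.J_vf hc).trans (Dom.sum fun i => dom_sd m i)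

lemma dom_vf_sd {m : ℕ} {c : Fin n → Eu n → ℝ} (hc : ∀ i, BS (c i)) (j : Fin n) :
    Dom (fun u => J m (vf c (sd j u))) (ellR (m + 1)) :=
  ((Dom.J_vf hc).comp (T := sd j) fun _ hu => sm_sd hu j).trans (Dom.sum fun i => dom_sd_sd m i j)

/-- The data of `Z u` are controlled by those of `u` of one order more. -/
lemma dom_ellR_vf {m : ℕ} {c : Fin n → Eu n → ℝ} (hc : ∀ i, BS (c i)) :
    Dom (fun u => ellR m (vf c u)) (ellR (m + 1)) := by
  have hc' : ∀ i, Sm (c i) := fun i => (hc i).1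
  refine Dom.add (f := fun u => J m (lap (vf c u))) ?_ (Dom.sum fun i => ?_)
  · have e : ∀ u, Sm u → lap (vf c u) = fun x => vf c (lap u) x
      + (vf (fun i => lap (c i)) u x + ∑ j, (vf (fun i => sd j (c i)) (sd j u) x
        + vf (fun i => sd j (c i)) (sd j u) x)) := fun u hu => by
      funext x
      rw [lap_vf hc' hu, Finset.sum_add_distrib]; ring
    refine (Dom.of_le fun u hu x => by rw [e u hu]).trans
      (Dom.J_add (S := fun u => vf c (lap u)) ?_ ?_ ?_ (Dom.J_add (S := vf fun i => lap (c i)) ?_ ?_ ?_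
        (Dom.J_sum (S := fun j u x => vf (fun i => sd j (c i)) (sd j u) x
        + vf (fun i => sd j (c i)) (sd j u) x) ?_ fun j => Dom.J_add
          (S := fun u => vf (fun i => sd j (c i)) (sd j u)) ?_ ?_ ?_ ?_)))
    · exact fun u hu => sm_vf hc' (sm_lap hu)
    · exact fun u hu => (sm_vf (fun i => sm_lap (hc' i)) hu).add (ContDiff.sum fun j _ =>
        (sm_vf (fun i => sm_sd (hc' i) j) (sm_sd hu j)).add
          (sm_vf (fun i => sm_sd (hc' i) j) (sm_sd hu j)))
    · exact ((Dom.J_vf hc).comp (T := lap) fun _ hu => sm_lap hu).trans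
        (Dom.sum fun i => dom_sd_lap m i)
    · exact fun u hu => sm_vf (fun i => sm_lap (hc' i)) hu
    · exact fun u hu => ContDiff.sum fun j _ =>
        (sm_vf (fun i => sm_sd (hc' i) j) (sm_sd hu j)).add
          (sm_vf (fun i => sm_sd (hc' i) j) (sm_sd hu j))
    · exact dom_vf fun i => (hc i).lap
    · exact fun j u hu => (sm_vf (fun i => sm_sd (hc' i) j) (sm_sd hu j)).add
          (sm_vf (fun i => sm_sd (hc' i) j) (sm_sd hu j))
    · exact fun u hu => sm_vf (fun i => sm_sd (hc' i) j) (sm_sd hu j)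
    · exact fun u hu => sm_vf (fun i => sm_sd (hc' i) j) (sm_sd hu j)
    · exact dom_vf_sd (fun i => (hc i).sd j) j
    · exact dom_vf_sd (fun i => (hc i).sd j) j
  · have e : ∀ u, Sm u → sd i (vf c u) = fun x => vf c (sd i u) x + vf (fun k => sd i (c k)) u x :=
      fun u hu => funext fun x => sd_vf hc' hu i x
    refine (Dom.of_le fun u hu x => by rw [e u hu]).trans
      (Dom.J_add (S := fun u => vf c (sd i u)) (T := vf fun k => sd i (c k)) ?_ ?_ ?_ ?_)
    · exact fun u hu => sm_vf hc' (sm_sd hu i)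
    · exact fun u hu => sm_vf (fun k => sm_sd (hc' k) i) hu
    · exact dom_vf_sd hc i
    · exact dom_vf fun k => (hc k).sd i

/-- Third derivatives are controlled by second derivatives of the tangential derivatives. -/
lemma TF.dom_third {ρ : Eu n → ℝ} (Z : TF ρ) (m : ℕ) (k i j : Fin n) :
    Dom (fun u => J m (sd k (sd i (sd j u)))) fun u x => ellR (m + 1) u x
      + ∑ s, ∑ l, ∑ j, J m (sd l (sd j (vf (Z.c s) u))) x := by
  have hS : ∀ u x, 0 ≤ ∑ s, ∑ l, ∑ j, J m (sd l (sd j (vf (Z.c s) u))) x := fun u x =>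
    Finset.sum_nonneg fun s _ => Finset.sum_nonneg fun l _ => Finset.sum_nonneg fun j _ =>
      J_nonneg _ _ _
  have hR : Dom (ellR (m + 1)) fun u x => ellR (m + 1) u x
      + ∑ s, ∑ l, ∑ j, J m (sd l (sd j (vf (Z.c s) u))) x :=
    Dom.of_le fun u _ x => le_add_of_nonneg_right (hS u x)
  obtain ⟨C, hC0, hC⟩ := Z.J_coer m
  have h1 : Dom (fun u => J m (sd k (sd i (sd j u)))) fun u x =>
      J m (lap (sd j u)) x + ∑ s, ∑ l, J m (vf (Z.c s) (sd l (sd j u))) x :=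
    ⟨C, hC0, fun u hu x => hC _ (sm_sd hu j) k i x⟩
  refine h1.trans (Dom.add (f := fun u => J m (lap (sd j u))) ?_ (Dom.sum fun s => Dom.sum fun l => ?_))
  · exact (Dom.of_le fun u hu x => by rw [← sd_lap hu]).trans ((dom_sd_lap m j).trans hR)
  · have hc' : ∀ i, Sm (Z.c s i) := fun i => (Z.bs s i).1
    have e : ∀ u, Sm u → vf (Z.c s) (sd l (sd j u)) = fun x => sd l (sd j (vf (Z.c s) u)) x
        - ((vf (fun i => sd j (Z.c s i)) (sd l u) x + vf (fun i => sd l (sd j (Z.c s i))) u x)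
          + vf (fun i => sd l (Z.c s i)) (sd j u) x) := fun u hu => by
      funext x
      have e1 : sd j (vf (Z.c s) u) = fun x => vf (Z.c s) (sd j u) x + vf (fun i => sd j (Z.c s i)) u x :=
        funext fun y => sd_vf hc' hu j y
      have hs1 := sm_vf hc' (sm_sd hu j)
      have hs2 := sm_vf (fun i => sm_sd (hc' i) j) hu
      rw [e1, sd_add hs1 hs2, sd_vf hc' (sm_sd hu j), sd_vf (fun i => sm_sd (hc' i) j) hu]
      ring
    refine (Dom.of_le fun u hu x => by rw [e u hu]).trans
      (Dom.J_sub (S := fun u => sd l (sd j (vf (Z.c s) u))) ?_ ?_ ?_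
        ((Dom.J_add (S := fun u x => vf (fun i => sd j (Z.c s i)) (sd l u) x
            + vf (fun i => sd l (sd j (Z.c s i))) u x)
          (T := fun u => vf (fun i => sd l (Z.c s i)) (sd j u)) ?_ ?_
          (Dom.J_add (S := fun u => vf (fun i => sd j (Z.c s i)) (sd l u))
            (T := vf (fun i => sd l (sd j (Z.c s i)))) ?_ ?_ ?_ ?_) ?_).trans hR))
    · exact fun u hu => sm_sd (sm_sd (sm_vf hc' hu) j) l
    · exact fun u hu => ((sm_vf (fun i => sm_sd (hc' i) j) (sm_sd hu l)).add
        (sm_vf (fun i => sm_sd (sm_sd (hc' i) j) l) hu)).add (sm_vf (fun i => sm_sd (hc' i) l) (sm_sd hu j))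
    · refine Dom.of_le fun u _ x => ?_
      refine le_trans ?_ (le_add_of_nonneg_left (ellR_nonneg _ _ _))
      refine (Finset.single_le_sum (f := fun j => J m (sd l (sd j (vf (Z.c s) u))) x)
        (fun j _ => J_nonneg _ _ _) (Finset.mem_univ j)).trans ?_
      refine (Finset.single_le_sum (f := fun l => ∑ j, J m (sd l (sd j (vf (Z.c s) u))) x)
        (fun l _ => Finset.sum_nonneg fun j _ => J_nonneg _ _ _) (Finset.mem_univ l)).trans ?_
      exact Finset.single_le_sum (f := fun s => ∑ l, ∑ j, J m (sd l (sd j (vf (Z.c s) u))) x)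
        (fun s _ => Finset.sum_nonneg fun l _ => Finset.sum_nonneg fun j _ => J_nonneg _ _ _)
        (Finset.mem_univ s)
    · exact fun u hu => (sm_vf (fun i => sm_sd (hc' i) j) (sm_sd hu l)).add
        (sm_vf (fun i => sm_sd (sm_sd (hc' i) j) l) hu)
    · exact fun u hu => sm_vf (fun i => sm_sd (hc' i) l) (sm_sd hu j)
    · exact fun u hu => sm_vf (fun i => sm_sd (hc' i) j) (sm_sd hu l)
    · exact fun u hu => sm_vf (fun i => sm_sd (sm_sd (hc' i) j) l) hu
    · exact dom_vf_sd (fun i => (Z.bs s i).sd j) l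
    · exact dom_vf fun i => ((Z.bs s i).sd j).sd l
    · exact dom_vf_sd (fun i => (Z.bs s i).sd l) j

/-- The integral of `⟨x⟩^{-2p} f` over the exterior domain. -/
def wI {n : ℕ} (ρ : Eu n → ℝ) (p : ℝ) (f : Eu n → ℝ) : ℝ≥0∞ :=
  ∫⁻ x in {x | 0 ≤ ρ x}, ENNReal.ofReal (jw p x ^ 2 * f x)

lemma wI_le {ρ : Eu n → ℝ} {p C : ℝ} (hC : 0 ≤ C) {f g : Eu n → ℝ} (h : ∀ x, f x ≤ C * g x) :
    wI ρ p f ≤ ENNReal.ofReal C * wI ρ p g := by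
  unfold wI
  rw [← lintegral_const_mul' _ _ ENNReal.ofReal_ne_top]
  refine lintegral_mono fun x => ?_
  rw [← ENNReal.ofReal_mul hC]
  refine ENNReal.ofReal_le_ofReal ?_
  have := mul_le_mul_of_nonneg_left (h x) (sq_nonneg (jw p x))
  linarith

lemma wI_mono {ρ : Eu n → ℝ} {p : ℝ} {f g : Eu n → ℝ} (h : ∀ x, f x ≤ g x) :
    wI ρ p f ≤ wI ρ p g := by
  have := wI_le (ρ := ρ) (p := p) zero_le_one (f := f) (g := g) fun x => by rw [one_mul]; exact h x
  simpa using this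

lemma wI_add_le {ρ : Eu n → ℝ} {p : ℝ} {f g : Eu n → ℝ} (hf : Continuous f) :
    wI ρ p (fun x => f x + g x) ≤ wI ρ p f + wI ρ p g := by
  unfold wI
  have hm : Measurable fun x => ENNReal.ofReal (jw p x ^ 2 * f x) :=
    (((sm_jw p).cont.pow 2).mul hf).measurable.ennreal_ofReal
  rw [← lintegral_add_left hm]
  refine lintegral_mono fun x => ?_
  rw [mul_add]
  exact ENNReal.ofReal_add_le

lemma wI_sum_le {ρ : Eu n → ℝ} {p : ℝ} {ι : Type*} (t : Finset ι) {f : ι → Eu n → ℝ}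
    (hf : ∀ s, Continuous (f s)) : wI ρ p (fun x => ∑ s ∈ t, f s x) ≤ ∑ s ∈ t, wI ρ p (f s) := by
  classical
  induction t using Finset.induction_on with
  | empty => simp [wI]
  | insert a t ha ih =>
      simp only [Finset.sum_insert ha]
      exact (wI_add_le (hf a)).trans (add_le_add le_rfl ih)

/-- Weighted elliptic regularity of arbitrary order, obtained from the second order estimate by applying
it to tangential derivatives. -/
lemma elliptic {ρ : Eu n → ℝ} (hρ : Sm ρ) (hg : ∀ x, ρ x = 0 → fderiv ℝ ρ x ≠ 0) (Z : TF ρ)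
    {p : ℝ} (hp : 0 ≤ p) : ∀ m : ℕ, ∃ C : ℝ, 0 ≤ C ∧ ∀ u : Eu n → ℝ, Sm u →
      (∀ x, ρ x = 0 → u x = 0) →
      wI ρ p (fun x => ∑ i, ∑ j, J m (sd i (sd j u)) x) ≤ ENNReal.ofReal C * wI ρ p (ellR m u)
  | 0 => by
      obtain ⟨C, h0, hC⟩ := elliptic_zero hρ hg Z hp
      refine ⟨C, h0, fun u hu hb => (hC u hu hb).trans (le_of_eq ?_)⟩
      unfold wI
      rw [← lintegral_const_mul' _ _ ENNReal.ofReal_ne_top]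
      refine lintegral_congr fun x => ?_
      rw [← ENNReal.ofReal_mul h0]
      rfl
  | m + 1 => by
      obtain ⟨C, hC0, hC⟩ := elliptic hρ hg Z hp m
      obtain ⟨C', hC'0, hC'⟩ := elliptic hρ hg Z hp 0
      obtain ⟨D, hD0, hD⟩ := Dom.sum fun i => Dom.sum fun j => Dom.sum fun k => Z.dom_third m k i j
      choose E hE0 hE using fun s => dom_ellR_vf (m := m) (Z.bs s)
      obtain ⟨D', hD'0, hD'⟩ : Dom (n := n) (ellR 0) (ellR (m + 1)) := by
        refine Dom.add (f := fun u => J 0 (lap u)) ?_ (Dom.sum fun i => ?_)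
        · exact Dom.of_le fun u _ x => (sq_le_J (m + 1) _ x).trans
            (le_add_of_nonneg_right (Finset.sum_nonneg fun i _ => J_nonneg _ _ _))
        · exact Dom.of_le fun u _ x => (sq_le_J (m + 1) _ x).trans (J_sd_le_ellR _ _ _ _)
      refine ⟨C' * D' + D * (1 + ∑ s, C * E s), ?_, fun u hu hb => ?_⟩
      · have : 0 ≤ ∑ s, C * E s := Finset.sum_nonneg fun s _ => mul_nonneg hC0 (hE0 s)
        positivity
      have hcZ : ∀ s i, Sm (Z.c s i) := fun s i => (Z.bs s i).1
      have hsplit : ∀ x, ∑ i, ∑ j, J (m + 1) (sd i (sd j u)) x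
          = (∑ i, ∑ j, J 0 (sd i (sd j u)) x) + ∑ i, ∑ j, ∑ k, J m (sd k (sd i (sd j u))) x := fun x => by
        simp only [← Finset.sum_add_distrib]
        rfl
      have hcont : Continuous fun x => ∑ i, ∑ j, J 0 (sd i (sd j u)) x :=
        continuous_finsetSum _ fun i _ => continuous_finsetSum _ fun j _ =>
          J_cont 0 (sm_sd (sm_sd hu j) i)
      have hcR : Continuous (ellR (m + 1) u) :=
        (J_cont _ (sm_lap hu)).add (continuous_finsetSum _ fun i _ => J_cont _ (sm_sd hu i))
      have hv : ∀ s, wI ρ p (fun x => ∑ l, ∑ j, J m (sd l (sd j (vf (Z.c s) u))) x)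
          ≤ ENNReal.ofReal (C * E s) * wI ρ p (ellR (m + 1) u) := fun s => by
        refine (hC _ (sm_vf (hcZ s) hu) fun x hx => Z.tang u hu hb s x hx).trans ?_
        rw [ENNReal.ofReal_mul hC0, mul_assoc]
        gcongr
        exact wI_le (hE0 s) (hE s u hu)
      have h3 : wI ρ p (fun x => ∑ i, ∑ j, ∑ k, J m (sd k (sd i (sd j u))) x)
          ≤ ENNReal.ofReal (D * (1 + ∑ s, C * E s)) * wI ρ p (ellR (m + 1) u) := by
        refine (wI_le hD0 (hD u hu)).trans ?_
        rw [ENNReal.ofReal_mul hD0, mul_assoc]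
        gcongr
        refine (wI_add_le hcR).trans ?_
        rw [ENNReal.ofReal_add zero_le_one (Finset.sum_nonneg fun s _ => mul_nonneg hC0 (hE0 s)),
          add_mul, ENNReal.ofReal_one, one_mul]
        gcongr
        refine (wI_sum_le _ fun s => ?_).trans ?_
        · exact continuous_finsetSum _ fun l _ => continuous_finsetSum _ fun j _ =>
            J_cont m (sm_sd (sm_sd (sm_vf (hcZ s) hu) j) l)
        · rw [ENNReal.ofReal_sum_of_nonneg fun s _ => mul_nonneg hC0 (hE0 s), Finset.sum_mul]
          exact Finset.sum_le_sum fun s _ => hv s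
      simp only [hsplit]
      refine (wI_add_le hcont).trans ?_
      rw [ENNReal.ofReal_add (by positivity) (mul_nonneg hD0 (add_nonneg zero_le_one
        (Finset.sum_nonneg fun s _ => mul_nonneg hC0 (hE0 s)))), add_mul]
      refine add_le_add ((hC' u hu hb).trans ?_) h3
      rw [ENNReal.ofReal_mul hC'0, mul_assoc]
      gcongr
      exact wI_le hD'0 (hD' u hu)
end

/-! ### Space-time calculus -/

section
variable {n : ℕ}

/-- The space-time coordinate vector in the direction `α`, with `α = 0` the time direction. -/
def ev (α : Fin (n + 1)) : ℝ × Eu n :=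
  if h : α = 0 then (1, 0) else (0, EuclideanSpace.single (α.pred h) 1)

lemma stx_diff {u : ℝ → Eu n → ℝ} (hu : SmoothTX u) :
    Differentiable ℝ fun p : ℝ × Eu n => u p.1 p.2 :=
  ContDiff.differentiable hu (by simp)

lemma stx_cont {u : ℝ → Eu n → ℝ} (hu : SmoothTX u) :
    Continuous fun p : ℝ × Eu n => u p.1 p.2 := ContDiff.continuous hu

lemma stx_slice {u : ℝ → Eu n → ℝ} (hu : SmoothTX u) (t : ℝ) : Sm (u t) :=
  ContDiff.comp (g := fun p : ℝ × Eu n => u p.1 p.2) hu (contDiff_const.prodMk contDiff_id)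

lemma stx_tslice {u : ℝ → Eu n → ℝ} (hu : SmoothTX u) (x : Eu n) :
    ContDiff ℝ (⊤ : ℕ∞) fun t => u t x :=
  ContDiff.comp (g := fun p : ℝ × Eu n => u p.1 p.2) hu (contDiff_id.prodMk contDiff_const)

lemma pd_zero (u : ℝ → Eu n → ℝ) : pd 0 u = td u := by simp [pd]

lemma pd_succ (i : Fin n) (u : ℝ → Eu n → ℝ) (t : ℝ) (x : Eu n) :
    pd i.succ u t x = sd i (u t) x := by simp [pd]

lemma pd_eq {u : ℝ → Eu n → ℝ} (hu : SmoothTX u) (α : Fin (n + 1)) (t : ℝ) (x : Eu n) :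
    pd α u t x = fderiv ℝ (fun p : ℝ × Eu n => u p.1 p.2) (t, x) (ev α) := by
  have hd := (stx_diff hu (t, x)).hasFDerivAt
  refine Fin.cases ?_ (fun i => ?_) α
  · rw [pd_zero]
    have h1 : HasDerivAt (fun s : ℝ => (s, x)) ((1 : ℝ), (0 : Eu n)) t :=
      (hasDerivAt_id t).prodMk (hasDerivAt_const t x)
    have h2 := HasFDerivAt.comp_hasDerivAt (f := fun s : ℝ => (s, x)) t hd h1
    have h3 : td u t x = _ := h2.deriv
    simp [ev, h3]
  · rw [pd_succ]
    have h1 : HasFDerivAt (fun y : Eu n => (t, y)) (ContinuousLinearMap.inr ℝ ℝ (Eu n)) x :=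
      hasFDerivAt_prodMk_right t x
    have h2 := HasFDerivAt.comp (f := fun y : Eu n => (t, y)) x hd h1
    have h3 : fderiv ℝ (u t) x = _ := h2.fderiv
    simp [sd, ev, h3]

lemma stx_pd {u : ℝ → Eu n → ℝ} (hu : SmoothTX u) (α : Fin (n + 1)) : SmoothTX (pd α u) := by
  have h : (fun p : ℝ × Eu n => pd α u p.1 p.2)
      = fun p => fderiv ℝ (fun p : ℝ × Eu n => u p.1 p.2) p (ev α) := by
    funext p; exact pd_eq hu α p.1 p.2
  unfold SmoothTX
  rw [h]
  exact (ContDiff.fderiv_right (m := (⊤ : ℕ∞)) hu (by simp)).clm_apply contDiff_const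

lemma stx_td {u : ℝ → Eu n → ℝ} (hu : SmoothTX u) : SmoothTX (td u) := pd_zero u ▸ stx_pd hu 0

lemma stx_tdIter {u : ℝ → Eu n → ℝ} (hu : SmoothTX u) (j : ℕ) : SmoothTX (td^[j] u) := by
  induction j with
  | zero => exact hu
  | succ j ih => rw [Function.iterate_succ_apply']; exact stx_td ih

lemma stx_sd {u : ℝ → Eu n → ℝ} (hu : SmoothTX u) (i : Fin n) :
    SmoothTX fun t x => sd i (u t) x := by
  have := stx_pd hu i.succ
  simpa only [SmoothTX, pd_succ] using this

lemma stx_static {v : Eu n → ℝ} (hv : Sm v) : SmoothTX fun _ x => v x :=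
  ContDiff.comp (g := v) hv contDiff_snd

lemma stx_add {u v : ℝ → Eu n → ℝ} (hu : SmoothTX u) (hv : SmoothTX v) :
    SmoothTX fun t x => u t x + v t x := ContDiff.add hu hv
lemma stx_sub {u v : ℝ → Eu n → ℝ} (hu : SmoothTX u) (hv : SmoothTX v) :
    SmoothTX fun t x => u t x - v t x := ContDiff.sub hu hv
lemma stx_mul {u v : ℝ → Eu n → ℝ} (hu : SmoothTX u) (hv : SmoothTX v) :
    SmoothTX fun t x => u t x * v t x := ContDiff.mul hu hv
lemma stx_sum {ι : Type*} (s : Finset ι) {u : ι → ℝ → Eu n → ℝ} (hu : ∀ k, SmoothTX (u k)) :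
    SmoothTX fun t x => ∑ k ∈ s, u k t x := ContDiff.sum fun k _ => hu k
lemma stx_const (c : ℝ) : SmoothTX fun (_ : ℝ) (_ : Eu n) => c := contDiff_const

lemma pd_add {u v : ℝ → Eu n → ℝ} (hu : SmoothTX u) (hv : SmoothTX v) (α : Fin (n + 1))
    (t : ℝ) (x : Eu n) : pd α (fun t x => u t x + v t x) t x = pd α u t x + pd α v t x := by
  rw [pd_eq (stx_add hu hv), pd_eq hu, pd_eq hv, fderiv_fun_add (stx_diff hu _) (stx_diff hv _)]
  rfl

lemma pd_sub {u v : ℝ → Eu n → ℝ} (hu : SmoothTX u) (hv : SmoothTX v) (α : Fin (n + 1))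
    (t : ℝ) (x : Eu n) : pd α (fun t x => u t x - v t x) t x = pd α u t x - pd α v t x := by
  rw [pd_eq (stx_sub hu hv), pd_eq hu, pd_eq hv, fderiv_fun_sub (stx_diff hu _) (stx_diff hv _)]
  rfl

lemma pd_mul {u v : ℝ → Eu n → ℝ} (hu : SmoothTX u) (hv : SmoothTX v) (α : Fin (n + 1))
    (t : ℝ) (x : Eu n) :
    pd α (fun t x => u t x * v t x) t x = u t x * pd α v t x + pd α u t x * v t x := by
  rw [pd_eq (stx_mul hu hv), pd_eq hu, pd_eq hv, fderiv_fun_mul (stx_diff hu _) (stx_diff hv _)]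
  simp [mul_comm]

lemma pd_sum {ι : Type*} (s : Finset ι) {u : ι → ℝ → Eu n → ℝ} (hu : ∀ k, SmoothTX (u k))
    (α : Fin (n + 1)) (t : ℝ) (x : Eu n) :
    pd α (fun t x => ∑ k ∈ s, u k t x) t x = ∑ k ∈ s, pd α (u k) t x := by
  rw [pd_eq (stx_sum s hu), fderiv_fun_sum (fun k _ => stx_diff (hu k) _)]
  simp [pd_eq (hu _)]

lemma pd_const (c : ℝ) (α : Fin (n + 1)) (t : ℝ) (x : Eu n) :
    pd α (fun _ _ => c) t x = 0 := by
  rw [pd_eq (stx_const c)]; simp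

lemma td_static (v : Eu n → ℝ) (t : ℝ) (x : Eu n) : td (fun _ x => v x) t x = 0 := by
  simp [td]

lemma pd_comm {u : ℝ → Eu n → ℝ} (hu : SmoothTX u) (α β : Fin (n + 1)) :
    pd α (pd β u) = pd β (pd α u) := by
  funext t x
  have key : ∀ a b : Fin (n + 1), pd a (pd b u) t x
      = fderiv ℝ (fderiv ℝ (fun p : ℝ × Eu n => u p.1 p.2)) (t, x) (ev a) (ev b) := by
    intro a b
    have hd : DifferentiableAt ℝ (fderiv ℝ (fun p : ℝ × Eu n => u p.1 p.2)) (t, x) :=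
      ((ContDiff.fderiv_right (m := (⊤ : ℕ∞)) hu (by simp)).differentiable (by simp)) _
    rw [pd_eq (stx_pd hu b)]
    have h : (fun p : ℝ × Eu n => pd b u p.1 p.2)
        = fun p => fderiv ℝ (fun p : ℝ × Eu n => u p.1 p.2) p (ev b) := by
      funext p; exact pd_eq hu b p.1 p.2
    rw [h, fderiv_clm_apply hd (differentiableAt_const _)]
    simp
  rw [key, key]
  have hs : IsSymmSndFDerivAt ℝ (fun p : ℝ × Eu n => u p.1 p.2) (t, x) :=
    (ContDiff.contDiffAt hu).isSymmSndFDerivAt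
    (by simp only [minSmoothness_of_isRCLikeNormedField]; exact WithTop.coe_le_coe.2 le_top)
  exact hs _ _

/-- A function vanishing at a spatial point for all `t ≥ 0` has vanishing time derivative there,
also at `t = 0`, where the two-sided derivative equals the one from the right. -/
lemma td_eq_zero {u : ℝ → Eu n → ℝ} (hu : SmoothTX u) {x : Eu n}
    (h0 : ∀ t, 0 ≤ t → u t x = 0) {t : ℝ} (ht : 0 ≤ t) : td u t x = 0 := by
  have hd : HasDerivAt (fun s => u s x) (td u t x) t :=
    ((stx_tslice hu x).differentiable (by simp) t).hasDerivAt
  have h1 : HasDerivWithinAt (fun s => u s x) (td u t x) (Ici t) t := hd.hasDerivWithinAt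
  have h2 : HasDerivWithinAt (fun s => u s x) 0 (Ici t) t := by
    refine (hasDerivWithinAt_const t (Ici t) (0 : ℝ)).congr (fun s hs => ?_) (h0 t ht)
    exact h0 s (le_trans ht hs)
  exact (uniqueDiffWithinAt_Ici t).eq_deriv _ h1 h2

/-- Space-time divergence inequality on `[0, τ] × {0 ≤ ρ}` for a compactly supported field
`(P, V)` whose spatial part does not point into the domain. -/
lemma spacetime_div {ρ : Eu n → ℝ} (hρ : Sm ρ) (hg : ∀ x, ρ x = 0 → fderiv ℝ ρ x ≠ 0)
    {P : ℝ → Eu n → ℝ} (hP : SmoothTX P) {V : Fin n → ℝ → Eu n → ℝ} (hV : ∀ i, SmoothTX (V i))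
    {K : Set (Eu n)} (hK : IsCompact K) (hPK : ∀ t x, -1 < t → x ∉ K → P t x = 0)
    (hVK : ∀ i t x, 0 ≤ t → x ∉ K → V i t x = 0)
    (hb : ∀ t x, 0 ≤ t → ρ x = 0 → ∑ i, V i t x * sd i ρ x ≤ 0)
    {q r : ℝ → Eu n → ℝ} (hq : Continuous fun p : ℝ × Eu n => q p.1 p.2)
    (hqK : ∀ t x, 0 ≤ t → x ∉ K → q t x = 0)
    (hle : ∀ t x, 0 ≤ t → 0 ≤ ρ x → td P t x + ∑ i, sd i (V i t) x + q t x ≤ r t x)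
    {τ : ℝ} (hτ : 0 ≤ τ) :
    ENNReal.ofReal ((∫ x in {x | 0 ≤ ρ x}, P τ x)
        + ∫ t in Icc 0 τ, ∫ x in {x | 0 ≤ ρ x}, q t x)
      ≤ ENNReal.ofReal (∫ x in {x | 0 ≤ ρ x}, P 0 x)
        + ∫⁻ t in Icc 0 τ, ∫⁻ x in {x | 0 ≤ ρ x}, ENNReal.ofReal (r t x) := by
  set S : Set (Eu n) := {x | 0 ≤ ρ x} with hS
  have hSm : MeasurableSet S := measurableSet_ext hρ
  have hsupp : ∀ {w : ℝ → Eu n → ℝ}, (Continuous fun p : ℝ × Eu n => w p.1 p.2) →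
      (∀ t x, 0 ≤ t → x ∉ K → w t x = 0) →
      Integrable (fun p : ℝ × Eu n => w p.1 p.2)
        ((volume.restrict (Icc 0 τ)).prod (volume.restrict S)) := by
    intro w hw hwK
    rw [Measure.prod_restrict]
    have h1 : IntegrableOn (fun p : ℝ × Eu n => w p.1 p.2) (Icc 0 τ ×ˢ K)
        (volume.prod volume) :=
      hw.continuousOn.integrableOn_compact (isCompact_Icc.prod hK)
    refine (h1.of_forall_sdiff_eq_zero (s := Icc 0 τ ×ˢ K) (t := Icc 0 τ ×ˢ univ)
      (measurableSet_Icc.prod MeasurableSet.univ) ?_).mono_set (prod_mono subset_rfl (subset_univ _))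
    rintro ⟨t, x⟩ ⟨h2, h3⟩
    exact hwK t x h2.1.1 fun hx => h3 ⟨h2.1, hx⟩
  have hslice : ∀ {w : Eu n → ℝ}, Continuous w → (∀ x, x ∉ K → w x = 0) →
      IntegrableOn w S := fun hw h0 =>
    (hw.integrable_of_hasCompactSupport (HasCompactSupport.intro hK h0)).integrableOn
  have htdK : ∀ t x, 0 ≤ t → x ∉ K → td P t x = 0 := by
    intro t x ht hx
    have : (fun s => P s x) =ᶠ[𝓝 t] fun _ => (0 : ℝ) := by
      filter_upwards [Ioi_mem_nhds (show (-1 : ℝ) < t by linarith)] with s hs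
      exact hPK s x hs hx
    simp [td, this.deriv_eq]
  have hdc : Continuous fun p : ℝ × Eu n => ∑ i, sd i (V i p.1) p.2 :=
    stx_cont (stx_sum Finset.univ fun i => stx_sd (hV i) i)
  have hdK : ∀ t x, 0 ≤ t → x ∉ K → ∑ i, sd i (V i t) x = 0 := by
    intro t x ht hx
    refine Finset.sum_eq_zero fun i _ => ?_
    have : V i t =ᶠ[𝓝 x] fun _ => (0 : ℝ) := by
      filter_upwards [hK.isClosed.isOpen_compl.mem_nhds hx] with y hy
      exact hVK i t y ht hy
    rw [(sd_eq_of_eventuallyEq this i).eq_of_nhds, sd_const]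
  have hI1 := hsupp (w := td P) (stx_cont (stx_td hP)) htdK
  have hI2 := hsupp (w := fun t x => ∑ i, sd i (V i t) x) hdc hdK
  have hI3 := hsupp hq hqK
  have hftc : (∫ x in S, P τ x) - ∫ x in S, P 0 x
      = ∫ t in Icc 0 τ, ∫ x in S, td P t x := by
    rw [← integral_sub (hslice (stx_slice hP τ).cont fun x hx => hPK τ x (by linarith) hx)
      (hslice (stx_slice hP 0).cont fun x hx => hPK 0 x (by norm_num) hx)]
    rw [integral_integral_swap hI1]
    refine integral_congr_ae (Eventually.of_forall fun x => ?_)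
    simp only
    rw [integral_Icc_eq_integral_Ioc, ← intervalIntegral.integral_of_le hτ]
    refine (intervalIntegral.integral_eq_sub_of_hasDerivAt (f := fun t => P t x) (fun t _ =>
      ((stx_tslice hP x).differentiable (by simp) t).hasDerivAt) ?_).symm
    exact ((stx_tslice (stx_td hP) x).continuous).intervalIntegrable _ _
  have hdiv : 0 ≤ ∫ t in Icc 0 τ, ∫ x in S, ∑ i, sd i (V i t) x := by
    refine setIntegral_nonneg measurableSet_Icc fun t ht => ?_
    have := integral_div_nonpos hρ hg (V := fun i x => - V i t x)
      (fun i => (stx_slice (hV i) t).neg) hK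
      (fun i x hx => by rw [hVK i t x ht.1 hx, neg_zero])
      (fun x hx => by
        have := hb t x ht.1 hx
        simp only [neg_mul, Finset.sum_neg_distrib]; linarith)
    simp only [sd_neg, Finset.sum_neg_distrib] at this
    rw [integral_neg] at this
    linarith
  have hI12 := hI1.add hI2
  have hI123 := hI12.add hI3
  have htot : ∫ p : ℝ × Eu n, (td P p.1 p.2 + ∑ i, sd i (V i p.1) p.2 + q p.1 p.2)
      ∂((volume.restrict (Icc 0 τ)).prod (volume.restrict S))
      = (∫ t in Icc 0 τ, ∫ x in S, td P t x) + (∫ t in Icc 0 τ, ∫ x in S, ∑ i, sd i (V i t) x)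
        + ∫ t in Icc 0 τ, ∫ x in S, q t x := by
    rw [← integral_prod _ hI1, ← integral_prod _ hI2, ← integral_prod _ hI3,
      ← integral_add hI1 hI2, ← integral_add (by exact hI12) hI3]
  have hle' : (∫ x in S, P τ x) + (∫ t in Icc 0 τ, ∫ x in S, q t x)
      ≤ (∫ x in S, P 0 x) + ∫ p : ℝ × Eu n, (td P p.1 p.2 + ∑ i, sd i (V i p.1) p.2 + q p.1 p.2)
      ∂((volume.restrict (Icc 0 τ)).prod (volume.restrict S)) := by
    rw [htot, ← hftc]; linarith
  refine (ENNReal.ofReal_le_ofReal hle').trans (ENNReal.ofReal_add_le.trans ?_)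
  gcongr
  refine (ofReal_integral_le hI123).trans ?_
  rw [lintegral_prod]
  swap
  · exact (hI123.aestronglyMeasurable.aemeasurable).ennreal_ofReal
  refine setLIntegral_mono' measurableSet_Icc fun t ht => ?_
  refine setLIntegral_mono' hSm fun x hx => ?_
  exact ENNReal.ofReal_le_ofReal (hle t x ht.1 hx)
end

/-! ### The multiplier identity -/

/-- The algebra of the multiplier identity: the second derivatives `s` of the solution enter only
through `∑ g s`, by the symmetry of `g` and `s`. -/
lemma mult_alg {ι : Type*} [Fintype ι] (g s dY : ι → ι → ℝ) (dg : ι → ι → ι → ℝ)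
    (p Y dw : ι → ℝ) (w f : ℝ) (hg : ∀ a b, g a b = g b a) (hs : ∀ a b, s a b = s b a) :
    ∑ α, ((∑ β, (g α β * s α β + dg α α β * p β)) * (∑ γ, Y γ * p γ + w * f)
        + (∑ β, g α β * p β) * (∑ γ, (Y γ * s α γ + dY α γ * p γ) + (w * p α + dw α * f))
        - ((1 / 2 * Y α) * (∑ a, ∑ b, ((g a b * p a) * s α b + (g a b * s α a + dg α a b * p a) * p b))
          + (1 / 2 * dY α α) * ∑ a, ∑ b, g a b * p a * p b))
      = (∑ α, ∑ β, g α β * s α β) * (∑ γ, Y γ * p γ + w * f)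
        + (∑ α, ∑ β, dg α α β * p β) * (∑ γ, Y γ * p γ + w * f)
        + ∑ α, (∑ β, g α β * p β) * (∑ γ, dY α γ * p γ)
        + (∑ α, (∑ β, g α β * p β) * dw α) * f
        + w * (∑ a, ∑ b, g a b * p a * p b)
        - 1 / 2 * (∑ α, dY α α) * (∑ a, ∑ b, g a b * p a * p b)
        - 1 / 2 * ∑ γ, Y γ * ∑ a, ∑ b, dg γ a b * p a * p b := by
  have hQ : ∀ α, ∑ a, ∑ b, ((g a b * p a) * s α b + (g a b * s α a + dg α a b * p a) * p b)
      = 2 * (∑ a, (∑ b, g a b * p b) * s a α) + ∑ a, ∑ b, dg α a b * p a * p b := by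
    intro α
    have h1 : ∑ a, ∑ b, (g a b * p a) * s α b = ∑ a, (∑ b, g a b * p b) * s a α := by
      rw [Finset.sum_comm]
      refine Finset.sum_congr rfl fun a _ => ?_
      rw [Finset.sum_mul]
      refine Finset.sum_congr rfl fun b _ => ?_
      rw [hg b a, hs α a]
    have h2 : ∑ a, ∑ b, g a b * s α a * p b = ∑ a, (∑ b, g a b * p b) * s a α := by
      refine Finset.sum_congr rfl fun a _ => ?_
      rw [Finset.sum_mul]
      refine Finset.sum_congr rfl fun b _ => ?_
      rw [hs α a]; ring
    have h3 : ∑ a, ∑ b, ((g a b * p a) * s α b + (g a b * s α a + dg α a b * p a) * p b)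
      = ∑ a, ∑ b, (g a b * p a) * s α b + ∑ a, ∑ b, g a b * s α a * p b
        + ∑ a, ∑ b, dg α a b * p a * p b := by
      simp only [← Finset.sum_add_distrib]
      refine Finset.sum_congr rfl fun a _ => Finset.sum_congr rfl fun b _ => ?_
      ring
    rw [h3, h1, h2]; ring
  simp only [hQ]
  have h4 : ∑ α, (∑ β, g α β * p β) * (∑ γ, Y γ * s α γ)
      = ∑ γ, Y γ * ∑ a, (∑ b, g a b * p b) * s a γ := by
    simp only [Finset.mul_sum]
    rw [Finset.sum_comm]
    refine Finset.sum_congr rfl fun a _ => Finset.sum_congr rfl fun b _ => ?_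
    ring
  have h5 : ∑ α, (∑ β, g α β * p β) * p α = ∑ a, ∑ b, g a b * p a * p b := by
    refine Finset.sum_congr rfl fun a _ => ?_
    rw [Finset.sum_mul]
    refine Finset.sum_congr rfl fun b _ => ?_
    ring
  set Z := ∑ γ, Y γ * p γ + w * f with hZ
  set Q := ∑ a, ∑ b, g a b * p a * p b with hQd
  have h6 : ∀ α, ((∑ β, (g α β * s α β + dg α α β * p β)) * Z
        + (∑ β, g α β * p β) * (∑ γ, (Y γ * s α γ + dY α γ * p γ) + (w * p α + dw α * f))
        - ((1 / 2 * Y α) * (2 * (∑ a, (∑ b, g a b * p b) * s a α) + ∑ a, ∑ b, dg α a b * p a * p b)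
          + (1 / 2 * dY α α) * Q))
      = (∑ β, g α β * s α β) * Z + (∑ β, dg α α β * p β) * Z
        + (∑ β, g α β * p β) * (∑ γ, Y γ * s α γ) + (∑ β, g α β * p β) * (∑ γ, dY α γ * p γ)
        + w * ((∑ β, g α β * p β) * p α) + ((∑ β, g α β * p β) * dw α) * f
        - Y α * (∑ a, (∑ b, g a b * p b) * s a α) - 1 / 2 * (Y α * ∑ a, ∑ b, dg α a b * p a * p b)
        - 1 / 2 * dY α α * Q := by
    intro α
    simp only [Finset.sum_add_distrib]
    ring
  simp only [h6]
  simp only [Finset.sum_add_distrib, Finset.sum_sub_distrib, ← Finset.mul_sum, ← Finset.sum_mul]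
  rw [h4, h5]
  ring

/-- The Minkowski metric `diag(1, -1, -1, -1, -1)`. -/
def mk (α β : Fin 5) : ℝ := if α = β then (if α = 0 then 1 else -1) else 0

lemma mk_symm (α β : Fin 5) : mk α β = mk β α := by
  unfold mk
  by_cases h : α = β
  · subst h; rfl
  · rw [if_neg h, if_neg (Ne.symm h)]

lemma mk_sum (a b : Fin 5 → ℝ) :
    ∑ α, ∑ β, mk α β * a α * b β = a 0 * b 0 - ∑ i : Fin 4, a i.succ * b i.succ := by
  simp only [mk, ite_mul, zero_mul, Finset.sum_ite_eq, Finset.mem_univ, if_true]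
  rw [Fin.sum_univ_succ]
  simp [Fin.succ_ne_zero]
  ring

lemma mk_sum' (c : Fin 5 → Fin 5 → ℝ) :
    ∑ α, ∑ β, mk α β * c α β = c 0 0 - ∑ i : Fin 4, c i.succ i.succ := by
  simp only [mk, ite_mul, zero_mul, Finset.sum_ite_eq, Finset.mem_univ, if_true]
  rw [Fin.sum_univ_succ]
  simp [Fin.succ_ne_zero]
  ring

/-- The perturbed inverse metric, `□_h = ∑ g^{αβ} ∂_α ∂_β`. -/
def gm (h : Fin 5 → Fin 5 → ℝ → Eu 4 → ℝ) (α β : Fin 5) : ℝ → Eu 4 → ℝ :=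
  fun t x => mk α β + h α β t x

section
variable {h : Fin 5 → Fin 5 → ℝ → Eu 4 → ℝ}

lemma stx_gm (hh : ∀ α β, SmoothTX (h α β)) (α β : Fin 5) : SmoothTX (gm h α β) :=
  stx_add (stx_const _) (hh α β)

lemma pd_gm (hh : ∀ α β, SmoothTX (h α β)) (γ α β : Fin 5) (t : ℝ) (x : Eu 4) :
    pd (n := 4) γ (gm h α β) t x = pd (n := 4) γ (h α β) t x := by
  unfold gm
  rw [pd_add (u := fun _ _ => mk α β) (stx_const _) (hh α β), pd_const, zero_add]

lemma boxH_eq (ψ : ℝ → Eu 4 → ℝ) (t : ℝ) (x : Eu 4) :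
    boxH h ψ t x = ∑ α, ∑ β, gm h α β t x * pd (n := 4) α (pd (n := 4) β ψ) t x := by
  unfold boxH gm
  simp only [add_mul, Finset.sum_add_distrib]
  rw [mk_sum' fun α β => pd (n := 4) α (pd (n := 4) β ψ) t x]
  congr 1

/-- The multiplier `∑ Y^γ ∂_γ ψ + ω ψ`. -/
def mulZ (Y : Fin 5 → ℝ → Eu 4 → ℝ) (ω ψ : ℝ → Eu 4 → ℝ) : ℝ → Eu 4 → ℝ :=
  fun t x => ∑ γ, Y γ t x * pd (n := 4) γ ψ t x + ω t x * ψ t x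

/-- The quadratic form `∑ g^{αβ} ∂_α ψ ∂_β ψ`. -/
def mulQ (h : Fin 5 → Fin 5 → ℝ → Eu 4 → ℝ) (ψ : ℝ → Eu 4 → ℝ) : ℝ → Eu 4 → ℝ :=
  fun t x => ∑ a, ∑ b, gm h a b t x * pd (n := 4) a ψ t x * pd (n := 4) b ψ t x

/-- The energy-momentum current of the multiplier `mulZ Y ω ψ`. -/
def mulP (h : Fin 5 → Fin 5 → ℝ → Eu 4 → ℝ) (Y : Fin 5 → ℝ → Eu 4 → ℝ) (ω ψ : ℝ → Eu 4 → ℝ)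
    (α : Fin 5) : ℝ → Eu 4 → ℝ :=
  fun t x => (∑ β, gm h α β t x * pd (n := 4) β ψ t x) * mulZ Y ω ψ t x
    - (1 / 2 * Y α t x) * mulQ h ψ t x

lemma stx_mulZ {Y : Fin 5 → ℝ → Eu 4 → ℝ} {ω ψ : ℝ → Eu 4 → ℝ} (hY : ∀ γ, SmoothTX (Y γ))
    (hω : SmoothTX ω) (hψ : SmoothTX ψ) : SmoothTX (mulZ Y ω ψ) :=
  stx_add (stx_sum _ fun γ => stx_mul (hY γ) (stx_pd hψ γ)) (stx_mul hω hψ)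

lemma stx_mulQ {ψ : ℝ → Eu 4 → ℝ} (hh : ∀ α β, SmoothTX (h α β)) (hψ : SmoothTX ψ) :
    SmoothTX (mulQ h ψ) :=
  stx_sum _ fun a => stx_sum _ fun b => stx_mul (stx_mul (stx_gm hh a b) (stx_pd hψ a)) (stx_pd hψ b)

lemma stx_mulP {Y : Fin 5 → ℝ → Eu 4 → ℝ} {ω ψ : ℝ → Eu 4 → ℝ} (hh : ∀ α β, SmoothTX (h α β))
    (hY : ∀ γ, SmoothTX (Y γ)) (hω : SmoothTX ω) (hψ : SmoothTX ψ) (α : Fin 5) :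
    SmoothTX (mulP h Y ω ψ α) :=
  stx_sub (stx_mul (stx_sum _ fun β => stx_mul (stx_gm hh α β) (stx_pd hψ β))
    (stx_mulZ hY hω hψ)) (stx_mul (stx_mul (stx_const _) (hY α)) (stx_mulQ hh hψ))

/-- Divergence of the energy-momentum current. -/
lemma div_mulP {Y : Fin 5 → ℝ → Eu 4 → ℝ} {ω ψ : ℝ → Eu 4 → ℝ} (hh : ∀ α β, SmoothTX (h α β))
    (hsym : ∀ α β t x, h α β t x = h β α t x)
    (hY : ∀ γ, SmoothTX (Y γ)) (hω : SmoothTX ω) (hψ : SmoothTX ψ) (t : ℝ) (x : Eu 4) :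
    ∑ α, pd (n := 4) α (mulP h Y ω ψ α) t x
      = boxH h ψ t x * mulZ Y ω ψ t x
        + (∑ α, ∑ β, pd (n := 4) α (h α β) t x * pd (n := 4) β ψ t x) * mulZ Y ω ψ t x
        + ∑ α, (∑ β, gm h α β t x * pd (n := 4) β ψ t x)
            * (∑ γ, pd (n := 4) α (Y γ) t x * pd (n := 4) γ ψ t x)
        + (∑ α, (∑ β, gm h α β t x * pd (n := 4) β ψ t x) * pd (n := 4) α ω t x) * ψ t x
        + ω t x * mulQ h ψ t x
        - 1 / 2 * (∑ α, pd (n := 4) α (Y α) t x) * mulQ h ψ t x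
        - 1 / 2 * ∑ γ, Y γ t x * ∑ a, ∑ b,
            pd (n := 4) γ (h a b) t x * pd (n := 4) a ψ t x * pd (n := 4) b ψ t x := by
  have hp : ∀ α, SmoothTX (pd (n := 4) α ψ) := stx_pd hψ
  have hgs : ∀ α β, gm h α β t x = gm h β α t x := fun α β => by
    unfold gm; rw [mk_symm, hsym]
  have key := mult_alg (fun α β => gm h α β t x) (fun α β => pd (n := 4) α (pd (n := 4) β ψ) t x)
    (fun α γ => pd (n := 4) α (Y γ) t x) (fun γ a b => pd (n := 4) γ (h a b) t x)
    (fun α => pd (n := 4) α ψ t x) (fun α => Y α t x) (fun α => pd (n := 4) α ω t x) (ω t x) (ψ t x)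
    hgs (fun a b => by rw [pd_comm hψ])
  rw [boxH_eq]
  unfold mulZ mulQ
  rw [← key]
  refine Finset.sum_congr rfl fun α _ => ?_
  have hG : ∀ a b, SmoothTX (fun t x => gm h a b t x * pd (n := 4) b ψ t x) := fun a b =>
    stx_mul (stx_gm hh a b) (hp b)
  have hGa : ∀ a b, SmoothTX (fun t x => gm h a b t x * pd (n := 4) a ψ t x) := fun a b =>
    stx_mul (stx_gm hh a b) (hp a)
  have e1 : pd (n := 4) α (fun t x => ∑ β, gm h α β t x * pd (n := 4) β ψ t x) t x
      = ∑ β, (gm h α β t x * pd (n := 4) α (pd (n := 4) β ψ) t x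
        + pd (n := 4) α (h α β) t x * pd (n := 4) β ψ t x) := by
    rw [pd_sum _ fun β => hG α β]
    refine Finset.sum_congr rfl fun β _ => ?_
    rw [pd_mul (stx_gm hh α β) (hp β), pd_gm hh]
  have e2 : pd (n := 4) α (mulZ Y ω ψ) t x
      = ∑ γ, (Y γ t x * pd (n := 4) α (pd (n := 4) γ ψ) t x
          + pd (n := 4) α (Y γ) t x * pd (n := 4) γ ψ t x)
        + (ω t x * pd (n := 4) α ψ t x + pd (n := 4) α ω t x * ψ t x) := by
    unfold mulZ
    rw [pd_add (stx_sum _ fun γ => stx_mul (hY γ) (hp γ)) (stx_mul hω hψ),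
      pd_sum _ fun γ => stx_mul (hY γ) (hp γ), pd_mul hω hψ]
    congr 1
    refine Finset.sum_congr rfl fun γ _ => ?_
    rw [pd_mul (hY γ) (hp γ)]
  have e3 : pd (n := 4) α (mulQ h ψ) t x
      = ∑ a, ∑ b, ((gm h a b t x * pd (n := 4) a ψ t x) * pd (n := 4) α (pd (n := 4) b ψ) t x
        + (gm h a b t x * pd (n := 4) α (pd (n := 4) a ψ) t x
          + pd (n := 4) α (h a b) t x * pd (n := 4) a ψ t x) * pd (n := 4) b ψ t x) := by
    unfold mulQ
    rw [pd_sum _ fun a => stx_sum _ fun b => stx_mul (hGa a b) (hp b)]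
    refine Finset.sum_congr rfl fun a _ => ?_
    rw [pd_sum _ fun b => stx_mul (hGa a b) (hp b)]
    refine Finset.sum_congr rfl fun b _ => ?_
    rw [pd_mul (hGa a b) (hp b), pd_mul (stx_gm hh a b) (hp a), pd_gm hh]
  have e4 : pd (n := 4) α (fun t x => 1 / 2 * Y α t x) t x = 1 / 2 * pd (n := 4) α (Y α) t x := by
    rw [pd_mul (u := fun _ _ => (1 / 2 : ℝ)) (stx_const _) (hY α), pd_const]; ring
  unfold mulP
  rw [pd_sub (stx_mul (stx_sum _ fun β => hG α β) (stx_mulZ hY hω hψ))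
    (stx_mul (stx_mul (stx_const _) (hY α)) (stx_mulQ hh hψ)),
    pd_mul (stx_sum _ fun β => hG α β) (stx_mulZ hY hω hψ),
    pd_mul (stx_mul (stx_const _) (hY α)) (stx_mulQ hh hψ), e1, e2, e3, e4]
  unfold mulZ mulQ
  ring
end

/-! ### `L²` norms -/

section
variable {n : ℕ}

lemma L2x_sq (S : Set (Eu n)) (f : Eu n → ℝ) :
    L2x S f ^ 2 = ∫⁻ x in S, ENNReal.ofReal (f x ^ 2) := by
  unfold L2x
  rw [eLpNorm_eq_lintegral_rpow_enorm_toReal (by norm_num) (by norm_num)]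
  rw [← ENNReal.rpow_natCast, ← ENNReal.rpow_mul]
  norm_num
  refine lintegral_congr fun x => ?_
  rw [← ofReal_norm, ← ENNReal.ofReal_pow (norm_nonneg _), Real.norm_eq_abs, sq_abs]

lemma L2st_sq {T : ℝ} (S : Set (Eu n)) {u : ℝ → Eu n → ℝ}
    (hu : Measurable fun p : ℝ × Eu n => u p.1 p.2) :
    L2st T S u ^ 2 = ∫⁻ t in Icc 0 T, ∫⁻ x in S, ENNReal.ofReal (u t x ^ 2) := by
  unfold L2st
  rw [eLpNorm_eq_lintegral_rpow_enorm_toReal (by norm_num) (by norm_num)]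
  rw [← ENNReal.rpow_natCast, ← ENNReal.rpow_mul]
  norm_num
  rw [lintegral_prod _ (by fun_prop)]
  refine lintegral_congr fun t => lintegral_congr fun x => ?_
  rw [← ofReal_norm, ← ENNReal.ofReal_pow (norm_nonneg _), Real.norm_eq_abs, sq_abs]

lemma lintegral_mul_le_L2 {S : Set (Eu n)} {f g : Eu n → ℝ} (hf : Measurable f)
    (hg : Measurable g) :
    ∫⁻ x in S, ENNReal.ofReal (|f x| * |g x|) ≤ L2x S f * L2x S g := by
  have h := ENNReal.lintegral_mul_le_Lp_mul_Lq (volume.restrict S) Real.HolderConjugate.two_two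
    (f := fun x => ‖f x‖ₑ) (g := fun x => ‖g x‖ₑ) (by fun_prop) (by fun_prop)
  unfold L2x
  rw [eLpNorm_eq_lintegral_rpow_enorm_toReal (by norm_num) (by norm_num),
    eLpNorm_eq_lintegral_rpow_enorm_toReal (by norm_num) (by norm_num)]
  refine le_trans (le_of_eq ?_) (h.trans (le_of_eq ?_))
  · refine lintegral_congr fun x => ?_
    simp [← ofReal_norm, ENNReal.ofReal_mul]
  · simp

lemma L2x_mono {S : Set (Eu n)} {f g : Eu n → ℝ} (hS : MeasurableSet S)
    (h : ∀ x ∈ S, |f x| ≤ |g x|) :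
    L2x S f ≤ L2x S g := by
  unfold L2x
  refine eLpNorm_mono_ae ?_
  filter_upwards [ae_restrict_mem hS] with x hx
  simpa using h x hx

lemma ennreal_sqrt_le {a b : ℝ≥0∞} (h : a ^ 2 ≤ b ^ 2) : a ≤ b := by
  have := (ENNReal.pow_le_pow_left_iff (n := 2) (by norm_num)).1 h
  exact this
end

/-! ### The energy estimate -/

section
variable {h : Fin 5 → Fin 5 → ℝ → Eu 4 → ℝ}

lemma gradMag_sq (ψ : ℝ → Eu 4 → ℝ) (t : ℝ) (x : Eu 4) :
    gradMag ψ t x ^ 2 = ∑ α, pd (n := 4) α ψ t x ^ 2 :=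
  Real.sq_sqrt (Finset.sum_nonneg fun _ _ => sq_nonneg _)

lemma gradMag_nonneg (ψ : ℝ → Eu 4 → ℝ) (t : ℝ) (x : Eu 4) : 0 ≤ gradMag ψ t x :=
  Real.sqrt_nonneg _

lemma abs_pd_le (ψ : ℝ → Eu 4 → ℝ) (α : Fin 5) (t : ℝ) (x : Eu 4) :
    |pd (n := 4) α ψ t x| ≤ gradMag ψ t x := by
  refine Real.abs_le_sqrt ?_
  exact Finset.single_le_sum (f := fun α => pd (n := 4) α ψ t x ^ 2)
    (fun _ _ => sq_nonneg _) (Finset.mem_univ α)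

lemma cont_gradMag {ψ : ℝ → Eu 4 → ℝ} (hψ : SmoothTX ψ) :
    Continuous fun p : ℝ × Eu 4 => gradMag ψ p.1 p.2 :=
  Real.continuous_sqrt.comp
    (continuous_finsetSum _ fun α _ => (stx_cont (stx_pd hψ α)).pow 2)

lemma cont_habs (hh : ∀ α β, SmoothTX (h α β)) :
    Continuous fun p : ℝ × Eu 4 => habs h p.1 p.2 :=
  continuous_finsetSum _ fun α _ => continuous_finsetSum _ fun β _ => (stx_cont (hh α β)).abs

lemma cont_dhabs (hh : ∀ α β, SmoothTX (h α β)) :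
    Continuous fun p : ℝ × Eu 4 => dhabs h p.1 p.2 :=
  continuous_finsetSum _ fun γ _ => continuous_finsetSum _ fun α _ =>
    continuous_finsetSum _ fun β _ => (stx_cont (stx_pd (hh α β) γ)).abs

lemma habs_nonneg (t : ℝ) (x : Eu 4) : 0 ≤ habs h t x :=
  Finset.sum_nonneg fun _ _ => Finset.sum_nonneg fun _ _ => abs_nonneg _

lemma dhabs_nonneg (t : ℝ) (x : Eu 4) : 0 ≤ dhabs h t x :=
  Finset.sum_nonneg fun _ _ => Finset.sum_nonneg fun _ _ => Finset.sum_nonneg fun _ _ =>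
    abs_nonneg _

lemma cont_slice {u : ℝ → Eu 4 → ℝ} (hu : Continuous fun p : ℝ × Eu 4 => u p.1 p.2) (t : ℝ) :
    Continuous (u t) := hu.comp (Continuous.prodMk continuous_const continuous_id)

lemma form_le (H : Fin 5 → Fin 5 → ℝ) {a b : Fin 5 → ℝ} {A B : ℝ} (ha : ∀ α, |a α| ≤ A)
    (hb : ∀ α, |b α| ≤ B) :
    |∑ α, ∑ β, H α β * a α * b β| ≤ (∑ α, ∑ β, |H α β|) * A * B := by
  have hA : 0 ≤ A := (abs_nonneg _).trans (ha 0)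
  refine (Finset.abs_sum_le_sum_abs _ _).trans ?_
  rw [mul_assoc, Finset.sum_mul]
  refine Finset.sum_le_sum fun α _ => (Finset.abs_sum_le_sum_abs _ _).trans ?_
  rw [Finset.sum_mul]
  refine Finset.sum_le_sum fun β _ => ?_
  rw [abs_mul, abs_mul, mul_assoc]
  exact mul_le_mul_of_nonneg_left (mul_le_mul (ha α) (hb β) (abs_nonneg _) hA) (abs_nonneg _)

/-- The contraction of `g` with the gradient and a covector `a`. -/
lemma gm_form (t : ℝ) (x : Eu 4) (p a : Fin 5 → ℝ) :
    ∑ α, (∑ β, gm h α β t x * p β) * a α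
      = a 0 * p 0 - ∑ i : Fin 4, a i.succ * p i.succ + ∑ α, ∑ β, h α β t x * a α * p β := by
  rw [← mk_sum a p, ← Finset.sum_add_distrib]
  refine Finset.sum_congr rfl fun α _ => ?_
  rw [← Finset.sum_add_distrib, Finset.sum_mul]
  refine Finset.sum_congr rfl fun β _ => ?_
  unfold gm; ring

lemma mulQ_eq (ψ : ℝ → Eu 4 → ℝ) (t : ℝ) (x : Eu 4) :
    mulQ h ψ t x = pd (n := 4) 0 ψ t x ^ 2 - ∑ i : Fin 4, pd (n := 4) i.succ ψ t x ^ 2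
      + ∑ α, ∑ β, h α β t x * pd (n := 4) α ψ t x * pd (n := 4) β ψ t x := by
  have := gm_form (h := h) t x (fun α => pd (n := 4) α ψ t x) (fun α => pd (n := 4) α ψ t x)
  simp only [← sq] at this
  rw [← this]
  unfold mulQ
  refine Finset.sum_congr rfl fun α _ => ?_
  rw [Finset.sum_mul]
  refine Finset.sum_congr rfl fun β _ => ?_
  ring

lemma hform_le (ψ : ℝ → Eu 4 → ℝ) (t : ℝ) (x : Eu 4) {a : Fin 5 → ℝ} {A : ℝ}
    (ha : ∀ α, |a α| ≤ A) :
    |∑ α, ∑ β, h α β t x * a α * pd (n := 4) β ψ t x| ≤ habs h t x * A * gradMag ψ t x :=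
  form_le (fun α β => h α β t x) ha fun α => abs_pd_le ψ α t x

lemma dh_form1 (ψ : ℝ → Eu 4 → ℝ) (t : ℝ) (x : Eu 4) {Y : Fin 5 → ℝ} {y : ℝ}
    (hY : ∀ γ, |Y γ| ≤ y) :
    |∑ γ, Y γ * ∑ a, ∑ b, pd (n := 4) γ (h a b) t x * pd (n := 4) a ψ t x * pd (n := 4) b ψ t x|
      ≤ dhabs h t x * y * gradMag ψ t x ^ 2 := by
  refine (Finset.abs_sum_le_sum_abs _ _).trans ?_
  unfold dhabs
  rw [mul_assoc, Finset.sum_mul]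
  refine Finset.sum_le_sum fun γ _ => ?_
  rw [abs_mul]
  have h1 := form_le (fun a b => pd (n := 4) γ (h a b) t x) (fun α => abs_pd_le ψ α t x)
    (fun α => abs_pd_le ψ α t x)
  calc |Y γ| * _ ≤ y * ((∑ a, ∑ b, |pd (n := 4) γ (h a b) t x|) * gradMag ψ t x * gradMag ψ t x) :=
        mul_le_mul (hY γ) h1 (abs_nonneg _) ((abs_nonneg _).trans (hY 0))
    _ = _ := by ring

lemma dh_form2 (ψ : ℝ → Eu 4 → ℝ) (t : ℝ) (x : Eu 4) :
    |∑ α, ∑ β, pd (n := 4) α (h α β) t x * pd (n := 4) β ψ t x|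
      ≤ dhabs h t x * gradMag ψ t x := by
  refine (Finset.abs_sum_le_sum_abs _ _).trans ?_
  unfold dhabs
  rw [Finset.sum_mul]
  refine Finset.sum_le_sum fun γ _ => ?_
  have h1 := form_le (fun a b => pd (n := 4) γ (h a b) t x) (a := fun α => if α = γ then 1 else 0)
    (A := 1) (fun α => by split_ifs <;> simp) (fun α => abs_pd_le ψ α t x)
  rw [mul_one] at h1
  simpa using h1

/-- The time-like multiplier field `w ∂_t`. -/
def eY (w : ℝ → Eu 4 → ℝ) (γ : Fin 5) : ℝ → Eu 4 → ℝ := fun t x => if γ = 0 then w t x else 0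

lemma stx_eY {w : ℝ → Eu 4 → ℝ} (hw : SmoothTX w) (γ : Fin 5) : SmoothTX (eY w γ) := by
  unfold eY
  by_cases hγ : γ = 0
  · simpa [hγ] using hw
  · simpa [hγ] using stx_const 0

lemma pd_eY (w : ℝ → Eu 4 → ℝ) (α γ : Fin 5) (t : ℝ) (x : Eu 4) :
    pd (n := 4) α (eY w γ) t x = if γ = 0 then pd (n := 4) α w t x else 0 := by
  unfold eY
  by_cases hγ : γ = 0
  · simp [hγ]
  · simpa [hγ] using pd_const 0 α t x

lemma mulZ_eY (w ψ : ℝ → Eu 4 → ℝ) (t : ℝ) (x : Eu 4) :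
    mulZ (eY w) (fun _ _ => 0) ψ t x = w t x * pd (n := 4) 0 ψ t x := by
  simp [mulZ, eY]

lemma gradMag_sq' (ψ : ℝ → Eu 4 → ℝ) (t : ℝ) (x : Eu 4) :
    gradMag ψ t x ^ 2
      = pd (n := 4) 0 ψ t x ^ 2 + ∑ i : Fin 4, pd (n := 4) i.succ ψ t x ^ 2 := by
  rw [gradMag_sq, Fin.sum_univ_succ]

lemma energy_density (ψ w : ℝ → Eu 4 → ℝ) (t : ℝ) (x : Eu 4) (hδ : habs h t x ≤ 1 / 100)
    (hw : 0 ≤ w t x) :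
    |mulP h (eY w) (fun _ _ => 0) ψ 0 t x - 1 / 2 * (w t x * gradMag ψ t x ^ 2)|
      ≤ 1 / 4 * (w t x * gradMag ψ t x ^ 2) := by
  set G := gradMag ψ t x with hG
  have hG0 : 0 ≤ G := gradMag_nonneg ψ t x
  have h1 := gm_form (h := h) t x (fun α => pd (n := 4) α ψ t x)
    (fun α => if α = 0 then pd (n := 4) 0 ψ t x else 0)
  have h2 := hform_le (h := h) ψ t x (a := fun α => if α = 0 then pd (n := 4) 0 ψ t x else 0)
    (A := G) (fun α => by split_ifs; exacts [abs_pd_le ψ 0 t x, by simpa using hG0])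
  have h3 := hform_le (h := h) ψ t x (a := fun α => pd (n := 4) α ψ t x)
    (A := G) (fun α => abs_pd_le ψ α t x)
  have h4 := mulQ_eq (h := h) ψ t x
  have h5 := gradMag_sq' ψ t x
  rw [← hG] at h2 h3 h5
  set H1 := ∑ α, ∑ β, h α β t x * (if α = 0 then pd (n := 4) 0 ψ t x else 0) * pd (n := 4) β ψ t x
  set H2 := ∑ α, ∑ β, h α β t x * pd (n := 4) α ψ t x * pd (n := 4) β ψ t x
  simp only [mul_ite, mul_zero, Finset.sum_ite_eq', Finset.mem_univ, if_true, Fin.succ_ne_zero,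
    if_false, zero_mul, Finset.sum_const_zero, sub_zero] at h1
  have h6 : mulP h (eY w) (fun _ _ => 0) ψ 0 t x - 1 / 2 * (w t x * G ^ 2)
      = w t x * (H1 - 1 / 2 * H2) := by
    unfold mulP
    rw [mulZ_eY, h4, h5]
    simp only [eY, if_true]
    linear_combination (w t x) * h1
  rw [h6, abs_mul, abs_of_nonneg hw]
  have h7 : habs h t x * G * G ≤ 1 / 100 * (G ^ 2) := by
    have := mul_le_mul_of_nonneg_right hδ (sq_nonneg G)
    linarith
  have h8 : |H1 - 1 / 2 * H2| ≤ 1 / 4 * G ^ 2 := by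
    have a1 := abs_le.1 (h2.trans h7)
    have a2 := abs_le.1 (h3.trans h7)
    have := sq_nonneg G
    exact abs_le.2 ⟨by linarith [a1.1, a2.2], by linarith [a1.2, a2.1]⟩
  have := mul_le_mul_of_nonneg_left h8 hw
  linarith

/-- For a weight decreasing in time sufficiently fast compared with its spatial slope, the divergence
of the energy current is controlled by the source terms. -/
lemma energy_div {ψ w : ℝ → Eu 4 → ℝ} (hh : ∀ α β, SmoothTX (h α β))
    (hsym : ∀ α β t x, h α β t x = h β α t x) (hw : SmoothTX w) (hψ : SmoothTX ψ)
    (t : ℝ) (x : Eu 4) (hδ : habs h t x ≤ 1 / 100)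
    (hw0 : 0 ≤ w t x) {s : ℝ} (hs : 0 ≤ s) (hwt : pd (n := 4) 0 w t x = - 40 * s)
    (hwx : ∀ i : Fin 4, |pd (n := 4) i.succ w t x| ≤ s) :
    ∑ α, pd (n := 4) α (mulP h (eY w) (fun _ _ => 0) ψ α) t x
      ≤ (|boxH h ψ t x| + 2 * (dhabs h t x * gradMag ψ t x)) * (w t x * gradMag ψ t x) := by
  rw [div_mulP hh hsym (stx_eY hw) (stx_const 0) hψ t x, mulZ_eY]
  set G := gradMag ψ t x with hG
  have hG0 : 0 ≤ G := gradMag_nonneg ψ t x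
  have hp := fun α => abs_pd_le ψ α t x
  have hc : ∀ α, |pd (n := 4) α w t x * pd (n := 4) 0 ψ t x| ≤ 40 * s * G := by
    intro α
    rw [abs_mul]
    refine mul_le_mul ?_ (hp 0) (abs_nonneg _) (by positivity)
    refine Fin.cases ?_ (fun i => ?_) α
    · rw [hwt, abs_mul, abs_of_nonneg hs]; norm_num
    · linarith [hwx i]
  have h1 := gm_form (h := h) t x (fun α => pd (n := 4) α ψ t x)
    (fun α => pd (n := 4) α w t x * pd (n := 4) 0 ψ t x)
  have h2 := hform_le (h := h) ψ t x hc
  have h3 := hform_le (h := h) ψ t x (a := fun α => pd (n := 4) α ψ t x)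
    (A := G) (fun α => abs_pd_le ψ α t x)
  have h4 := mulQ_eq (h := h) ψ t x
  have h5 := gradMag_sq' ψ t x
  have h6 := dh_form2 (h := h) ψ t x
  have h7 := dh_form1 (h := h) ψ t x (Y := fun γ => eY w γ t x) (y := w t x)
    (fun γ => by unfold eY; split_ifs; exacts [(abs_of_nonneg hw0).le, by simpa using hw0])
  have hcross : |∑ i : Fin 4, pd (n := 4) i.succ w t x * pd (n := 4) 0 ψ t x * pd (n := 4) i.succ ψ t x|
      ≤ 4 * s * G ^ 2 := by
    refine (Finset.abs_sum_le_sum_abs _ _).trans ?_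
    have : ∀ i ∈ (Finset.univ : Finset (Fin 4)),
        |pd (n := 4) i.succ w t x * pd (n := 4) 0 ψ t x * pd (n := 4) i.succ ψ t x| ≤ s * G ^ 2 := by
      intro i _
      rw [abs_mul, abs_mul]
      calc _ ≤ s * G * G := mul_le_mul (mul_le_mul (hwx i) (hp 0) (abs_nonneg _) hs) (hp _)
            (abs_nonneg _) (by positivity)
        _ = _ := by ring
    refine (Finset.sum_le_sum this).trans (le_of_eq ?_)
    simp; ring
  simp only [pd_eY, ite_mul, zero_mul, Finset.sum_ite_eq', Finset.mem_univ, if_true, pd_const,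
    mul_zero, Finset.sum_const_zero, add_zero]
  rw [← hG] at h2 h3 h5 h6 h7
  rw [hwt] at h1
  set B := boxH h ψ t x
  set p0 := pd (n := 4) 0 ψ t x
  set D1 := ∑ α, ∑ β, pd (n := 4) α (h α β) t x * pd (n := 4) β ψ t x
  set D2 := ∑ γ, eY w γ t x * ∑ a, ∑ b,
    pd (n := 4) γ (h a b) t x * pd (n := 4) a ψ t x * pd (n := 4) b ψ t x
  set H1 := ∑ α, ∑ β, h α β t x * (pd (n := 4) α w t x * p0) * pd (n := 4) β ψ t x
  set H2 := ∑ α, ∑ β, h α β t x * pd (n := 4) α ψ t x * pd (n := 4) β ψ t x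
  set X := ∑ i : Fin 4, pd (n := 4) i.succ w t x * p0 * pd (n := 4) i.succ ψ t x
  set Q := mulQ h ψ t x
  set W := w t x
  set dh := dhabs h t x
  have hd0 : 0 ≤ dh := dhabs_nonneg t x
  rw [h1, hwt]
  have e1 : B * (W * p0) ≤ |B| * (W * G) := by
    refine (le_abs_self _).trans ?_
    rw [abs_mul, abs_mul, abs_of_nonneg hw0]
    exact mul_le_mul_of_nonneg_left (mul_le_mul_of_nonneg_left (hp 0) hw0) (abs_nonneg _)
  have e2 : D1 * (W * p0) ≤ dh * G * (W * G) := by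
    refine (le_abs_self _).trans ?_
    rw [abs_mul, abs_mul, abs_of_nonneg hw0]
    exact mul_le_mul h6 (mul_le_mul_of_nonneg_left (hp 0) hw0) (by positivity) (by positivity)
  have e3 : -D2 ≤ dh * W * G ^ 2 := (neg_le_abs _).trans h7
  have e4 : H1 ≤ 2 / 5 * (s * G ^ 2) := by
    have := (le_abs_self _).trans h2
    have h8 := mul_le_mul_of_nonneg_right hδ (show 0 ≤ 40 * s * G ^ 2 by positivity)
    linarith
  have e5 : H2 ≤ 1 / 100 * G ^ 2 := by
    have := (le_abs_self _).trans h3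
    have h8 := mul_le_mul_of_nonneg_right hδ (sq_nonneg G)
    linarith
  have e6 : 20 * s * H2 ≤ 1 / 5 * (s * G ^ 2) := by
    have := mul_le_mul_of_nonneg_left e5 hs
    linarith
  have e7 := (neg_le_abs _).trans hcross
  have e8 : 0 ≤ s * G ^ 2 := by positivity
  have e9 : Q = 2 * p0 ^ 2 - G ^ 2 + H2 := by rw [h4, h5]; ring
  rw [e9]
  have e10 : 0 ≤ dh * W * G ^ 2 := by positivity
  linarith
end

section
variable {h : Fin 5 → Fin 5 → ℝ → Eu 4 → ℝ}

/-- Absorption: `X² ≤ 4e² + 4BX` with `X` finite forces `X ≤ 2e + 4B`. -/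
lemma absorb {X e B : ℝ≥0∞} (hX : X ≠ ⊤) (h : X ^ 2 ≤ 4 * e ^ 2 + 4 * B * X) :
    X ≤ 2 * e + 4 * B := by
  by_cases he : e = ⊤
  · simp [he]
  by_cases hB : B = ⊤
  · simp [hB]
  lift X to NNReal using hX
  lift e to NNReal using he
  lift B to NNReal using hB
  norm_cast at h ⊢
  rw [← NNReal.coe_le_coe] at h ⊢
  push_cast at h ⊢
  have h1 := X.coe_nonneg
  have h2 := e.coe_nonneg
  have h3 := B.coe_nonneg
  by_contra hc
  push Not at hc
  nlinarith [mul_nonneg h2 h3, mul_nonneg h2 h2]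

/-- The weight of the energy estimate: a smooth cutoff to a backward cone. -/
def ew (A : ℝ) (t : ℝ) (x : Eu 4) : ℝ := smoothTransition (A - jap x - 40 * t)

lemma stx_ew (A : ℝ) : SmoothTX (ew A) := by
  unfold SmoothTX ew
  have h1 : ContDiff ℝ (⊤ : ℕ∞) fun p : ℝ × Eu 4 => A - jap p.2 - 40 * p.1 :=
    (contDiff_const.sub (sm_jap.comp contDiff_snd)).sub (contDiff_const.mul contDiff_fst)
  exact st_contDiff.comp h1

lemma ew_td (A t : ℝ) (x : Eu 4) :
    pd (n := 4) 0 (ew A) t x = -40 * deriv smoothTransition (A - jap x - 40 * t) := by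
  rw [pd_zero]
  unfold td ew
  have h1 : HasDerivAt (fun s : ℝ => A - jap x - 40 * s) (-40) t := by
    simpa using ((hasDerivAt_id t).const_mul (40 : ℝ)).const_sub (A - jap x)
  have h2 := (st_contDiff.differentiable (by simp) (A - jap x - 40 * t)).hasDerivAt
  have := (h2.comp t h1).deriv
  rw [mul_comm]
  exact this

lemma ew_sd (A t : ℝ) (x : Eu 4) (i : Fin 4) :
    |pd (n := 4) i.succ (ew A) t x| ≤ deriv smoothTransition (A - jap x - 40 * t) := by
  rw [pd_succ]
  have h1 : Sm (fun y : Eu 4 => A - jap y - 40 * t) :=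
    (contDiff_const.sub sm_jap).sub contDiff_const
  have h2 : sd i (fun y : Eu 4 => A - jap y - 40 * t) x = - sd i jap x := by
    rw [sd_sub (u := fun y => A - jap y) (contDiff_const.sub sm_jap) contDiff_const, sd_const,
      sd_sub (u := fun _ => A) contDiff_const sm_jap, sd_const]
    ring
  have h3 : sd i (ew A t) x = deriv smoothTransition (A - jap x - 40 * t) * (- sd i jap x) := by
    have := sd_comp h1 st_contDiff i x
    rw [h2] at this
    exact this
  rw [h3, abs_mul, abs_of_nonneg (st_deriv_nonneg _), abs_neg]
  have := mul_le_mul_of_nonneg_left (abs_sd_jap i x) (st_deriv_nonneg (A - jap x - 40 * t))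
  linarith

lemma ew_support (A : ℝ) {t : ℝ} {x : Eu 4} (ht : -1 < t) (hx : x ∉ JB 4 (A + 40)) :
    ew A t x = 0 := by
  have h1 : A + 40 < jap x := not_le.1 hx
  exact smoothTransition.zero_of_nonpos (by linarith)

lemma lintegral_compact_lt_top {w : ℝ → Eu 4 → ℝ}
    (hw : Continuous fun p : ℝ × Eu 4 => w p.1 p.2) {K : Set (Eu 4)} (hK : IsCompact K)
    (hwK : ∀ t x, 0 ≤ t → x ∉ K → w t x = 0) (S : Set (Eu 4)) (T : ℝ) :
    ∃ C : ℝ≥0∞, C ≠ ⊤ ∧ ∀ t ∈ Icc 0 T, ∫⁻ x in S, ENNReal.ofReal (w t x) ≤ C := by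
  obtain ⟨M, hM⟩ := (isCompact_Icc.prod hK).exists_bound_of_continuousOn
    (f := fun p : ℝ × Eu 4 => w p.1 p.2) (s := Icc 0 T ×ˢ K) hw.continuousOn
  refine ⟨ENNReal.ofReal M * volume K, ENNReal.mul_ne_top ENNReal.ofReal_ne_top hK.measure_ne_top,
    fun t ht => ?_⟩
  calc ∫⁻ x in S, ENNReal.ofReal (w t x) ≤ ∫⁻ x, ENNReal.ofReal (w t x) :=
        lintegral_mono' Measure.restrict_le_self le_rfl
    _ ≤ ∫⁻ x, K.indicator (fun _ => ENNReal.ofReal M) x := by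
        refine lintegral_mono fun x => ?_
        by_cases hx : x ∈ K
        · rw [indicator_of_mem hx]
          exact ENNReal.ofReal_le_ofReal ((le_abs_self _).trans (hM (t, x) ⟨ht, hx⟩))
        · rw [hwK t x ht.1 hx]; simp
    _ = _ := by rw [lintegral_indicator hK.measurableSet, setLIntegral_const]

lemma cont_boxH {ψ : ℝ → Eu 4 → ℝ} (hh : ∀ α β, SmoothTX (h α β)) (hψ : SmoothTX ψ) :
    SmoothTX (boxH h ψ) := by
  have : boxH h ψ = fun t x => ∑ α, ∑ β, gm h α β t x * pd (n := 4) α (pd (n := 4) β ψ) t x := by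
    funext t x; exact boxH_eq ψ t x
  rw [this]
  exact stx_sum _ fun α => stx_sum _ fun β => stx_mul (stx_gm hh α β) (stx_pd (stx_pd hψ β) α)

lemma sum_pd_eq (P : Fin 5 → ℝ → Eu 4 → ℝ) (t : ℝ) (x : Eu 4) :
    ∑ α, pd (n := 4) α (P α) t x = td (P 0) t x + ∑ i : Fin 4, sd i (P i.succ t) x := by
  rw [Fin.sum_univ_succ, pd_zero]
  simp only [pd_succ]

set_option maxHeartbeats 1000000 in
/-- The energy estimate, localized to a backward cone. -/
lemma energy_cone {ρ : Eu 4 → ℝ} (hρ : Sm ρ) (hg : ∀ x, ρ x = 0 → fderiv ℝ ρ x ≠ 0)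
    (hh : ∀ α β, SmoothTX (h α β)) (hsym : ∀ α β t x, h α β t x = h β α t x)
    (hδ : ∀ t x, habs h t x ≤ 1 / 100) {ψ : ℝ → Eu 4 → ℝ} (hψ : SmoothTX ψ)
    (hb : ∀ t x, 0 ≤ t → ρ x = 0 → ψ t x = 0) (A T : ℝ) {τ : ℝ} (hτ : τ ∈ Icc 0 T) :
    L2x {x | 0 ≤ ρ x} (fun x => √(ew A τ x) * gradMag ψ τ x)
      ≤ 2 * L2x {x | 0 ≤ ρ x} (gradMag ψ 0)
        + 4 * ∫⁻ t in Icc 0 T, (L2x {x | 0 ≤ ρ x} (boxH h ψ t)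
          + 2 * L2x {x | 0 ≤ ρ x} (fun x => dhabs h t x * gradMag ψ t x)) := by
  set S : Set (Eu 4) := {x | 0 ≤ ρ x} with hS
  have hSm : MeasurableSet S := measurableSet_ext hρ
  set w := ew A with hwd
  have hw := stx_ew A
  have hw0 : ∀ t x, 0 ≤ w t x := fun t x => smoothTransition.nonneg _
  have hw1 : ∀ t x, w t x ≤ 1 := fun t x => smoothTransition.le_one _
  have hG0 := gradMag_nonneg ψ
  have hsqw : ∀ t x, (√(w t x) * gradMag ψ t x) ^ 2 = w t x * gradMag ψ t x ^ 2 := by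
    intro t x; rw [mul_pow, Real.sq_sqrt (hw0 t x)]
  have hcG : Continuous fun p : ℝ × Eu 4 => w p.1 p.2 * gradMag ψ p.1 p.2 ^ 2 :=
    (stx_cont hw).mul ((cont_gradMag hψ).pow 2)
  have hwK : ∀ t x, -1 < t → x ∉ JB 4 (A + 40) → w t x = 0 := fun t x ht hx => ew_support A ht hx
  obtain ⟨C, hCtop, hC⟩ := lintegral_compact_lt_top
    (w := fun t x => w t x * gradMag ψ t x ^ 2) hcG (isCompact_JB (n := 4) (A + 40))
    (fun t x ht hx => by rw [hwK t x (by linarith) hx, zero_mul]) S T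
  set nw : ℝ → ℝ≥0∞ := fun t => L2x S (fun x => √(w t x) * gradMag ψ t x) with hnw
  have hnwsq : ∀ t, nw t ^ 2 = ∫⁻ x in S, ENNReal.ofReal (w t x * gradMag ψ t x ^ 2) := by
    intro t; rw [hnw]; simp only [L2x_sq, hsqw]
  set X : ℝ≥0∞ := ⨆ t ∈ Icc 0 T, nw t with hX
  have hle : ∀ t ∈ Icc 0 T, nw t ≤ X := fun t ht => le_iSup₂ (f := fun t _ => nw t) t ht
  have hsqrt : ∀ {a b : ℝ≥0∞}, a ^ 2 ≤ b → a ≤ b ^ (1 / 2 : ℝ) := by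
    intro a b hab
    refine ennreal_sqrt_le (hab.trans (le_of_eq ?_))
    rw [← ENNReal.rpow_natCast, ← ENNReal.rpow_mul]; norm_num
  have hXtop : X ≠ ⊤ := by
    have : X ≤ C ^ (1 / 2 : ℝ) :=
      iSup₂_le fun t ht => hsqrt ((hnwsq t).le.trans (hC t ht))
    exact ne_top_of_le_ne_top (ENNReal.rpow_ne_top_of_nonneg (by norm_num) hCtop) this
  set B : ℝ≥0∞ := ∫⁻ t in Icc 0 T, (L2x S (boxH h ψ t)
          + 2 * L2x S (fun x => dhabs h t x * gradMag ψ t x)) with hB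
  set e := L2x S (gradMag ψ 0) with he
  have key : ∀ t ∈ Icc 0 T, nw t ^ 2 ≤ 4 * e ^ 2 + 4 * B * X := by
    intro τ hτ
    have hY := stx_eY hw
    have h1 := spacetime_div hρ hg (P := mulP h (eY w) (fun _ _ => 0) ψ 0)
      (V := fun i => mulP h (eY w) (fun _ _ => 0) ψ i.succ)
      (stx_mulP hh hY (stx_const 0) hψ 0) (fun i => stx_mulP hh hY (stx_const 0) hψ i.succ)
      (isCompact_JB (n := 4) (A + 40))
      (fun t x ht hx => by
        unfold mulP
        rw [mulZ_eY, hwK t x ht hx]; simp [eY, hwK t x ht hx])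
      (fun i t x ht hx => by
        unfold mulP
        rw [mulZ_eY, hwK t x (by linarith) hx]; simp [eY, Fin.succ_ne_zero])
      (fun t x ht hx => by
        have hz : pd (n := 4) 0 ψ t x = 0 := by
          rw [pd_zero]; exact td_eq_zero hψ (fun s hs => hb s x hs hx) ht
        refine le_of_eq (Finset.sum_eq_zero fun i _ => ?_)
        unfold mulP
        rw [mulZ_eY, hz]
        simp [eY, Fin.succ_ne_zero])
      (q := fun _ _ => 0)
      (r := fun t x => (|boxH h ψ t x| + 2 * (dhabs h t x * gradMag ψ t x))
        * (w t x * gradMag ψ t x))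
      continuous_const (fun _ _ _ _ => rfl)
      (fun t x ht hx => by
        rw [← sum_pd_eq, add_zero]
        exact energy_div hh hsym hw hψ t x (hδ t x) (hw0 t x) (st_deriv_nonneg _) (ew_td A t x)
          (ew_sd A t x))
      hτ.1
    simp only [integral_zero, add_zero] at h1
    have hdens := fun t x => abs_le.1 (energy_density (h := h) ψ w t x (hδ t x) (hw0 t x))
    have hint : ∀ t, 0 ≤ t → Integrable (fun x => w t x * gradMag ψ t x ^ 2) := fun t ht =>
      (cont_slice (u := fun t x => w t x * gradMag ψ t x ^ 2) hcG t).integrable_of_hasCompactSupport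
        (HasCompactSupport.intro (isCompact_JB (n := 4) (A + 40)) fun x hx => by
          rw [hwK t x (by linarith) hx, zero_mul])
    have hPint : ∀ t, 0 ≤ t → Integrable (mulP h (eY w) (fun _ _ => 0) ψ 0 t) := fun t ht =>
      (stx_slice (stx_mulP hh hY (stx_const 0) hψ 0) t).cont.integrable_of_hasCompactSupport
        (HasCompactSupport.intro (isCompact_JB (n := 4) (A + 40)) fun x hx => by
          unfold mulP
          have hz : ew A t x = 0 := hwK t x (by linarith) hx
          rw [mulZ_eY, hz]; simp [eY, hz])
    have h2 : nw τ ^ 2 ≤ 4 * ENNReal.ofReal (∫ x in S, mulP h (eY w) (fun _ _ => 0) ψ 0 τ x) := by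
      rw [hnwsq, ← ofReal_integral_eq_lintegral_ofReal (hint τ hτ.1).integrableOn
        (Eventually.of_forall fun x => mul_nonneg (hw0 τ x) (sq_nonneg _))]
      have h4 : (4 : ℝ≥0∞) = ENNReal.ofReal 4 := by norm_num
      rw [h4, ← ENNReal.ofReal_mul (by norm_num), ← integral_const_mul]
      refine ENNReal.ofReal_le_ofReal ?_
      refine integral_mono (hint τ hτ.1).integrableOn ((hPint τ hτ.1).integrableOn.const_mul 4) ?_
      intro x
      have := (hdens τ x).1
      simp only
      linarith
    have h3 : ENNReal.ofReal (∫ x in S, mulP h (eY w) (fun _ _ => 0) ψ 0 0 x) ≤ e ^ 2 := by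
      refine (ofReal_integral_le (hPint 0 le_rfl).integrableOn).trans ?_
      rw [he, L2x_sq]
      refine lintegral_mono fun x => ENNReal.ofReal_le_ofReal ?_
      have h5 := (hdens 0 x).2
      have h6 := mul_le_mul_of_nonneg_right (hw1 0 x) (sq_nonneg (gradMag ψ 0 x))
      have h7 := mul_nonneg (hw0 0 x) (sq_nonneg (gradMag ψ 0 x))
      linarith
    have h4 : ∫⁻ t in Icc 0 τ, ∫⁻ x in S, ENNReal.ofReal
        ((|boxH h ψ t x| + 2 * (dhabs h t x * gradMag ψ t x)) * (w t x * gradMag ψ t x))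
        ≤ B * X := by
      rw [hB, ← lintegral_mul_const' _ _ hXtop]
      refine le_trans (lintegral_mono_set (Icc_subset_Icc_right hτ.2)) ?_
      refine setLIntegral_mono' measurableSet_Icc fun t ht => ?_
      have hcd : Measurable fun x => dhabs h t x * gradMag ψ t x :=
        ((cont_slice (cont_dhabs hh) t).mul (cont_slice (cont_gradMag hψ) t)).measurable
      have hcw : Measurable fun x => √(w t x) * gradMag ψ t x :=
        ((Real.continuous_sqrt.comp (stx_slice hw t).cont).mul
          (cont_slice (cont_gradMag hψ) t)).measurable
      have hcB : Measurable (boxH h ψ t) := (stx_slice (cont_boxH hh hψ) t).cont.measurable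
      calc _ ≤ ∫⁻ x in S, (ENNReal.ofReal (|boxH h ψ t x| * |√(w t x) * gradMag ψ t x|)
            + 2 * ENNReal.ofReal (|dhabs h t x * gradMag ψ t x| * |√(w t x) * gradMag ψ t x|)) := by
            refine lintegral_mono fun x => ?_
            have h4 : (2 : ℝ≥0∞) = ENNReal.ofReal 2 := by norm_num
            rw [h4, ← ENNReal.ofReal_mul (by norm_num), ← ENNReal.ofReal_add (by positivity)
              (by positivity)]
            refine ENNReal.ofReal_le_ofReal ?_
            have hd := mul_nonneg (dhabs_nonneg (h := h) t x) (hG0 t x)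
            have hs : w t x ≤ √(w t x) := by
              refine Real.le_sqrt_of_sq_le ?_
              have := mul_le_mul_of_nonneg_left (hw1 t x) (hw0 t x)
              linarith [sq (w t x)]
            rw [abs_of_nonneg hd, abs_of_nonneg (mul_nonneg (Real.sqrt_nonneg (w t x)) (hG0 t x)),
              ← mul_assoc 2 (_ * _) (_ * _), ← add_mul]
            exact mul_le_mul_of_nonneg_left (mul_le_mul_of_nonneg_right hs (hG0 t x))
              (by positivity)
        _ = (∫⁻ x in S, ENNReal.ofReal (|boxH h ψ t x| * |√(w t x) * gradMag ψ t x|))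
            + 2 * ∫⁻ x in S, ENNReal.ofReal (|dhabs h t x * gradMag ψ t x|
              * |√(w t x) * gradMag ψ t x|) := by
            rw [lintegral_add_left (by fun_prop), lintegral_const_mul' _ _ (by norm_num)]
        _ ≤ L2x S (boxH h ψ t) * X + 2 * (L2x S (fun x => dhabs h t x * gradMag ψ t x) * X) := by
            gcongr
            · exact (lintegral_mul_le_L2 hcB hcw).trans (by gcongr; exact hle t ht)
            · exact (lintegral_mul_le_L2 hcd hcw).trans (by gcongr; exact hle t ht)
        _ = _ := by ring
    calc nw τ ^ 2 ≤ 4 * (e ^ 2 + B * X) := by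
          refine h2.trans ?_
          gcongr
          exact h1.trans (by gcongr)
      _ = _ := by ring
  refine (hle τ hτ).trans (absorb hXtop ?_)
  have h5 : X ≤ (4 * e ^ 2 + 4 * B * X) ^ (1 / 2 : ℝ) := iSup₂_le fun t ht => hsqrt (key t ht)
  calc X ^ 2 ≤ ((4 * e ^ 2 + 4 * B * X) ^ (1 / 2 : ℝ)) ^ 2 := by gcongr
    _ = _ := by rw [← ENNReal.rpow_natCast, ← ENNReal.rpow_mul]; norm_num

/-- The energy estimate in the exterior domain. -/
theorem energy {ρ : Eu 4 → ℝ} (hρ : Sm ρ) (hg : ∀ x, ρ x = 0 → fderiv ℝ ρ x ≠ 0)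
    (hh : ∀ α β, SmoothTX (h α β)) (hsym : ∀ α β t x, h α β t x = h β α t x)
    (hδ : ∀ t x, habs h t x ≤ 1 / 100) {ψ : ℝ → Eu 4 → ℝ} (hψ : SmoothTX ψ)
    (hb : ∀ t x, 0 ≤ t → ρ x = 0 → ψ t x = 0) (T : ℝ) {τ : ℝ} (hτ : τ ∈ Icc 0 T) :
    L2x {x | 0 ≤ ρ x} (gradMag ψ τ)
      ≤ 2 * L2x {x | 0 ≤ ρ x} (gradMag ψ 0)
        + 4 * ∫⁻ t in Icc 0 T, (L2x {x | 0 ≤ ρ x} (boxH h ψ t)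
          + 2 * L2x {x | 0 ≤ ρ x} (fun x => dhabs h t x * gradMag ψ t x)) := by
  refine ennreal_sqrt_le ?_
  rw [L2x_sq]
  refine lintegral_le_of_cut (f := fun x => gradMag ψ τ x ^ 2) ((cont_slice (cont_gradMag hψ) τ).pow 2) fun k => ?_
  refine le_trans ?_ (pow_le_pow_left₀ zero_le
    (energy_cone hρ hg hh hsym hδ hψ hb (2 * ((k : ℝ) + 1) + 1 + 40 * τ) T hτ) 2)
  rw [L2x_sq]
  refine lintegral_mono fun x => ENNReal.ofReal_le_ofReal ?_
  rw [mul_pow, Real.sq_sqrt (show 0 ≤ ew _ τ x from smoothTransition.nonneg _)]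
  refine mul_le_mul_of_nonneg_right ?_ (sq_nonneg _)
  by_cases hx : x ∈ JB 4 (2 * ((k : ℝ) + 1))
  · have h1 : jap x ≤ 2 * ((k : ℝ) + 1) := hx
    have : ew (2 * ((k : ℝ) + 1) + 1 + 40 * τ) τ x = 1 :=
      smoothTransition.one_of_one_le (by linarith)
    rw [this]
    exact pow_le_one₀ (cut_nonneg _ _) (cut_le_one _ _)
  · rw [cut_eq_zero (by positivity) hx]
    rw [zero_pow two_ne_zero]
    exact smoothTransition.nonneg _
end

/-! ### Hardy's inequality -/

section

/-- Fatou's lemma for a convergent sequence of functions with convergent bounds. -/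
lemma fatou_le {α : Type*} [MeasurableSpace α] {μ : Measure α} {f : ℕ → α → ℝ≥0∞} {F : α → ℝ≥0∞}
    (hm : ∀ k, Measurable (f k)) (hF : ∀ x, Tendsto (fun k => f k x) atTop (𝓝 (F x)))
    {R : ℕ → ℝ≥0∞} {R' : ℝ≥0∞} (hR : ∀ k, ∫⁻ x, f k x ∂μ ≤ R k) (hlim : Tendsto R atTop (𝓝 R')) :
    ∫⁻ x, F x ∂μ ≤ R' :=
  calc ∫⁻ x, F x ∂μ = ∫⁻ x, liminf (fun k => f k x) atTop ∂μ :=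
        lintegral_congr fun x => (hF x).liminf_eq.symm
    _ ≤ liminf (fun k => ∫⁻ x, f k x ∂μ) atTop := lintegral_liminf_le hm
    _ ≤ liminf R atTop := liminf_le_liminf (Eventually.of_forall hR)
    _ = R' := hlim.liminf_eq

lemma tendsto_err (R c : ℝ≥0∞) (hc : c ≠ ⊤) (B : ℝ) :
    Tendsto (fun k : ℕ => R + ENNReal.ofReal (B / ((k : ℝ) + 1)) * c) atTop (𝓝 R) := by
  have h1 : Tendsto (fun k : ℕ => B / ((k : ℝ) + 1)) atTop (𝓝 0) := by
    have := (tendsto_one_div_add_atTop_nhds_zero_nat (𝕜 := ℝ)).const_mul B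
    simpa [div_eq_mul_inv] using this
  have h2 : Tendsto (fun k : ℕ => ENNReal.ofReal (B / ((k : ℝ) + 1))) atTop (𝓝 0) := by
    simpa using ENNReal.tendsto_ofReal h1
  have h3 := ENNReal.Tendsto.mul_const (b := c) h2 (Or.inr hc)
  simpa using h3.const_add R

lemma tendsto_cut_mul {n : ℕ} (x : Eu n) (y : ℝ) :
    Tendsto (fun k : ℕ => ENNReal.ofReal (cut ((k : ℝ) + 1) x * y)) atTop
      (𝓝 (ENNReal.ofReal y)) := by
  have := (tendsto_cut x).mul_const y
  rw [one_mul] at this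
  exact (ENNReal.continuous_ofReal.tendsto _).comp this

lemma normsq_eq (x : Eu 4) : ‖x‖ ^ 2 = ∑ i, x i ^ 2 := EuclideanSpace.real_norm_sq_eq x

/-- Hardy's inequality in the exterior domain for functions vanishing on the boundary. -/
lemma hardy {ρ : Eu 4 → ℝ} (hρ : Sm ρ) (hg : ∀ x, ρ x = 0 → fderiv ℝ ρ x ≠ 0)
    {v : Eu 4 → ℝ} (hv : Sm v) (hb : ∀ x, ρ x = 0 → v x = 0)
    (hL : ∫⁻ x in {x | 0 ≤ ρ x}, ENNReal.ofReal (v x ^ 2) ≠ ⊤) :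
    ∫⁻ x in {x | 0 ≤ ρ x}, ENNReal.ofReal (jw 2 x * v x ^ 2)
      ≤ ∫⁻ x in {x | 0 ≤ ρ x}, ENNReal.ofReal (∑ i, sd i v x ^ 2) := by
  obtain ⟨B, hB0, hB⟩ := exists_st_bound
  refine fatou_le (f := fun k x => ENNReal.ofReal (cut ((k : ℝ) + 1) x * (jw 2 x * v x ^ 2)))
    (fun k => ((sm_cut _).cont.mul ((sm_jw 2).cont.mul (hv.cont.pow 2))).measurable.ennreal_ofReal)
    (fun x => tendsto_cut_mul x _) ?_ (tendsto_err _ _ hL (4 * B))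
  intro k
  set A : ℝ := (k : ℝ) + 1 with hAd
  have hA : 0 < A := by positivity
  have hc : Sm (cut A : Eu 4 → ℝ) := sm_cut A
  have hVs : ∀ i : Fin 4, Sm (fun x : Eu 4 => cut A x * (x i * (jw 2 x * (v x * v x)))) :=
    fun i => hc.mul ((sm_coord i).mul ((sm_jw 2).mul (hv.mul hv)))
  refine (lintegral_le_of_div hρ hg
    (V := fun i x => cut A x * (x i * (jw 2 x * (v x * v x)))) hVs
    (isCompact_JB (n := 4) (2 * A)) (fun i x hx => by rw [cut_eq_zero hA hx, zero_mul])
    (fun x hx => Finset.sum_eq_zero fun i _ => by rw [hb x hx]; ring)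
    (q := fun x => cut A x * (jw 2 x * v x ^ 2))
    (r := fun x => (∑ i, sd i v x ^ 2) + 4 * B / A * v x ^ 2)
    (hc.cont.mul ((sm_jw 2).cont.mul (hv.cont.pow 2)))
    (fun x => mul_nonneg (cut_nonneg _ _) (mul_nonneg (jw_pos 2 x).le (sq_nonneg _)))
    (fun x hx => by rw [cut_eq_zero hA hx, zero_mul]) ?_).trans (le_of_eq ?_)
  · intro x _
    have hd : ∀ i : Fin 4, sd i (fun x : Eu 4 => cut A x * (x i * (jw 2 x * (v x * v x)))) x
        = cut A x * (x i * (jw 2 x * (2 * v x * sd i v x) + (-2 * x i * jw 4 x) * v x ^ 2)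
            + jw 2 x * v x ^ 2) + sd i (cut A) x * x i * jw 2 x * v x ^ 2 := by
      intro i
      rw [sd_mul (u := cut A) hc ((sm_coord i).mul ((sm_jw 2).mul (hv.mul hv))),
        sd_mul (u := fun y : Eu 4 => y i) (sm_coord i) ((sm_jw 2).mul (hv.mul hv)),
        sd_mul (u := jw 2) (sm_jw 2) (hv.mul hv), sd_mul hv hv, sd_coord, sd_jw]
      norm_num
      ring
    have hs : ∀ i : Fin 4, - (B / A * v x ^ 2) ≤ sd i (cut A) x * x i * jw 2 x * v x ^ 2 := by
      intro i
      have h1 : |sd i (cut A) x * x i * jw 2 x| ≤ B / A := by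
        rw [mul_assoc, abs_mul, abs_mul, abs_of_pos (jw_pos 2 x)]
        have h2 := abs_coord_mul_jw 1 x i
        norm_num at h2
        have h3 := jw_le_one (p := 1) (by norm_num) x
        have h4 := abs_sd_cut hB hA i x
        calc _ ≤ B / A * 1 := mul_le_mul h4 (h2.trans h3)
              (mul_nonneg (abs_nonneg _) (jw_pos 2 x).le) (by positivity)
          _ = _ := mul_one _
      have := mul_le_mul_of_nonneg_right (abs_le.1 h1).1 (sq_nonneg (v x))
      linarith
    have hj := normsq_mul_jw 2 x
    norm_num at hj
    rw [normsq_eq] at hj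
    have hj4 := jw_pos 4 x
    have hj2 := jw_pos 2 x
    have hj42 : jw 2 x ≤ 1 := jw_le_one (by norm_num) x
    have hx2 : (∑ i, x i ^ 2) * jw 2 x ≤ 1 := by
      have := normsq_mul_jw 0 x
      rw [jw_zero, normsq_eq] at this
      norm_num at this
      linarith
    simp only [hd, Finset.sum_add_distrib]
    have h0 := cut_nonneg A x
    have h1 := cut_le_one A x
    set c := cut A x
    set j2 := jw 2 x
    set j4 := jw 4 x
    set vx := v x
    -- the squared deviation `∑ (v x_i j₂ + ∂_i v)²` absorbs the cross term
    have hsq : ∀ i : Fin 4, - (j2 * vx ^ 2 * (x i ^ 2 * j2)) - sd i v x ^ 2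
        ≤ x i * (j2 * (2 * vx * sd i v x)) := by
      intro i
      nlinarith [sq_nonneg (vx * x i * j2 + sd i v x)]
    have hs' := fun i => mul_le_mul_of_nonneg_left (hsq i) h0
    have hv2 : (∑ i, x i ^ 2) * j2 * (j2 * vx ^ 2) ≤ 1 * (j2 * vx ^ 2) :=
      mul_le_mul_of_nonneg_right hx2 (by positivity)
    have hv3 := mul_le_mul_of_nonneg_left hv2 h0
    have hj' : (∑ i, x i ^ 2) * j4 * (c * vx ^ 2) = (j2 - j4) * (c * vx ^ 2) := by rw [hj]
    have hg' : c * ∑ i, sd i v x ^ 2 ≤ ∑ i, sd i v x ^ 2 :=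
      mul_le_of_le_one_left (Finset.sum_nonneg fun i _ => sq_nonneg _) h1
    have hp : 0 ≤ j4 * (c * vx ^ 2) := by positivity
    have e0 := hs' 0
    have e1 := hs' 1
    have e2 := hs' 2
    have e3 := hs' 3
    have f0 := hs 0
    have f1 := hs 1
    have f2 := hs 2
    have f3 := hs 3
    simp only [Fin.sum_univ_four] at hv3 hj' hg' ⊢
    have : 4 * B / A * vx ^ 2 = 4 * (B / A * vx ^ 2) := by ring
    rw [this]
    linarith
  · rw [← lintegral_const_mul' _ _ ENNReal.ofReal_ne_top, ← lintegral_add_left]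
    · refine lintegral_congr fun x => ?_
      rw [ENNReal.ofReal_add (Finset.sum_nonneg fun i _ => sq_nonneg _) (by positivity),
        ENNReal.ofReal_mul (by positivity)]
    · exact (continuous_finsetSum _ fun i _ => (sm_sd hv i).cont.pow 2).measurable.ennreal_ofReal

/-- The `L²` norm of a function grows at most exponentially when its time derivative is bounded in
`L²`; in particular it stays finite, which is all that is asserted. -/
lemma L2_growth {ρ : Eu 4 → ℝ} (hρ : Sm ρ) (hg : ∀ x, ρ x = 0 → fderiv ℝ ρ x ≠ 0)
    {ψ : ℝ → Eu 4 → ℝ} (hψ : SmoothTX ψ) {X : ℝ≥0∞} (hX : X ≠ ⊤) {T : ℝ}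
    (hG : ∀ t ∈ Icc 0 T, L2x {x | 0 ≤ ρ x} (gradMag ψ t) ≤ X)
    (h0 : L2x {x | 0 ≤ ρ x} (ψ 0) ≠ ⊤) {τ : ℝ} (hτ : τ ∈ Icc 0 T) :
    ∫⁻ x in {x | 0 ≤ ρ x}, ENNReal.ofReal (ψ τ x ^ 2) ≠ ⊤ := by
  set S : Set (Eu 4) := {x | 0 ≤ ρ x} with hS
  set R : ℝ≥0∞ := L2x S (ψ 0) ^ 2 + X ^ 2 * volume (Icc 0 τ) with hR
  have hRtop : R ≠ ⊤ := by
    refine ENNReal.add_ne_top.2 ⟨ENNReal.pow_ne_top h0, ENNReal.mul_ne_top (ENNReal.pow_ne_top hX) ?_⟩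
    exact isCompact_Icc.measure_ne_top
  have key : ∫⁻ x in S, ENNReal.ofReal (rexp (-τ) * ψ τ x ^ 2) ≤ R := by
    refine fatou_le
      (f := fun k x => ENNReal.ofReal (cut ((k : ℝ) + 1) x * (rexp (-τ) * ψ τ x ^ 2)))
      (fun k => ((sm_cut _).cont.mul
        (continuous_const.mul ((stx_slice hψ τ).cont.pow 2))).measurable.ennreal_ofReal)
      (fun x => tendsto_cut_mul x _) ?_ tendsto_const_nhds
    intro k
    set A : ℝ := (k : ℝ) + 1 with hAd
    have hA : 0 < A := by positivity
    have hexp : SmoothTX (n := 4) fun t _ => rexp (-t) :=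
      (Real.contDiff_exp.comp contDiff_neg).comp contDiff_fst
    have hc : SmoothTX (n := 4) fun _ x => cut A x := stx_static (sm_cut A)
    have hP : SmoothTX fun t x => cut A x * (rexp (-t) * (ψ t x * ψ t x)) :=
      stx_mul hc (stx_mul hexp (stx_mul hψ hψ))
    have hcont : ∀ t, Continuous fun x => cut A x * (rexp (-t) * (ψ t x * ψ t x)) :=
      fun t => (stx_slice hP t).cont
    have hint : ∀ t, Integrable fun x => cut A x * (rexp (-t) * (ψ t x * ψ t x)) := fun t =>
      (hcont t).integrable_of_hasCompactSupport
        (HasCompactSupport.intro (isCompact_JB (n := 4) (2 * A)) fun x hx => by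
          rw [cut_eq_zero hA hx, zero_mul])
    have h1 := spacetime_div hρ hg (P := fun t x => cut A x * (rexp (-t) * (ψ t x * ψ t x)))
      (V := fun _ _ _ => 0) hP (fun _ => stx_const 0) (isCompact_JB (n := 4) (2 * A))
      (fun t x _ hx => by rw [cut_eq_zero hA hx, zero_mul]) (fun _ _ _ _ _ => rfl)
      (fun _ _ _ _ => by simp) (q := fun _ _ => 0) (r := fun t x => gradMag ψ t x ^ 2)
      continuous_const (fun _ _ _ _ => rfl)
      (fun t x ht _ => by
        have he : td (n := 4) (fun t _ => rexp (-t)) t x = - rexp (-t) := by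
          unfold td
          have := ((Real.hasDerivAt_exp (-t)).comp t (hasDerivAt_neg t)).deriv
          rw [show (fun s => rexp (-s)) = rexp ∘ Neg.neg from rfl, this]; ring
        rw [← pd_zero, pd_mul (u := fun _ x => cut A x) hc (stx_mul hexp (stx_mul hψ hψ)),
          pd_mul (u := fun t _ => rexp (-t)) hexp (stx_mul hψ hψ), pd_mul hψ hψ, pd_zero,
          pd_zero, pd_zero, he, td_static]
        simp only [sd_const, Finset.sum_const_zero]
        have h2 := abs_pd_le ψ 0 t x
        rw [pd_zero] at h2
        have h3 : td ψ t x ^ 2 ≤ gradMag ψ t x ^ 2 := sq_le_sq' (by linarith [abs_le.1 h2])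
          (by linarith [abs_le.1 h2])
        have h4 := cut_nonneg A x
        have h5 := cut_le_one A x
        have h6 : rexp (-t) ≤ 1 := Real.exp_le_one_iff.2 (by linarith)
        have h7 := Real.exp_pos (-t)
        have h8 : cut A x * rexp (-t) ≤ 1 := mul_le_one₀ h5 h7.le h6
        have h9 : 0 ≤ cut A x * rexp (-t) := by positivity
        nlinarith [mul_nonneg h9 (sq_nonneg (ψ t x - td ψ t x)),
          mul_nonneg (sub_nonneg.2 h8) (sq_nonneg (td ψ t x))])
      hτ.1
    simp only [integral_zero, add_zero] at h1
    rw [ofReal_integral_eq_lintegral_ofReal (hint τ).integrableOn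
      (Eventually.of_forall fun x => mul_nonneg (cut_nonneg _ _)
        (mul_nonneg (Real.exp_pos _).le (mul_self_nonneg _)))] at h1
    simp only [sq]
    refine h1.trans ?_
    rw [hR]
    refine add_le_add ?_ ?_
    · refine (ofReal_integral_le (hint 0).integrableOn).trans ?_
      rw [L2x_sq]
      refine lintegral_mono fun x => ENNReal.ofReal_le_ofReal ?_
      simp only [neg_zero, Real.exp_zero, one_mul, ← sq]
      exact mul_le_of_le_one_left (sq_nonneg _) (cut_le_one _ _)
    · rw [← setLIntegral_const]
      refine setLIntegral_mono' measurableSet_Icc fun t ht => ?_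
      rw [← L2x_sq]
      gcongr
      exact hG t ⟨ht.1, ht.2.trans hτ.2⟩
  intro htop
  have h2 : ∫⁻ x in S, ENNReal.ofReal (rexp (-τ) * ψ τ x ^ 2)
      = ENNReal.ofReal (rexp (-τ)) * ∫⁻ x in S, ENNReal.ofReal (ψ τ x ^ 2) := by
    rw [← lintegral_const_mul' _ _ ENNReal.ofReal_ne_top]
    exact lintegral_congr fun x => ENNReal.ofReal_mul (Real.exp_pos _).le
  rw [h2, htop, ENNReal.mul_top (by simpa using Real.exp_pos _)] at key
  exact hRtop (top_le_iff.1 key)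
end

/-! ### The Morawetz estimate -/

section
variable {h : Fin 5 → Fin 5 → ℝ → Eu 4 → ℝ}

/-- The radial multiplier is `x a(x)` with `a = 100⟨x⟩⁻¹ - ⟨x⟩⁻¹⁻ᵈ`. -/
def ka (d : ℝ) (x : Eu 4) : ℝ := 100 * jw 1 x - jw (1 + d) x

/-- The function `b` with `∇a = -b x`, where `a` is `ka d`. -/
def kb (d : ℝ) (x : Eu 4) : ℝ := 100 * jw 3 x - (1 + d) * jw (3 + d) x

/-- The zeroth order part of the multiplier, `½ div (x a) - (d/2)⟨x⟩⁻¹⁻ᵈ`. -/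
def ko (d : ℝ) (x : Eu 4) : ℝ :=
  150 * jw 1 x + 50 * jw 3 x - 3 / 2 * jw (1 + d) x - (1 + d) / 2 * jw (3 + d) x

/-- The function `c` with `∇ω₀ = c x`, where `ω₀` is `ko d`. -/
def kc (d : ℝ) (x : Eu 4) : ℝ :=
  -150 * jw 3 x - 150 * jw 5 x + 3 / 2 * (1 + d) * jw (3 + d) x
    + (1 + d) * (3 + d) / 2 * jw (5 + d) x

/-- The function `e` with `∇c = e x`, where `c` is `kc d`. -/
def ke (d : ℝ) (x : Eu 4) : ℝ :=
  450 * jw 5 x + 750 * jw 7 x - 3 / 2 * (1 + d) * (3 + d) * jw (5 + d) x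
    - (1 + d) * (3 + d) * (5 + d) / 2 * jw (7 + d) x

lemma sm_cjw (c p : ℝ) : Sm (fun x : Eu 4 => c * jw p x) := contDiff_const.mul (sm_jw p)

lemma sd_cjw (c p q : ℝ) (hq : q = p + 2) (i : Fin 4) (x : Eu 4) :
    sd i (fun x : Eu 4 => c * jw p x) x = - (c * p) * x i * jw q x := by
  rw [sd_mul (u := fun _ => c) contDiff_const (sm_jw p), sd_const, sd_jw, hq]; ring

lemma sm_ka (d : ℝ) : Sm (ka d) := (sm_cjw _ _).sub (sm_jw _)
lemma sm_ko (d : ℝ) : Sm (ko d) :=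
  (((sm_cjw _ _).add (sm_cjw _ _)).sub (sm_cjw _ _)).sub (sm_cjw _ _)
lemma sm_kc (d : ℝ) : Sm (kc d) :=
  (((sm_cjw _ _).sub (sm_cjw _ _)).add (sm_cjw _ _)).add (sm_cjw _ _)

lemma sd_ka (d : ℝ) (i : Fin 4) (x : Eu 4) : sd i (ka d) x = - kb d x * x i := by
  unfold ka kb
  rw [sd_sub (u := fun x => 100 * jw 1 x) (sm_cjw _ _) (sm_jw _), sd_cjw 100 1 3 (by norm_num),
    sd_jw, show 1 + d + 2 = 3 + d by ring]
  ring

lemma sd_ko (d : ℝ) (i : Fin 4) (x : Eu 4) : sd i (ko d) x = x i * kc d x := by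
  unfold ko kc
  rw [sd_sub (u := fun x => 150 * jw 1 x + 50 * jw 3 x - 3 / 2 * jw (1 + d) x)
      (((sm_cjw _ _).add (sm_cjw _ _)).sub (sm_cjw _ _)) (sm_cjw _ _),
    sd_sub (u := fun x => 150 * jw 1 x + 50 * jw 3 x)
      ((sm_cjw _ _).add (sm_cjw _ _)) (sm_cjw _ _),
    sd_add (u := fun x => 150 * jw 1 x) (sm_cjw _ _) (sm_cjw _ _),
    sd_cjw 150 1 3 (by norm_num), sd_cjw 50 3 5 (by norm_num),
    sd_cjw _ (1 + d) (3 + d) (by ring), sd_cjw _ (3 + d) (5 + d) (by ring)]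
  ring

lemma sd_kc (d : ℝ) (i : Fin 4) (x : Eu 4) : sd i (kc d) x = x i * ke d x := by
  unfold kc ke
  rw [sd_add (u := fun x => -150 * jw 3 x - 150 * jw 5 x + 3 / 2 * (1 + d) * jw (3 + d) x)
      (((sm_cjw _ _).sub (sm_cjw _ _)).add (sm_cjw _ _)) (sm_cjw _ _),
    sd_add (u := fun x => -150 * jw 3 x - 150 * jw 5 x)
      ((sm_cjw _ _).sub (sm_cjw _ _)) (sm_cjw _ _),
    sd_sub (u := fun x => -150 * jw 3 x) (sm_cjw _ _) (sm_cjw _ _),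
    sd_cjw (-150) 3 5 (by norm_num), sd_cjw 150 5 7 (by norm_num),
    sd_cjw _ (3 + d) (5 + d) (by ring), sd_cjw _ (5 + d) (7 + d) (by ring)]
  ring

lemma jw_shift {d : ℝ} (hd : 0 ≤ d) (p : ℝ) (x : Eu 4) : jw (p + d) x ≤ jw p x :=
  jw_anti (by linarith) x

/-- Pointwise properties of the multiplier. -/
lemma k_bounds {d : ℝ} (hd : 0 ≤ d) (hd1 : d ≤ 1 / 2) (x : Eu 4) :
    0 ≤ ka d x ∧ ka d x ≤ 100 * jw 1 x ∧ 0 ≤ kb d x ∧ ‖x‖ ^ 2 * kb d x ≤ 100 * jw 1 x ∧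
    d * jw (1 + d) x ≤ ka d x - ‖x‖ ^ 2 * kb d x ∧
    |ko d x| ≤ 300 * jw 1 x ∧ |kc d x| ≤ 400 * jw 3 x ∧
    4 * kc d x + ‖x‖ ^ 2 * ke d x ≤ - jw 3 x := by
  have a1 := jw_shift hd 1 x
  have a3 := jw_shift hd 3 x
  have a5 := jw_shift hd 5 x
  have a7 := jw_shift hd 7 x
  have p1 := jw_pos (1 + d) x
  have p3 := jw_pos (3 + d) x
  have p5 := jw_pos (5 + d) x
  have p7 := jw_pos (7 + d) x
  have o31 := jw_anti (show (1:ℝ) ≤ 3 by norm_num) x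
  have o53 := jw_anti (show (3:ℝ) ≤ 5 by norm_num) x
  have q5 := jw_pos 5 x
  have q7 := jw_pos 7 x
  have n1 := normsq_mul_jw 1 x
  have n3 := normsq_mul_jw 3 x
  have n5 := normsq_mul_jw 5 x
  have m1 := normsq_mul_jw (1 + d) x
  have m3 := normsq_mul_jw (3 + d) x
  have m5 := normsq_mul_jw (5 + d) x
  norm_num at n1 n3 n5
  rw [show 1 + d + 2 = 3 + d by ring] at m1
  rw [show 3 + d + 2 = 5 + d by ring] at m3
  rw [show 5 + d + 2 = 7 + d by ring] at m5
  have hx := sq_nonneg ‖x‖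
  unfold ka kb ko kc ke
  set r := ‖x‖ ^ 2
  have d3 : (1 + d) * jw (3 + d) x ≤ 2 * jw 3 x := by nlinarith
  have d30 : 0 ≤ (1 + d) * jw (3 + d) x := by positivity
  have d5 : (1 + d) * (3 + d) * jw (5 + d) x ≤ 6 * jw 5 x := by
    have : (1 + d) * (3 + d) ≤ 6 := by nlinarith
    have h2 := mul_le_mul this a5 p5.le (by norm_num)
    linarith
  have d50 : 0 ≤ (1 + d) * (3 + d) * jw (5 + d) x := by positivity
  have d7 : (1 + d) * (3 + d) * (5 + d) * jw (7 + d) x ≤ 40 * jw 7 x := by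
    have h1 : (1 + d) * (3 + d) ≤ 6 := by nlinarith
    have : (1 + d) * (3 + d) * (5 + d) ≤ 40 := by nlinarith
    have h2 := mul_le_mul this a7 p7.le (by norm_num)
    linarith
  have d70 : 0 ≤ (1 + d) * (3 + d) * (5 + d) * jw (7 + d) x := by positivity
  have hkb : 0 ≤ 100 * jw 3 x - (1 + d) * jw (3 + d) x := by linarith [jw_pos 3 x]
  have e1 : r * (100 * jw 3 x - (1 + d) * jw (3 + d) x)
      = 100 * (jw 1 x - jw 3 x) - (1 + d) * (jw (1 + d) x - jw (3 + d) x) := by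
    rw [← n1, ← m1]; ring
  have hm1 : 0 ≤ (1 + d) * (jw (1 + d) x - jw (3 + d) x) := by
    rw [← m1]; positivity
  refine ⟨by linarith [jw_pos 1 x], by linarith, hkb, by rw [e1]; linarith [jw_pos 3 x], ?_, ?_,
    ?_, ?_⟩
  · rw [e1]; linarith [jw_pos 3 x]
  · rw [abs_le]; constructor <;> linarith [jw_pos 1 x, jw_pos 3 x]
  · rw [abs_le]; constructor <;> linarith [jw_pos 3 x]
  · have e2 : r * (450 * jw 5 x + 750 * jw 7 x - 3 / 2 * (1 + d) * (3 + d) * jw (5 + d) x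
        - (1 + d) * (3 + d) * (5 + d) / 2 * jw (7 + d) x)
        = 450 * (jw 3 x - jw 5 x) + 750 * (jw 5 x - jw 7 x)
          - 3 / 2 * (1 + d) * (3 + d) * (jw (3 + d) x - jw (5 + d) x)
          - (1 + d) * (3 + d) * (5 + d) / 2 * (jw (5 + d) x - jw (7 + d) x) := by
      rw [← n3, ← n5, ← m3, ← m5]; ring
    rw [e2]
    have f3 : 0 ≤ d * ((1 + d) * jw (3 + d) x) := by positivity
    have f5 : 0 ≤ d * ((1 + d) * (3 + d) * jw (5 + d) x) := by positivity
    linarith [jw_pos 3 x]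

/-- The Morawetz multiplier field, cut off by `χ`. -/
def kY (χ : Eu 4 → ℝ) (d : ℝ) (γ : Fin 5) : ℝ → Eu 4 → ℝ :=
  Fin.cases (fun _ _ => 0) (fun i _ x => χ x * (x i * ka d x)) γ

/-- The zeroth order part of the multiplier, cut off by `χ`. -/
def kW (χ : Eu 4 → ℝ) (d : ℝ) : ℝ → Eu 4 → ℝ := fun _ x => χ x * ko d x

variable {χ : Eu 4 → ℝ}

lemma stx_kY (hχ : Sm χ) (d : ℝ) (γ : Fin 5) : SmoothTX (kY χ d γ) := by
  refine Fin.cases (stx_const 0) (fun i => ?_) γ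
  exact stx_static (hχ.mul ((sm_coord i).mul (sm_ka d)))

lemma stx_kW (hχ : Sm χ) (d : ℝ) : SmoothTX (kW χ d) := stx_static (hχ.mul (sm_ko d))

lemma pd_static_zero (v : Eu 4 → ℝ) (t : ℝ) (x : Eu 4) : pd (n := 4) 0 (fun _ x => v x) t x = 0 := by
  rw [pd_zero, td_static]

lemma pd_kY_zero (d : ℝ) (γ : Fin 5) (t : ℝ) (x : Eu 4) : pd (n := 4) 0 (kY χ d γ) t x = 0 :=
  Fin.cases (pd_const 0 0 t x) (fun i => pd_static_zero _ t x) γ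

lemma pd_kY_zero' (d : ℝ) (α : Fin 5) (t : ℝ) (x : Eu 4) : pd (n := 4) α (kY χ d 0) t x = 0 :=
  pd_const 0 α t x

lemma pd_kY (hχ : Sm χ) (d : ℝ) (i j : Fin 4) (t : ℝ) (x : Eu 4) :
    pd (n := 4) i.succ (kY χ d j.succ) t x
      = sd i χ x * (x j * ka d x)
        + χ x * ((if i = j then ka d x else 0) - x i * x j * kb d x) := by
  rw [pd_succ]
  change sd i (fun x => χ x * (x j * ka d x)) x = _
  rw [sd_mul hχ ((sm_coord j).mul (sm_ka d)), sd_mul (u := fun x => x j) (sm_coord j) (sm_ka d),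
    sd_coord, sd_ka]
  split_ifs <;> ring

lemma pd_kW (hχ : Sm χ) (d : ℝ) (i : Fin 4) (t : ℝ) (x : Eu 4) :
    pd (n := 4) i.succ (kW χ d) t x = sd i χ x * ko d x + χ x * (x i * kc d x) := by
  rw [pd_succ]
  change sd i (fun x => χ x * ko d x) x = _
  rw [sd_mul hχ (sm_ko d), sd_ko]; ring

/-- The correction `½ χ ∂_i ω₀ ψ²` of the spatial current. -/
def kV (χ : Eu 4 → ℝ) (d : ℝ) (ψ : ℝ → Eu 4 → ℝ) (i : Fin 4) : ℝ → Eu 4 → ℝ :=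
  fun t x => 1 / 2 * (χ x * (x i * kc d x)) * (ψ t x * ψ t x)

lemma stx_kV (hχ : Sm χ) (d : ℝ) {ψ : ℝ → Eu 4 → ℝ} (hψ : SmoothTX ψ) (i : Fin 4) :
    SmoothTX (kV χ d ψ i) :=
  stx_mul (stx_static (contDiff_const.mul (hχ.mul ((sm_coord i).mul (sm_kc d))))) (stx_mul hψ hψ)

lemma sd_kV (hχ : Sm χ) (d : ℝ) {ψ : ℝ → Eu 4 → ℝ} (hψ : SmoothTX ψ) (i : Fin 4) (t : ℝ)
    (x : Eu 4) :
    sd i (kV χ d ψ i t) x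
      = 1 / 2 * (sd i χ x * (x i * kc d x) + χ x * (kc d x + x i ^ 2 * ke d x)) * ψ t x ^ 2
        + χ x * (x i * kc d x) * ψ t x * pd (n := 4) i.succ ψ t x := by
  have h1 := (stx_slice hψ t)
  have h2 : Sm fun x : Eu 4 => χ x * (x i * kc d x) := hχ.mul ((sm_coord i).mul (sm_kc d))
  unfold kV
  rw [sd_mul (u := fun x => 1 / 2 * (χ x * (x i * kc d x))) (contDiff_const.mul h2) (h1.mul h1),
    sd_mul (u := fun _ => 1 / 2) contDiff_const h2, sd_const,
    sd_mul hχ ((sm_coord i).mul (sm_kc d)), sd_mul (u := fun x => x i) (sm_coord i) (sm_kc d),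
    sd_coord, sd_kc, sd_mul h1 h1, pd_succ]
  simp only [if_true]
  ring
end

section
variable {h : Fin 5 → Fin 5 → ℝ → Eu 4 → ℝ} {χ : Eu 4 → ℝ}

lemma ko_eq (d : ℝ) (x : Eu 4) :
    ko d x = 1 / 2 * (4 * ka d x - ‖x‖ ^ 2 * kb d x) - d / 2 * jw (1 + d) x := by
  have n1 := normsq_mul_jw 1 x
  have m1 := normsq_mul_jw (1 + d) x
  norm_num at n1
  rw [show 1 + d + 2 = 3 + d by ring] at m1
  have e1 : ‖x‖ ^ 2 * kb d x
      = 100 * (jw 1 x - jw 3 x) - (1 + d) * (jw (1 + d) x - jw (3 + d) x) := by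
    rw [← n1, ← m1]; unfold kb; ring
  rw [e1]
  unfold ko ka
  ring

lemma abs_sum_four_le {f : Fin 4 → ℝ} {b : ℝ} (hf : ∀ i, |f i| ≤ b) : |∑ i, f i| ≤ 4 * b := by
  refine (Finset.abs_sum_le_sum_abs _ _).trans ((Finset.sum_le_sum fun i _ => hf i).trans ?_)
  simp

lemma morawetz_sum (c x p : Fin 4 → ℝ) (X a b χ q : ℝ) :
    ∑ i, (c i * X + χ * (a * p i - x i * b * q)) * p i
      = (∑ i, c i * p i) * X + χ * (a * ∑ i, p i ^ 2 - b * q * ∑ i, x i * p i) := by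
  simp only [Fin.sum_univ_four]; ring

lemma coord_jw_one (x : Eu 4) (i : Fin 4) : |x i| * jw 1 x ≤ 1 := by
  have := abs_coord_mul_jw 0 x i
  rwa [zero_add, jw_zero] at this

lemma mulZ_k (χ : Eu 4 → ℝ) (d : ℝ) (ψ : ℝ → Eu 4 → ℝ) (t : ℝ) (x : Eu 4) :
    mulZ (kY χ d) (kW χ d) ψ t x
      = χ x * (ka d x * ∑ i : Fin 4, x i * pd (n := 4) i.succ ψ t x + ko d x * ψ t x) := by
  unfold mulZ
  rw [Fin.sum_univ_succ]
  simp only [kY, kW, Fin.cases_zero, Fin.cases_succ, zero_mul, zero_add]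
  rw [mul_add, Finset.mul_sum, Finset.mul_sum]
  congr 1
  · exact Finset.sum_congr rfl fun i _ => by ring
  · ring

lemma mulZ_k_le {d : ℝ} (hd : 0 ≤ d) (hd1 : d ≤ 1 / 2) {x : Eu 4} (h0 : 0 ≤ χ x) (h1 : χ x ≤ 1)
    (ψ : ℝ → Eu 4 → ℝ) (t : ℝ) :
    |mulZ (kY χ d) (kW χ d) ψ t x| ≤ 400 * (gradMag ψ t x + jw 1 x * |ψ t x|) := by
  obtain ⟨a0, a1, -, -, -, o1, -, -⟩ := k_bounds hd hd1 x
  have hG := gradMag_nonneg ψ t x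
  have hj := jw_pos 1 x
  rw [mulZ_k, abs_mul, abs_of_nonneg h0]
  have e1 : |ka d x * ∑ i : Fin 4, x i * pd (n := 4) i.succ ψ t x| ≤ 400 * gradMag ψ t x := by
    rw [Finset.mul_sum]
    refine (abs_sum_four_le (b := 100 * gradMag ψ t x) fun i => ?_).trans (by linarith)
    rw [abs_mul, abs_mul, abs_of_nonneg a0, ← mul_assoc]
    refine mul_le_mul ?_ (abs_pd_le ψ _ t x) (abs_nonneg _) (by norm_num)
    have := mul_le_mul_of_nonneg_right a1 (abs_nonneg (x i))
    linarith [coord_jw_one x i]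
  have e2 : |ko d x * ψ t x| ≤ 300 * jw 1 x * |ψ t x| := by
    rw [abs_mul]; exact mul_le_mul_of_nonneg_right o1 (abs_nonneg _)
  have e3 := abs_add_le (ka d x * ∑ i : Fin 4, x i * pd (n := 4) i.succ ψ t x) (ko d x * ψ t x)
  have e4 : 0 ≤ jw 1 x * |ψ t x| := by positivity
  refine (mul_le_of_le_one_left (abs_nonneg _) h1).trans ?_
  linarith

set_option maxHeartbeats 1000000 in
/-- The scalar estimate behind the pointwise Morawetz inequality: the cutoff enters through `χ` and
the bound `s` on its gradient, everything else is a quadratic form in `(G, u)`, `u = j|y|`. -/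
lemma kss_alg {B Z D1 D2 H2 H3 H4 Q G y j j1 j3 hb dh p0 a b c o e r χ d s xp cp cx Sp : ℝ}
    (hs0 : 0 ≤ s) (h0 : 0 ≤ χ) (h1 : χ ≤ 1) (hd : 0 ≤ d) (hd1 : d ≤ 1 / 2) (hG0 : 0 ≤ G)
    (hj : 0 < j) (hj1d : 0 < j1) (hj1d' : j1 ≤ j) (hb0 : 0 ≤ hb) (hδ : hb ≤ 1 / 100) (hd0 : 0 ≤ dh)
    (b0 : 0 ≤ b) (ab : d * j1 ≤ a - r * b) (o1 : |o| ≤ 300 * j) (ce : 4 * c + r * e ≤ -j3)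
    (hZ : |Z| ≤ 400 * (G + j * |y|)) (hxpa : |a * xp| ≤ 400 * G) (hcpb : |cp| ≤ 4 * (s * G))
    (hcxa : |a * cx| ≤ 400 * s) (hcxc : |c * cx| ≤ 1600 * (s * (j * j)))
    (h2 : |H3| ≤ hb * ((400 * s + 500 * j) * G) * G)
    (h3 : |H4| ≤ hb * (300 * s * j + 400 * (j * j)) * G) (h4 : |H2| ≤ hb * G * G)
    (h5 : Q = p0 ^ 2 - Sp + H2) (h6 : G ^ 2 = p0 ^ 2 + Sp) (h7 : |D1| ≤ dh * G)
    (h8 : |D2| ≤ dh * 100 * G ^ 2) (hCS : xp ^ 2 ≤ r * Sp) (hSp0 : 0 ≤ Sp)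
    (hko : o = 1 / 2 * (4 * a - r * b) - d / 2 * j1) :
    B * Z + D1 * Z + (-(cp * (a * xp) + χ * (a * Sp - b * xp ^ 2)) + H3)
        + (-(cp * o + χ * (c * xp)) + H4) * y + χ * o * Q
        - 1 / 2 * (a * cx + χ * (4 * a - r * b)) * Q - 1 / 2 * D2
        + (1 / 2 * (c * cx + χ * (4 * c + r * e)) * y ^ 2 + χ * (c * xp) * y)
        + χ * (d / 2 * j1 * G ^ 2 + 1 / 2 * j3 * y ^ 2)
      ≤ 10000 * ((|B| + (dh + hb * j) * G) * (G + j * |y|)) + 10000 * s * (G + j * |y|) ^ 2 := by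
  set u := j * |y| with hu
  have hu0 : 0 ≤ u := by positivity
  have huy : u ^ 2 = j * j * y ^ 2 := by rw [hu, mul_pow, sq_abs]; ring
  -- the source terms
  have t1 : B * Z ≤ |B| * (400 * (G + u)) := by
    refine (le_abs_self _).trans ?_
    rw [abs_mul]; exact mul_le_mul_of_nonneg_left hZ (abs_nonneg _)
  have t2 : D1 * Z ≤ dh * G * (400 * (G + u)) := by
    refine (le_abs_self _).trans ?_
    rw [abs_mul]; exact mul_le_mul h7 hZ (abs_nonneg _) (by positivity)
  have t3 : -(cp * (a * xp)) ≤ 4 * (s * G) * (400 * G) := by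
    refine (neg_le_abs _).trans ?_
    rw [abs_mul]; exact mul_le_mul hcpb hxpa (abs_nonneg _) (by positivity)
  have t4 : χ * (d * j1 * Sp) ≤ χ * (a * Sp - b * xp ^ 2) := by
    refine mul_le_mul_of_nonneg_left ?_ h0
    have e1 := mul_le_mul_of_nonneg_left hCS b0
    have e2 := mul_le_mul_of_nonneg_right ab hSp0
    linarith
  have t5 : H3 ≤ hb * (4 * s + 500 * j) * G * G + 400 * s * G * G := by
    have e1 := (le_abs_self _).trans h2
    have e2 : hb * (s * G * G) ≤ 1 * (s * G * G) :=
      mul_le_mul_of_nonneg_right (by linarith) (by positivity)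
    have e3 : 0 ≤ hb * (s * G * G) := by positivity
    linarith
  have t6 : -(cp * o) * y ≤ 4 * (s * G) * (300 * u) := by
    refine (le_abs_self _).trans ?_
    rw [abs_mul, abs_neg, abs_mul]
    have e1 := mul_le_mul hcpb o1 (abs_nonneg _) (by positivity)
    have e2 := mul_le_mul_of_nonneg_right e1 (abs_nonneg y)
    rw [hu]; linarith
  have t7 : H4 * y ≤ hb * (300 * s + 400 * j) * G * u := by
    refine (le_abs_self _).trans ?_
    rw [abs_mul]
    have e1 := mul_le_mul_of_nonneg_right h3 (abs_nonneg y)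
    rw [hu]; linarith
  have hQ : |Q| ≤ 2 * G ^ 2 := by
    have e1 := abs_le.1 h4
    have e2 : hb * (G * G) ≤ 1 * (G * G) :=
      mul_le_mul_of_nonneg_right (by linarith) (by positivity)
    rw [abs_le]
    constructor <;> nlinarith [sq_nonneg p0]
  have t8 : -(1 / 2 * (a * cx) * Q) ≤ 400 * s * G ^ 2 := by
    have e1 := mul_le_mul hcxa hQ (abs_nonneg _) (by positivity)
    rw [← abs_mul] at e1
    have e2 := neg_le_abs (a * cx * Q)
    linarith
  have t9 : 1 / 2 * (c * cx) * y ^ 2 ≤ 800 * s * u ^ 2 := by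
    have e1 := mul_le_mul_of_nonneg_right ((le_abs_self _).trans hcxc) (sq_nonneg y)
    rw [huy]; linarith
  have t10 : χ * (4 * c + r * e) * y ^ 2 ≤ - (χ * j3 * y ^ 2) := by
    have e1 := mul_le_mul_of_nonneg_right (mul_le_mul_of_nonneg_left ce h0) (sq_nonneg y)
    linarith
  have t11 : - (χ * (d / 2 * j1) * H2) ≤ hb * j * G * G := by
    refine (neg_le_abs _).trans ?_
    have e1 : χ * (d / 2 * j1) ≤ 1 * j := by
      refine mul_le_mul h1 ?_ (by positivity) zero_le_one
      nlinarith
    rw [abs_mul, abs_of_nonneg (by positivity)]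
    have e2 := mul_le_mul e1 h4 (abs_nonneg _) (by linarith)
    linarith
  have t12 := (abs_le.1 h8).1
  have e5 : χ * o * Q - 1 / 2 * (a * cx + χ * (4 * a - r * b)) * Q
      = - (1 / 2 * (a * cx) * Q) - χ * (d / 2 * j1) * (p0 ^ 2 - Sp + H2) := by
    rw [← h5, hko]; ring
  have n1 : 0 ≤ |B| * G := by positivity
  have n2 : 0 ≤ |B| * u := by positivity
  have n3 : 0 ≤ dh * G * G := by positivity
  have n4 : 0 ≤ dh * G * u := by positivity
  have n5 : 0 ≤ hb * j * G * G := by positivity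
  have n6 : 0 ≤ hb * j * G * u := by positivity
  have n7 : 0 ≤ s * G * G := by positivity
  have n8 : 0 ≤ s * G * u := by positivity
  have n9 : 0 ≤ s * u ^ 2 := by positivity
  have n10 : hb * (s * G * u) ≤ 1 * (s * G * u) :=
      mul_le_mul_of_nonneg_right (by linarith) (by positivity)
  have n11 : hb * (s * G * G) ≤ 1 * (s * G * G) :=
      mul_le_mul_of_nonneg_right (by linarith) (by positivity)
  rw [h6]
  have e6 : G * G = p0 ^ 2 + Sp := by rw [← h6]; ring
  linarith

set_option maxHeartbeats 1000000 in
/-- The pointwise Morawetz inequality: the divergence of the corrected current is at most the source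
terms minus the positive bulk term, up to an error carrying a derivative of the cutoff. -/
lemma kss_div (hh : ∀ α β, SmoothTX (h α β)) (hsym : ∀ α β t x, h α β t x = h β α t x)
    (hχ : Sm χ) {d : ℝ} (hd : 0 ≤ d) (hd1 : d ≤ 1 / 2) {ψ : ℝ → Eu 4 → ℝ} (hψ : SmoothTX ψ)
    (t : ℝ) (x : Eu 4) (hδ : habs h t x ≤ 1 / 100) (h0 : 0 ≤ χ x) (h1 : χ x ≤ 1) {s : ℝ}
    (hs : ∀ i, |sd i χ x| ≤ s) :
    ∑ α, pd (n := 4) α (mulP h (kY χ d) (kW χ d) ψ α) t x + ∑ i, sd i (kV χ d ψ i t) x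
        + χ x * (d / 2 * jw (1 + d) x * gradMag ψ t x ^ 2 + 1 / 2 * jw 3 x * ψ t x ^ 2)
      ≤ 10000 * ((|boxH h ψ t x| + (dhabs h t x + habs h t x * jw 1 x) * gradMag ψ t x)
            * (gradMag ψ t x + jw 1 x * |ψ t x|))
        + 10000 * s * (gradMag ψ t x + jw 1 x * |ψ t x|) ^ 2 := by
  have hs0 : 0 ≤ s := (abs_nonneg _).trans (hs 0)
  rw [div_mulP hh hsym (stx_kY hχ d) (stx_kW hχ d) hψ t x]
  obtain ⟨a0, a1, b0, b1, ab, o1, c1, ce⟩ := k_bounds hd hd1 x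
  have hG0 := gradMag_nonneg ψ t x
  have hp := fun α => abs_pd_le ψ α t x
  have hj := jw_pos 1 x
  have hj3 := jw_pos 3 x
  have hj1d := jw_pos (1 + d) x
  have hj1d' := jw_shift hd 1 x
  have hjle := jw_le_one (p := 1) (by norm_num) x
  have hZ := mulZ_k_le (χ := χ) hd hd1 h0 h1 ψ t
  have hb0 := habs_nonneg (h := h) t x
  have hd0 := dhabs_nonneg (h := h) t x
  set Z := mulZ (kY χ d) (kW χ d) ψ t x
  set xp := ∑ i : Fin 4, x i * pd (n := 4) i.succ ψ t x with hxp
  set cp := ∑ i : Fin 4, sd i χ x * pd (n := 4) i.succ ψ t x with hcp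
  set cx := ∑ i : Fin 4, sd i χ x * x i with hcx
  set Sp := ∑ i : Fin 4, pd (n := 4) i.succ ψ t x ^ 2 with hSp
  -- the quadratic form in the gradient coming from the derivative of the field
  have hrow : ∀ i : Fin 4, ∑ γ, pd (n := 4) i.succ (kY χ d γ) t x * pd (n := 4) γ ψ t x
      = sd i χ x * (ka d x * xp)
        + χ x * (ka d x * pd (n := 4) i.succ ψ t x - x i * kb d x * xp) := by
    intro i
    rw [Fin.sum_univ_succ, pd_kY_zero', zero_mul, zero_add]
    simp only [pd_kY hχ]
    rw [hxp]
    fin_cases i <;> simp [Fin.sum_univ_four] <;> ring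
  have hrow0 : ∑ γ, pd (n := 4) 0 (kY χ d γ) t x * pd (n := 4) γ ψ t x = 0 :=
    Finset.sum_eq_zero fun γ _ => by rw [pd_kY_zero, zero_mul]
  have g1 := gm_form (h := h) t x (fun α => pd (n := 4) α ψ t x)
    (fun α => ∑ γ, pd (n := 4) α (kY χ d γ) t x * pd (n := 4) γ ψ t x)
  have g2 := gm_form (h := h) t x (fun α => pd (n := 4) α ψ t x) (fun α => pd (n := 4) α (kW χ d) t x)
  have hxpa : |ka d x * xp| ≤ 400 * gradMag ψ t x := by
    rw [hxp, Finset.mul_sum]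
    refine (abs_sum_four_le (b := 100 * gradMag ψ t x) fun i => ?_).trans (by linarith)
    rw [abs_mul, abs_mul, abs_of_nonneg a0, ← mul_assoc]
    refine mul_le_mul ?_ (hp _) (abs_nonneg _) (by norm_num)
    have := mul_le_mul_of_nonneg_right a1 (abs_nonneg (x i))
    linarith [coord_jw_one x i]
  have hxpb : ∀ i, |x i * kb d x * xp| ≤ 400 * jw 1 x * gradMag ψ t x := by
    intro i
    rw [hxp, Finset.mul_sum]
    refine (abs_sum_four_le (b := 100 * jw 1 x * gradMag ψ t x) fun j => ?_).trans (by linarith)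
    rw [← mul_assoc, abs_mul]
    refine mul_le_mul ?_ (hp _) (abs_nonneg _) (by positivity)
    rw [abs_mul, abs_mul, abs_of_nonneg b0]
    have e1 := abs_coord_le_norm x i
    have e2 := abs_coord_le_norm x j
    have e3 : |x i| * |x j| ≤ ‖x‖ ^ 2 := by
      rw [sq]; exact mul_le_mul e1 e2 (abs_nonneg _) (norm_nonneg _)
    have := mul_le_mul_of_nonneg_right e3 b0
    linarith
  have hcpb : |cp| ≤ 4 * (s * gradMag ψ t x) := abs_sum_four_le fun i => by
    rw [abs_mul]; exact mul_le_mul (hs i) (hp _) (abs_nonneg _) hs0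
  have hcxa : |ka d x * cx| ≤ 400 * s := by
    rw [hcx, Finset.mul_sum]
    refine (abs_sum_four_le (b := 100 * s) fun i => ?_).trans (by linarith)
    rw [mul_comm (sd i χ x), ← mul_assoc, abs_mul, abs_mul, abs_of_nonneg a0]
    refine mul_le_mul ?_ (hs i) (abs_nonneg _) (by norm_num)
    have := mul_le_mul_of_nonneg_right a1 (abs_nonneg (x i))
    linarith [coord_jw_one x i]
  have hj3' : jw 3 x = jw 1 x * (jw 1 x * jw 1 x) := by
    rw [jw_mul, jw_mul]; norm_num
  have hxc : ∀ i, |x i * kc d x| ≤ 400 * (jw 1 x * jw 1 x) := by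
    intro i
    rw [abs_mul]
    have e1 := mul_le_mul_of_nonneg_left c1 (abs_nonneg (x i))
    have e2 := mul_le_mul_of_nonneg_right (coord_jw_one x i) (mul_pos hj hj).le
    rw [hj3'] at e1
    linarith
  have hcxc : |kc d x * cx| ≤ 1600 * (s * (jw 1 x * jw 1 x)) := by
    rw [hcx, Finset.mul_sum]
    refine (abs_sum_four_le (b := 400 * (s * (jw 1 x * jw 1 x))) fun i => ?_).trans (by linarith)
    rw [show kc d x * (sd i χ x * x i) = sd i χ x * (x i * kc d x) by ring, abs_mul]
    have := mul_le_mul (hs i) (hxc i) (abs_nonneg _) hs0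
    linarith
  have h2 := hform_le (h := h) ψ t x
    (a := fun α => ∑ γ, pd (n := 4) α (kY χ d γ) t x * pd (n := 4) γ ψ t x)
    (A := (400 * s + 500 * jw 1 x) * gradMag ψ t x) (fun α => by
      refine Fin.cases ?_ (fun i => ?_) α
      · simp only [hrow0, abs_zero]; positivity
      · simp only [hrow]
        refine (abs_add_le _ _).trans ?_
        rw [abs_mul, abs_mul (χ x), abs_of_nonneg h0]
        have e1 := mul_le_mul (hs i) hxpa (abs_nonneg _) hs0
        have e2 := abs_sub (ka d x * pd (n := 4) i.succ ψ t x) (x i * kb d x * xp)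
        have e3 : |ka d x * pd (n := 4) i.succ ψ t x| ≤ 100 * jw 1 x * gradMag ψ t x := by
          rw [abs_mul, abs_of_nonneg a0]
          exact mul_le_mul a1 (hp _) (abs_nonneg _) (by positivity)
        have e4 := mul_le_of_le_one_left
          (abs_nonneg (ka d x * pd (n := 4) i.succ ψ t x - x i * kb d x * xp)) h1
        linarith [hxpb i])
  have h3 := hform_le (h := h) ψ t x (a := fun α => pd (n := 4) α (kW χ d) t x)
    (A := 300 * s * jw 1 x + 400 * (jw 1 x * jw 1 x)) (fun α => by
      refine Fin.cases ?_ (fun i => ?_) α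
      · have : pd (n := 4) 0 (kW χ d) t x = 0 := pd_static_zero _ t x
        simp only [this, abs_zero]; positivity
      · simp only [pd_kW hχ]
        refine (abs_add_le _ _).trans ?_
        rw [abs_mul, abs_mul (χ x), abs_of_nonneg h0]
        have e1 := mul_le_mul (hs i) o1 (abs_nonneg _) hs0
        have e4 := mul_le_of_le_one_left (abs_nonneg (x i * kc d x)) h1
        linarith [hxc i])
  have h4 := hform_le (h := h) ψ t x (a := fun α => pd (n := 4) α ψ t x)
    (A := gradMag ψ t x) (fun α => abs_pd_le ψ α t x)
  have h5 := mulQ_eq (h := h) ψ t x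
  have h6 := gradMag_sq' ψ t x
  have h7 := dh_form2 (h := h) ψ t x
  have h8 := dh_form1 (h := h) ψ t x (Y := fun γ => kY χ d γ t x) (y := 100) (fun γ => by
    refine Fin.cases (by simp [kY]) (fun i => ?_) γ
    change |χ x * (x i * ka d x)| ≤ 100
    rw [abs_mul, abs_of_nonneg h0, abs_mul, abs_of_nonneg a0]
    have e1 := mul_le_mul_of_nonneg_left a1 (abs_nonneg (x i))
    have e2 := mul_le_of_le_one_left (mul_nonneg (abs_nonneg (x i)) a0) h1
    linarith [coord_jw_one x i])
  have hdiv : ∑ α, pd (n := 4) α (kY χ d α) t x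
      = ka d x * cx + χ x * (4 * ka d x - ‖x‖ ^ 2 * kb d x) := by
    rw [Fin.sum_univ_succ, pd_kY_zero, zero_add, normsq_eq, hcx]
    simp only [pd_kY hχ, if_true]
    simp only [Fin.sum_univ_four]
    ring
  have hsum1 : ∑ i : Fin 4, (∑ γ, pd (n := 4) i.succ (kY χ d γ) t x * pd (n := 4) γ ψ t x)
        * pd (n := 4) i.succ ψ t x
      = cp * (ka d x * xp) + χ x * (ka d x * Sp - kb d x * xp ^ 2) := by
    simp only [hrow]
    have := morawetz_sum (fun i => sd i χ x) (fun i => x i) (fun i => pd (n := 4) i.succ ψ t x)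
      (ka d x * xp) (ka d x) (kb d x) (χ x) xp
    rw [this, ← hxp, ← hcp, ← hSp]
    ring
  have hsum2 : ∑ i : Fin 4, pd (n := 4) i.succ (kW χ d) t x * pd (n := 4) i.succ ψ t x
      = cp * ko d x + χ x * (kc d x * xp) := by
    simp only [pd_kW hχ]
    rw [hcp, hxp]
    simp only [Fin.sum_univ_four]
    ring
  have hsum3 : ∑ i, sd i (kV χ d ψ i t) x
      = 1 / 2 * (kc d x * cx + χ x * (4 * kc d x + ‖x‖ ^ 2 * ke d x)) * ψ t x ^ 2
        + χ x * (kc d x * xp) * ψ t x := by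
    simp only [sd_kV hχ d hψ]
    rw [normsq_eq, hcx, hxp]
    simp only [Fin.sum_univ_four]
    ring
  have hCS : xp ^ 2 ≤ ‖x‖ ^ 2 * Sp := by
    rw [normsq_eq, hxp, hSp]
    exact Finset.sum_mul_sq_le_sq_mul_sq _ _ _
  have hW : kW χ d t x = χ x * ko d x := rfl
  have hko := ko_eq d x
  have hSp0 : 0 ≤ Sp := Finset.sum_nonneg fun i _ => sq_nonneg _
  simp only [hrow0, zero_mul, hsum1] at g1
  have hw0 : pd (n := 4) 0 (kW χ d) t x = 0 := pd_static_zero _ t x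
  simp only [hw0, zero_mul, hsum2] at g2
  rw [g1, g2, hdiv, hsum3, hW]
  have key := kss_alg (B := boxH h ψ t x) (y := ψ t x) hs0 h0 h1 hd hd1 hG0 hj hj1d hj1d' hb0 hδ hd0
    b0 ab o1 ce hZ hxpa hcpb hcxa hcxc h2 h3 h4 h5 h6 h7 h8 hCS hSp0 hko
  refine le_trans (le_of_eq ?_) key
  rw [zero_sub, zero_sub]
end

section
variable {h : Fin 5 → Fin 5 → ℝ → Eu 4 → ℝ} {χ : Eu 4 → ℝ}

lemma ofReal_iint {w : ℝ → Eu 4 → ℝ} (hw : Continuous fun p : ℝ × Eu 4 => w p.1 p.2)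
    (h0 : ∀ t x, 0 ≤ w t x) {K : Set (Eu 4)} (hK : IsCompact K)
    (hwK : ∀ t x, 0 ≤ t → x ∉ K → w t x = 0) (S : Set (Eu 4)) (τ : ℝ) :
    ∫⁻ t in Icc 0 τ, ∫⁻ x in S, ENNReal.ofReal (w t x)
      = ENNReal.ofReal (∫ t in Icc 0 τ, ∫ x in S, w t x) := by
  have hint : Integrable (fun p : ℝ × Eu 4 => w p.1 p.2)
        ((volume.restrict (Icc 0 τ)).prod (volume.restrict S)) := by
    rw [Measure.prod_restrict]
    have h1 : IntegrableOn (fun p : ℝ × Eu 4 => w p.1 p.2) (Icc 0 τ ×ˢ K)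
        (volume.prod volume) :=
      hw.continuousOn.integrableOn_compact (isCompact_Icc.prod hK)
    refine (h1.of_forall_sdiff_eq_zero (s := Icc 0 τ ×ˢ K) (t := Icc 0 τ ×ˢ univ)
      (measurableSet_Icc.prod MeasurableSet.univ) ?_).mono_set (prod_mono subset_rfl (subset_univ _))
    rintro ⟨t, x⟩ ⟨h2, h3⟩
    exact hwK t x h2.1.1 fun hx => h3 ⟨h2.1, hx⟩
  rw [← integral_prod _ hint, ofReal_integral_eq_lintegral_ofReal hint
    (Eventually.of_forall fun p => h0 p.1 p.2), lintegral_prod _ (by fun_prop)]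

/-- Sign of the boundary flux of the Morawetz current on a star-shaped obstacle. -/
lemma kss_bdry {ρ : Eu 4 → ℝ} {d : ℝ} (hd : 0 ≤ d) (hd1 : d ≤ 1 / 2) {ψ : ℝ → Eu 4 → ℝ}
    {t : ℝ} {x : Eu 4} (hδ : habs h t x ≤ 1 / 100) (h0 : 0 ≤ χ x) (hz : ψ t x = 0)
    (hz0 : pd (n := 4) 0 ψ t x = 0) {l : ℝ} (hl : ∀ i : Fin 4, pd (n := 4) i.succ ψ t x = l * sd i ρ x)
    (hst : 0 ≤ ∑ i, x i * sd i ρ x) :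
    ∑ i : Fin 4, (mulP h (kY χ d) (kW χ d) ψ i.succ t x + kV χ d ψ i t x) * sd i ρ x ≤ 0 := by
  obtain ⟨a0, -⟩ := k_bounds hd hd1 x
  set xr := ∑ i, x i * sd i ρ x with hxr
  set c : Fin 4 → ℝ := fun i => ∑ β, gm h i.succ β t x * pd (n := 4) β ψ t x with hc
  have hZ : mulZ (kY χ d) (kW χ d) ψ t x = χ x * ka d x * (l * xr) := by
    rw [mulZ_k, hz, mul_zero, add_zero, mul_assoc, hxr, Finset.mul_sum _ _ l]
    congr 2
    exact Finset.sum_congr rfl fun i _ => by rw [hl]; ring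
  have hQ : mulQ h ψ t x = l * ∑ i, c i * sd i ρ x := by
    have e1 : mulQ h ψ t x
        = ∑ α, (∑ β, gm h α β t x * pd (n := 4) β ψ t x) * pd (n := 4) α ψ t x := by
      unfold mulQ
      refine Finset.sum_congr rfl fun α _ => ?_
      rw [Finset.sum_mul]
      exact Finset.sum_congr rfl fun β _ => by ring
    rw [e1, Fin.sum_univ_succ, hz0, mul_zero, zero_add, Finset.mul_sum]
    exact Finset.sum_congr rfl fun i _ => by rw [hl i]; ring
  have hQ0 : mulQ h ψ t x ≤ 0 := by
    have h4 := hform_le (h := h) ψ t x (a := fun α => pd (n := 4) α ψ t x)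
      (A := gradMag ψ t x) (fun α => abs_pd_le ψ α t x)
    have h5 := mulQ_eq (h := h) ψ t x
    have h6 := gradMag_sq' ψ t x
    have e1 := (abs_le.1 h4).2
    have e2 : habs h t x * (gradMag ψ t x ^ 2) ≤ 1 / 100 * gradMag ψ t x ^ 2 :=
      mul_le_mul_of_nonneg_right hδ (sq_nonneg _)
    rw [hz0] at h5 h6
    have e3 := sq_nonneg (gradMag ψ t x)
    linarith
  have hs : ∑ i : Fin 4, (mulP h (kY χ d) (kW χ d) ψ i.succ t x + kV χ d ψ i t x) * sd i ρ x
      = (∑ i, c i * sd i ρ x) * mulZ (kY χ d) (kW χ d) ψ t x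
        - 1 / 2 * (χ x * ka d x) * xr * mulQ h ψ t x := by
    rw [hxr, Finset.mul_sum, Finset.sum_mul, Finset.sum_mul, ← Finset.sum_sub_distrib]
    refine Finset.sum_congr rfl fun i _ => ?_
    simp only [mulP, kV, hz, kY, Fin.cases_succ, hc]
    ring
  have : ∑ i : Fin 4, (mulP h (kY χ d) (kW χ d) ψ i.succ t x + kV χ d ψ i t x) * sd i ρ x
      = 1 / 2 * (χ x * ka d x * xr) * mulQ h ψ t x := by
    rw [hs, hZ]
    linear_combination (-1 : ℝ) * (χ x * ka d x * xr) * hQ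
  rw [this]
  exact mul_nonpos_of_nonneg_of_nonpos (by positivity) hQ0

lemma kss_P0 {d : ℝ} (hd : 0 ≤ d) (hd1 : d ≤ 1 / 2) {ψ : ℝ → Eu 4 → ℝ}
    {t : ℝ} {x : Eu 4} (hδ : habs h t x ≤ 1 / 100) (h0 : 0 ≤ χ x) (h1 : χ x ≤ 1) :
    |mulP h (kY χ d) (kW χ d) ψ 0 t x|
      ≤ 800 * (gradMag ψ t x * (gradMag ψ t x + jw 1 x * |ψ t x|)) := by
  have hZ := mulZ_k_le (χ := χ) hd hd1 h0 h1 ψ t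
  have hG := gradMag_nonneg ψ t x
  have g1 := gm_form (h := h) t x (fun α => pd (n := 4) α ψ t x) (fun α => if α = 0 then 1 else 0)
  have g2 := hform_le (h := h) ψ t x (a := fun α => if α = 0 then 1 else 0) (A := 1)
    (fun α => by split_ifs <;> simp)
  simp only [Fin.succ_ne_zero, if_true, if_false, one_mul, zero_mul, Finset.sum_const_zero,
    sub_zero, mul_ite, mul_one, mul_zero, Finset.sum_ite_eq', Finset.mem_univ] at g1
  have g3 : |∑ β, gm h 0 β t x * pd (n := 4) β ψ t x| ≤ 2 * gradMag ψ t x := by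
    rw [g1]
    refine (abs_add_le _ _).trans ?_
    have e1 := abs_pd_le ψ 0 t x
    have e2 := mul_le_mul_of_nonneg_right hδ hG
    simp only [mul_ite, mul_one, mul_zero] at g2
    linarith
  have : mulP h (kY χ d) (kW χ d) ψ 0 t x
      = (∑ β, gm h 0 β t x * pd (n := 4) β ψ t x) * mulZ (kY χ d) (kW χ d) ψ t x := by
    simp [mulP, kY]
  rw [this, abs_mul]
  have := mul_le_mul g3 hZ (abs_nonneg _) (by positivity)
  linarith

lemma cont_L {ψ : ℝ → Eu 4 → ℝ} (hψ : SmoothTX ψ) :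
    Continuous fun p : ℝ × Eu 4 => gradMag ψ p.1 p.2 + jw 1 p.2 * |ψ p.1 p.2| :=
  (cont_gradMag hψ).add (((sm_jw 1).cont.comp continuous_snd).mul (stx_cont hψ).abs)

lemma L2_L {ρ : Eu 4 → ℝ} (hρ : Sm ρ) (hg : ∀ x, ρ x = 0 → fderiv ℝ ρ x ≠ 0)
    {ψ : ℝ → Eu 4 → ℝ} (hψ : SmoothTX ψ) {t : ℝ} (hb : ∀ x, ρ x = 0 → ψ t x = 0)
    (hL : ∫⁻ x in {x | 0 ≤ ρ x}, ENNReal.ofReal (ψ t x ^ 2) ≠ ⊤) :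
    L2x {x | 0 ≤ ρ x} (fun x => gradMag ψ t x + jw 1 x * |ψ t x|)
      ≤ 2 * L2x {x | 0 ≤ ρ x} (gradMag ψ t) := by
  have h1 : L2x {x | 0 ≤ ρ x} (fun x => jw 1 x * |ψ t x|) ≤ L2x {x | 0 ≤ ρ x} (gradMag ψ t) := by
    refine ennreal_sqrt_le ?_
    rw [L2x_sq, L2x_sq]
    have := hardy hρ hg (stx_slice hψ t) hb hL
    refine le_trans (le_of_eq ?_) (this.trans ?_)
    · refine lintegral_congr fun x => ?_
      rw [mul_pow, sq_abs, sq (jw 1 x), jw_mul]; norm_num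
    · refine lintegral_mono fun x => ENNReal.ofReal_le_ofReal ?_
      rw [gradMag_sq']
      simp only [pd_succ]
      linarith [sq_nonneg (pd (n := 4) 0 ψ t x)]
  have hGm : AEStronglyMeasurable (gradMag ψ t) (volume.restrict {x | 0 ≤ ρ x}) :=
    (cont_slice (cont_gradMag hψ) t).aestronglyMeasurable
  have hum : AEStronglyMeasurable (fun x => jw 1 x * |ψ t x|) (volume.restrict {x | 0 ≤ ρ x}) :=
    ((sm_jw 1).cont.mul (stx_slice hψ t).cont.abs).aestronglyMeasurable
  refine (eLpNorm_add_le hGm hum (by norm_num)).trans ?_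
  rw [two_mul]
  exact add_le_add le_rfl h1

lemma lintegral_mul_le_L2' {S : Set (Eu 4)} {f g : Eu 4 → ℝ} (hf : Continuous f)
    (hg : Continuous g) (hf0 : ∀ x, 0 ≤ f x) (hg0 : ∀ x, 0 ≤ g x) :
    ∫⁻ x in S, ENNReal.ofReal (f x * g x) ≤ L2x S f * L2x S g := by
  refine le_trans (le_of_eq ?_) (lintegral_mul_le_L2 hf.measurable hg.measurable)
  exact lintegral_congr fun x => by rw [abs_of_nonneg (hf0 x), abs_of_nonneg (hg0 x)]

/-- The Morawetz estimate with a cutoff at scale `A`. -/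
lemma kss_cut {ρ : Eu 4 → ℝ} (hρ : Sm ρ) (hg : ∀ x, ρ x = 0 → fderiv ℝ ρ x ≠ 0)
    (hst : ∀ x, ρ x = 0 → 0 ≤ ∑ i, x i * sd i ρ x)
    (hh : ∀ α β, SmoothTX (h α β)) (hsym : ∀ α β t x, h α β t x = h β α t x)
    (hδ : ∀ t x, habs h t x ≤ 1 / 100) {ψ : ℝ → Eu 4 → ℝ} (hψ : SmoothTX ψ)
    (hb : ∀ t x, 0 ≤ t → ρ x = 0 → ψ t x = 0) {d : ℝ} (hd : 0 ≤ d) (hd1 : d ≤ 1 / 2)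
    {T : ℝ} (hT : 0 ≤ T) {X : ℝ≥0∞} (hX : X ≠ ⊤)
    (hG : ∀ t ∈ Icc 0 T, L2x {x | 0 ≤ ρ x} (gradMag ψ t) ≤ X)
    (hL : ∀ t ∈ Icc 0 T, L2x {x | 0 ≤ ρ x} (fun x => gradMag ψ t x + jw 1 x * |ψ t x|) ≤ 2 * X)
    {B : ℝ} (hB : ∀ y, |deriv smoothTransition y| ≤ B) {A : ℝ} (hA : 0 < A) :
    ∫⁻ t in Icc 0 T, ∫⁻ x in {x | 0 ≤ ρ x}, ENNReal.ofReal (cut A x *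
        (d / 2 * jw (1 + d) x * gradMag ψ t x ^ 2 + 1 / 2 * jw 3 x * ψ t x ^ 2))
      ≤ 3200 * X ^ 2 + 20000 * (∫⁻ t in Icc 0 T, (L2x {x | 0 ≤ ρ x} (boxH h ψ t)
          + L2x {x | 0 ≤ ρ x} (fun x => (dhabs h t x + habs h t x * jw 1 x) * gradMag ψ t x))) * X
        + ENNReal.ofReal (10000 * B / A) * (4 * X ^ 2 * volume (Icc 0 T)) := by
  set S : Set (Eu 4) := {x | 0 ≤ ρ x} with hS
  set χ : Eu 4 → ℝ := cut A with hχd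
  have hχ : Sm χ := sm_cut A
  have hχ0 : ∀ x, 0 ≤ χ x := cut_nonneg A
  have hχ1 : ∀ x, χ x ≤ 1 := cut_le_one A
  have hK := isCompact_JB (n := 4) (2 * A)
  have hχK : ∀ x, x ∉ JB 4 (2 * A) → χ x = 0 := fun x hx => cut_eq_zero hA hx
  have hB0 : 0 ≤ B := (abs_nonneg _).trans (hB 0)
  have hG0 := gradMag_nonneg ψ
  have hL0 : ∀ t x, 0 ≤ gradMag ψ t x + jw 1 x * |ψ t x| := fun t x =>
    add_nonneg (hG0 t x) (mul_nonneg (jw_pos 1 x).le (abs_nonneg _))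
  set P : Fin 5 → ℝ → Eu 4 → ℝ := mulP h (kY χ d) (kW χ d) ψ with hPd
  have hP : ∀ α, SmoothTX (P α) := stx_mulP hh (stx_kY hχ d) (stx_kW hχ d) hψ
  have hYK : ∀ γ t x, x ∉ JB 4 (2 * A) → kY χ d γ t x = 0 := fun γ t x hx => by
    refine Fin.cases rfl (fun i => ?_) γ
    change χ x * _ = 0
    rw [hχK x hx, zero_mul]
  have hPK : ∀ α t x, x ∉ JB 4 (2 * A) → P α t x = 0 := fun α t x hx => by
    simp only [hPd, mulP]
    rw [mulZ_k, hχK x hx, hYK α t x hx]; ring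
  set q : ℝ → Eu 4 → ℝ := fun t x => χ x *
    (d / 2 * jw (1 + d) x * gradMag ψ t x ^ 2 + 1 / 2 * jw 3 x * ψ t x ^ 2) with hqd
  have hq : Continuous fun p : ℝ × Eu 4 => q p.1 p.2 := by
    have c1 := (hχ.cont.comp (continuous_snd (X := ℝ)))
    have c2 := ((sm_jw (n := 4) (1 + d)).cont.comp (continuous_snd (X := ℝ)))
    have c3 := ((sm_jw (n := 4) 3).cont.comp (continuous_snd (X := ℝ)))
    exact c1.mul (((continuous_const.mul c2).mul ((cont_gradMag hψ).pow 2)).add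
      ((continuous_const.mul c3).mul ((stx_cont hψ).pow 2)))
  have hq0 : ∀ t x, 0 ≤ q t x := fun t x => by
    have := jw_pos (1 + d) x
    have := jw_pos 3 x
    have := hχ0 x
    simp only [hqd]
    positivity
  have hqK : ∀ t x, 0 ≤ t → x ∉ JB 4 (2 * A) → q t x = 0 := fun t x _ hx => by
    simp only [hqd]; rw [hχK x hx, zero_mul]
  have h1 := spacetime_div hρ hg (P := P 0) (V := fun i t x => P i.succ t x + kV χ d ψ i t x)
    (hP 0) (fun i => stx_add (hP i.succ) (stx_kV hχ d hψ i)) hK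
    (fun t x _ hx => hPK 0 t x hx)
    (fun i t x _ hx => by
      rw [hPK i.succ t x hx]; simp [kV, hχK x hx])
    (fun t x ht hx => by
      obtain ⟨l, hl⟩ := exists_multiplier hρ (stx_slice hψ t) (fun y hy => hb t y ht hy) hx (hg x hx)
      refine kss_bdry hd hd1 (hδ t x) (hχ0 x) (hb t x ht hx) ?_ (l := l) ?_ (hst x hx)
      · rw [pd_zero]; exact td_eq_zero hψ (fun s hs => hb s x hs hx) ht
      · intro i; rw [pd_succ]; exact hl i)
    (q := q)
    (r := fun t x => 10000 * ((|boxH h ψ t x| + (dhabs h t x + habs h t x * jw 1 x) * gradMag ψ t x)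
            * (gradMag ψ t x + jw 1 x * |ψ t x|))
        + 10000 * (B / A) * (gradMag ψ t x + jw 1 x * |ψ t x|) ^ 2)
    hq hqK
    (fun t x ht hx => by
      have k1 := kss_div hh hsym hχ hd hd1 hψ t x (hδ t x) (hχ0 x) (hχ1 x)
        (fun i => abs_sd_cut hB hA i x)
      rw [sum_pd_eq] at k1
      have k2 : ∑ i, sd i ((fun i t x => P i.succ t x + kV χ d ψ i t x) i t) x
          = ∑ i : Fin 4, sd i (P i.succ t) x + ∑ i, sd i (kV χ d ψ i t) x := by
        rw [← Finset.sum_add_distrib]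
        exact Finset.sum_congr rfl fun i _ =>
          sd_add (stx_slice (hP i.succ) t) (stx_slice (stx_kV hχ d hψ i) t) i x
      rw [k2]
      simp only [hqd]
      linarith)
    hT
  have hPint : ∀ t, IntegrableOn (P 0 t) S := fun t =>
    ((stx_slice (hP 0) t).cont.integrable_of_hasCompactSupport
      (HasCompactSupport.intro hK fun x hx => hPK 0 t x hx)).integrableOn
  have hPle : ∀ t ∈ Icc 0 T, ∫⁻ x in S, ENNReal.ofReal |P 0 t x| ≤ 1600 * X ^ 2 := by
    intro t ht
    calc ∫⁻ x in S, ENNReal.ofReal |P 0 t x|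
        ≤ ∫⁻ x in S, 800 * ENNReal.ofReal (gradMag ψ t x * (gradMag ψ t x + jw 1 x * |ψ t x|)) := by
          refine lintegral_mono fun x => ?_
          rw [show (800 : ℝ≥0∞) = ENNReal.ofReal 800 by norm_num,
            ← ENNReal.ofReal_mul (by norm_num)]
          exact ENNReal.ofReal_le_ofReal (kss_P0 hd hd1 (hδ t x) (hχ0 x) (hχ1 x))
      _ = 800 * ∫⁻ x in S, ENNReal.ofReal (gradMag ψ t x * (gradMag ψ t x + jw 1 x * |ψ t x|)) :=
          lintegral_const_mul' _ _ (by norm_num)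
      _ ≤ 800 * (X * (2 * X)) := by
          gcongr
          refine (lintegral_mul_le_L2' (cont_slice (cont_gradMag hψ) t)
            (cont_slice (u := fun t x => gradMag ψ t x + jw 1 x * |ψ t x|) (cont_L hψ) t)
            (hG0 t) (hL0 t)).trans ?_
          exact mul_le_mul' (hG t ht) (hL t ht)
      _ = 1600 * X ^ 2 := by ring
  have hP0 : ENNReal.ofReal (∫ x in S, P 0 0 x) ≤ 1600 * X ^ 2 := by
    refine (ofReal_integral_le (hPint 0)).trans (le_trans ?_ (hPle 0 ⟨le_rfl, hT⟩))
    exact lintegral_mono fun x => ENNReal.ofReal_le_ofReal (le_abs_self _)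
  have hPT : ENNReal.ofReal (-∫ x in S, P 0 T x) ≤ 1600 * X ^ 2 := by
    rw [← integral_neg]
    refine (ofReal_integral_le (hPint T).neg).trans (le_trans ?_ (hPle T ⟨hT, le_rfl⟩))
    exact lintegral_mono fun x => ENNReal.ofReal_le_ofReal (neg_le_abs _)
  have hr : ∫⁻ t in Icc 0 T, ∫⁻ x in S, ENNReal.ofReal
      (10000 * ((|boxH h ψ t x| + (dhabs h t x + habs h t x * jw 1 x) * gradMag ψ t x)
            * (gradMag ψ t x + jw 1 x * |ψ t x|))
        + 10000 * (B / A) * (gradMag ψ t x + jw 1 x * |ψ t x|) ^ 2)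
      ≤ 20000 * (∫⁻ t in Icc 0 T, (L2x S (boxH h ψ t)
          + L2x S (fun x => (dhabs h t x + habs h t x * jw 1 x) * gradMag ψ t x))) * X
        + ENNReal.ofReal (10000 * B / A) * (4 * X ^ 2 * volume (Icc 0 T)) := by
    calc _ ≤ ∫⁻ t in Icc 0 T, ((L2x S (boxH h ψ t)
          + L2x S (fun x => (dhabs h t x + habs h t x * jw 1 x) * gradMag ψ t x)) * (20000 * X)
          + ENNReal.ofReal (10000 * B / A) * (4 * X ^ 2)) := by
          refine setLIntegral_mono' measurableSet_Icc fun t ht => ?_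
          have cB : Continuous fun x => |boxH h ψ t x| := (stx_slice (cont_boxH hh hψ) t).cont.abs
          have cM : Continuous fun x => (dhabs h t x + habs h t x * jw 1 x) * gradMag ψ t x :=
            ((cont_slice (cont_dhabs hh) t).add ((cont_slice (cont_habs hh) t).mul
              (sm_jw 1).cont)).mul (cont_slice (cont_gradMag hψ) t)
          have cL := cont_slice (u := fun t x => gradMag ψ t x + jw 1 x * |ψ t x|) (cont_L hψ) t
          have hM0 : ∀ x, 0 ≤ (dhabs h t x + habs h t x * jw 1 x) * gradMag ψ t x := fun x =>
            mul_nonneg (add_nonneg (dhabs_nonneg _ _) (mul_nonneg (habs_nonneg _ _) (jw_pos 1 x).le))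
              (hG0 t x)
          have hBn : L2x S (fun x => |boxH h ψ t x|) = L2x S (boxH h ψ t) :=
            eLpNorm_norm (boxH h ψ t)
          have i1 := lintegral_mul_le_L2' (S := S) cB cL (fun x => abs_nonneg _) (hL0 t)
          have i2 := lintegral_mul_le_L2' (S := S) cM cL hM0 (hL0 t)
          have i3 := lintegral_mul_le_L2' (S := S) cL cL (hL0 t) (hL0 t)
          rw [hBn] at i1
          have hLt := hL t ht
          calc _ = ∫⁻ x in S, (10000 * (ENNReal.ofReal (|boxH h ψ t x| *
                  (gradMag ψ t x + jw 1 x * |ψ t x|))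
                + ENNReal.ofReal ((dhabs h t x + habs h t x * jw 1 x) * gradMag ψ t x
                  * (gradMag ψ t x + jw 1 x * |ψ t x|)))
                + ENNReal.ofReal (10000 * B / A) * ENNReal.ofReal
                  ((gradMag ψ t x + jw 1 x * |ψ t x|) * (gradMag ψ t x + jw 1 x * |ψ t x|))) := by
                refine lintegral_congr fun x => ?_
                have n1 := mul_nonneg (abs_nonneg (boxH h ψ t x)) (hL0 t x)
                have n2 := mul_nonneg (hM0 x) (hL0 t x)
                have n3 := mul_nonneg (hL0 t x) (hL0 t x)
                have n4 : 0 ≤ 10000 * B / A := by positivity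
                rw [show (10000 : ℝ≥0∞) = ENNReal.ofReal 10000 by norm_num,
                  ← ENNReal.ofReal_add n1 n2, ← ENNReal.ofReal_mul (by norm_num),
                  ← ENNReal.ofReal_mul n4, ← ENNReal.ofReal_add (by positivity) (by positivity)]
                congr 1
                ring
            _ = 10000 * ((∫⁻ x in S, ENNReal.ofReal (|boxH h ψ t x| *
                  (gradMag ψ t x + jw 1 x * |ψ t x|)))
                + ∫⁻ x in S, ENNReal.ofReal ((dhabs h t x + habs h t x * jw 1 x) * gradMag ψ t x
                  * (gradMag ψ t x + jw 1 x * |ψ t x|)))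
                + ENNReal.ofReal (10000 * B / A) * ∫⁻ x in S, ENNReal.ofReal
                  ((gradMag ψ t x + jw 1 x * |ψ t x|) * (gradMag ψ t x + jw 1 x * |ψ t x|)) := by
                have m1 : Measurable fun x => ENNReal.ofReal (|boxH h ψ t x| *
                  (gradMag ψ t x + jw 1 x * |ψ t x|)) := (cB.mul cL).measurable.ennreal_ofReal
                have m2 : Measurable fun x => ENNReal.ofReal
                  ((dhabs h t x + habs h t x * jw 1 x) * gradMag ψ t x
                  * (gradMag ψ t x + jw 1 x * |ψ t x|)) := (cM.mul cL).measurable.ennreal_ofReal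
                have m3 : Measurable fun x => (10000 : ℝ≥0∞) * (ENNReal.ofReal (|boxH h ψ t x| *
                  (gradMag ψ t x + jw 1 x * |ψ t x|))
                + ENNReal.ofReal ((dhabs h t x + habs h t x * jw 1 x) * gradMag ψ t x
                  * (gradMag ψ t x + jw 1 x * |ψ t x|))) := (m1.add m2).const_mul _
                rw [lintegral_add_left m3,
                  lintegral_const_mul' _ _ (by norm_num), lintegral_add_left m1,
                  lintegral_const_mul' _ _ ENNReal.ofReal_ne_top]
            _ ≤ 10000 * (L2x S (boxH h ψ t) * (2 * X) + L2x S (fun x =>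
                  (dhabs h t x + habs h t x * jw 1 x) * gradMag ψ t x) * (2 * X))
                + ENNReal.ofReal (10000 * B / A) * (2 * X * (2 * X)) := by
                gcongr
                · exact i1.trans (by gcongr)
                · exact i2.trans (by gcongr)
                · exact i3.trans (by gcongr)
            _ = _ := by ring
      _ = _ := by
          rw [lintegral_add_right _ measurable_const, lintegral_mul_const' _ _
            (ENNReal.mul_ne_top (by norm_num) hX), setLIntegral_const]
          ring
  have hfin : ENNReal.ofReal (∫ t in Icc 0 T, ∫ x in S, q t x)
      ≤ ENNReal.ofReal ((∫ x in S, P 0 T x) + ∫ t in Icc 0 T, ∫ x in S, q t x)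
        + ENNReal.ofReal (-∫ x in S, P 0 T x) := by
    refine le_trans (ENNReal.ofReal_le_ofReal ?_) ENNReal.ofReal_add_le
    linarith
  rw [ofReal_iint (w := q) hq hq0 hK hqK S T]
  calc _ ≤ (1600 * X ^ 2 + _) + 1600 * X ^ 2 := hfin.trans (add_le_add (h1.trans
            (add_le_add hP0 hr)) hPT)
    _ = _ := by ring

set_option maxHeartbeats 1000000 in
/-- The Morawetz (localized energy) estimate with all sources measured in `L¹L²`. The zeroth order data
need only be square integrable; their size does not enter, thanks to Hardy's inequality. -/
theorem kss {ρ : Eu 4 → ℝ} (hρ : Sm ρ) (hg : ∀ x, ρ x = 0 → fderiv ℝ ρ x ≠ 0)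
    (hst : ∀ x, ρ x = 0 → 0 ≤ ∑ i, x i * sd i ρ x)
    (hh : ∀ α β, SmoothTX (h α β)) (hsym : ∀ α β t x, h α β t x = h β α t x)
    (hδ : ∀ t x, habs h t x ≤ 1 / 100) {ψ : ℝ → Eu 4 → ℝ} (hψ : SmoothTX ψ)
    (hb : ∀ t x, 0 ≤ t → ρ x = 0 → ψ t x = 0) {d : ℝ} (hd : 0 < d) (hd1 : d ≤ 1 / 2)
    {T : ℝ} (hT : 0 ≤ T) (hi : L2x {x | 0 ≤ ρ x} (ψ 0) ≠ ⊤) {M : ℝ≥0∞}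
    (hM : L2x {x | 0 ≤ ρ x} (gradMag ψ 0) + ∫⁻ t in Icc 0 T, (L2x {x | 0 ≤ ρ x} (boxH h ψ t)
          + L2x {x | 0 ≤ ρ x} (fun x => (dhabs h t x + habs h t x * jw 1 x) * gradMag ψ t x)) ≤ M)
    (hMtop : M ≠ ⊤) :
    (∀ t ∈ Icc 0 T, L2x {x | 0 ≤ ρ x} (gradMag ψ t) ≤ 8 * M) ∧
    ∫⁻ t in Icc 0 T, ∫⁻ x in {x | 0 ≤ ρ x}, ENNReal.ofReal
        (jw (1 + d) x * gradMag ψ t x ^ 2 + jw 3 x * ψ t x ^ 2)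
      ≤ ENNReal.ofReal (2 / d) * (2000000 * M ^ 2) := by
  set S : Set (Eu 4) := {x | 0 ≤ ρ x} with hS
  have hSm : MeasurableSet S := measurableSet_ext hρ
  have hG0 := gradMag_nonneg ψ
  set Bs := ∫⁻ t in Icc 0 T, (L2x S (boxH h ψ t)
          + L2x S (fun x => (dhabs h t x + habs h t x * jw 1 x) * gradMag ψ t x)) with hBs
  have hG : ∀ t ∈ Icc 0 T, L2x S (gradMag ψ t) ≤ 8 * M := by
    intro t ht
    refine (energy hρ hg hh hsym hδ hψ hb T ht).trans ?_
    calc _ ≤ 2 * L2x S (gradMag ψ 0) + 4 * (2 * Bs) := by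
          gcongr
          rw [hBs, ← lintegral_const_mul' _ _ (by norm_num)]
          refine lintegral_mono fun s => ?_
          rw [mul_add]
          gcongr
          · rw [two_mul]; exact le_self_add
          · refine L2x_mono hSm fun x _ => ?_
            rw [abs_mul, abs_mul]
            have := mul_nonneg (habs_nonneg (h := h) s x) (jw_pos 1 x).le
            have h2 := dhabs_nonneg (h := h) s x
            rw [abs_of_nonneg h2, abs_of_nonneg (add_nonneg h2 this)]
            exact mul_le_mul_of_nonneg_right (by linarith) (abs_nonneg _)
      _ ≤ 8 * L2x S (gradMag ψ 0) + 8 * Bs := by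
          rw [← mul_assoc]; norm_num
          gcongr
          norm_num
      _ = 8 * (L2x S (gradMag ψ 0) + Bs) := by ring
      _ ≤ 8 * M := by gcongr
  refine ⟨hG, ?_⟩
  have hX : 8 * M ≠ ⊤ := ENNReal.mul_ne_top (by norm_num) hMtop
  have hL : ∀ t ∈ Icc 0 T, L2x S (fun x => gradMag ψ t x + jw 1 x * |ψ t x|) ≤ 2 * (8 * M) :=
    fun t ht => (L2_L hρ hg hψ (fun x hx => hb t x ht.1 hx)
      (L2_growth hρ hg hψ hX hG hi ht)).trans (by gcongr; exact hG t ht)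
  obtain ⟨B, hB0, hB⟩ := exists_st_bound
  have hBM : Bs ≤ M := le_trans le_add_self hM
  have hmeas : ∀ {w : ℝ → Eu 4 → ℝ}, (Continuous fun p : ℝ × Eu 4 => w p.1 p.2) →
      ∫⁻ t in Icc 0 T, ∫⁻ x in S, ENNReal.ofReal (w t x)
      = ∫⁻ p, ENNReal.ofReal (w p.1 p.2) ∂((volume.restrict (Icc 0 T)).prod (volume.restrict S)) := by
    intro w hw
    rw [lintegral_prod _ hw.measurable.ennreal_ofReal.aemeasurable]
  have cq : Continuous fun p : ℝ × Eu 4 =>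
      (d / 2 * jw (1 + d) p.2 * gradMag ψ p.1 p.2 ^ 2 + 1 / 2 * jw 3 p.2 * ψ p.1 p.2 ^ 2) := by
    have c2 := ((sm_jw (n := 4) (1 + d)).cont.comp (continuous_snd (X := ℝ)))
    have c3 := ((sm_jw (n := 4) 3).cont.comp (continuous_snd (X := ℝ)))
    exact (((continuous_const.mul c2).mul ((cont_gradMag hψ).pow 2)).add
      ((continuous_const.mul c3).mul ((stx_cont hψ).pow 2)))
  have ccut : ∀ A : ℝ, Continuous fun p : ℝ × Eu 4 => cut A p.2 := fun A =>
    (sm_cut A).cont.comp continuous_snd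
  have key : ∫⁻ t in Icc 0 T, ∫⁻ x in S, ENNReal.ofReal
        (d / 2 * jw (1 + d) x * gradMag ψ t x ^ 2 + 1 / 2 * jw 3 x * ψ t x ^ 2)
        ≤ 3200 * (8 * M) ^ 2 + 20000 * Bs * (8 * M) := by
    have hk := fun k : ℕ => kss_cut hρ hg hst hh hsym hδ hψ hb hd.le hd1 hT hX hG hL hB
      (A := (k : ℝ) + 1) (by positivity)
    generalize hq : (fun t x => d / 2 * jw (1 + d) x * gradMag ψ t x ^ 2
      + 1 / 2 * jw 3 x * ψ t x ^ 2) = q at cq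
    have hq' : ∀ t x, d / 2 * jw (1 + d) x * gradMag ψ t x ^ 2
      + 1 / 2 * jw 3 x * ψ t x ^ 2 = q t x := fun t x => by rw [← hq]
    simp only [hq'] at hk cq ⊢
    rw [hmeas (w := q) cq]
    refine fatou_le (f := fun (k : ℕ) (p : ℝ × Eu 4) => ENNReal.ofReal (cut ((k : ℝ) + 1) p.2 *
        q p.1 p.2)) (F := fun p : ℝ × Eu 4 => ENNReal.ofReal (q p.1 p.2))
      (R := fun k : ℕ => 3200 * (8 * M) ^ 2 + 20000 * Bs * (8 * M)
        + ENNReal.ofReal (10000 * B / ((k : ℝ) + 1)) * (4 * (8 * M) ^ 2 * volume (Icc 0 T)))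
      (fun k => ((ccut _).mul cq).measurable.ennreal_ofReal)
      (fun p => tendsto_cut_mul p.2 (q p.1 p.2)) (fun k => ?_)
      (tendsto_err _ (4 * (8 * M) ^ 2 * volume (Icc 0 T)) ?_ (10000 * B))
    · rw [← hmeas (w := fun t x => cut ((k : ℝ) + 1) x * q t x) ((ccut _).mul cq)]
      exact hk k
    · refine ENNReal.mul_ne_top (ENNReal.mul_ne_top (by norm_num) (ENNReal.pow_ne_top hX)) ?_
      rw [Real.volume_Icc]; exact ENNReal.ofReal_ne_top
  calc _ ≤ ∫⁻ t in Icc 0 T, ∫⁻ x in S, ENNReal.ofReal (2 / d) * ENNReal.ofReal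
        (d / 2 * jw (1 + d) x * gradMag ψ t x ^ 2 + 1 / 2 * jw 3 x * ψ t x ^ 2) := by
        refine lintegral_mono fun t => lintegral_mono fun x => ?_
        rw [← ENNReal.ofReal_mul (by positivity)]
        refine ENNReal.ofReal_le_ofReal ?_
        have e1 : 0 ≤ jw 3 x * ψ t x ^ 2 := mul_nonneg (jw_pos 3 x).le (sq_nonneg _)
        have e2 : 1 ≤ 1 / d := by rw [le_div_iff₀ hd]; linarith
        have e3 := mul_le_mul_of_nonneg_right e2 e1
        have e4 : 2 / d * (d / 2 * jw (1 + d) x * gradMag ψ t x ^ 2 + 1 / 2 * jw 3 x * ψ t x ^ 2)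
            = jw (1 + d) x * gradMag ψ t x ^ 2 + 1 / d * (jw 3 x * ψ t x ^ 2) := by
          field_simp
        rw [e4]
        linarith
    _ = ENNReal.ofReal (2 / d) * ∫⁻ t in Icc 0 T, ∫⁻ x in S, ENNReal.ofReal
        (d / 2 * jw (1 + d) x * gradMag ψ t x ^ 2 + 1 / 2 * jw 3 x * ψ t x ^ 2) := by
        rw [← lintegral_const_mul' _ _ ENNReal.ofReal_ne_top]
        exact lintegral_congr fun t => lintegral_const_mul' _ _ ENNReal.ofReal_ne_top
    _ ≤ _ := by
        gcongr
        refine key.trans ?_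
        calc _ ≤ 3200 * (8 * M) ^ 2 + 20000 * M * (8 * M) := by gcongr
          _ = 364800 * M ^ 2 := by ring
          _ ≤ _ := by gcongr; norm_num
end

/-! ### Space-time integrals and commutation of derivatives -/

section
/-- The integral of `⟨x⟩^{-2p} f` over the exterior domain and against `ν` in time. With
`ν = dirac T` it is a fixed-time norm, with `ν` the Lebesgue measure on `[0,T]` a space-time norm. -/
def W (ν : Measure ℝ) (ρ : Eu 4 → ℝ) (p : ℝ) (f : ℝ → Eu 4 → ℝ) : ℝ≥0∞ := ∫⁻ t, wI ρ p (f t) ∂ν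

variable {ν : Measure ℝ} {ρ : Eu 4 → ℝ} {p : ℝ}

lemma W_mono {f g : ℝ → Eu 4 → ℝ} (h : ∀ t x, f t x ≤ g t x) : W ν ρ p f ≤ W ν ρ p g :=
  lintegral_mono fun t => wI_mono (h t)

lemma W_le {C : ℝ} (hC : 0 ≤ C) {f g : ℝ → Eu 4 → ℝ} (h : ∀ t x, f t x ≤ C * g t x) :
    W ν ρ p f ≤ ENNReal.ofReal C * W ν ρ p g := by
  unfold W
  rw [← lintegral_const_mul' _ _ ENNReal.ofReal_ne_top]
  exact lintegral_mono fun t => wI_le hC (h t)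

lemma measurable_wI {f : ℝ → Eu 4 → ℝ} (hf : Continuous fun q : ℝ × Eu 4 => f q.1 q.2) :
    Measurable fun t => wI ρ p (f t) := by
  have h : Measurable fun q : ℝ × Eu 4 => ENNReal.ofReal (jw p q.2 ^ 2 * f q.1 q.2) :=
    ((((sm_jw (n := 4) p).cont.comp (continuous_snd (X := ℝ))).pow 2).mul hf).measurable.ennreal_ofReal
  exact h.lintegral_prod_right'

lemma W_add_le {f g : ℝ → Eu 4 → ℝ} (hf : Continuous fun q : ℝ × Eu 4 => f q.1 q.2) :
    W ν ρ p (fun t x => f t x + g t x) ≤ W ν ρ p f + W ν ρ p g := by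
  unfold W
  rw [← lintegral_add_left (measurable_wI hf)]
  exact lintegral_mono fun t => wI_add_le (cont_slice hf t)

lemma W_sum_le {ι : Type*} (s : Finset ι) {f : ι → ℝ → Eu 4 → ℝ}
    (hf : ∀ k, Continuous fun q : ℝ × Eu 4 => f k q.1 q.2) :
    W ν ρ p (fun t x => ∑ k ∈ s, f k t x) ≤ ∑ k ∈ s, W ν ρ p (f k) := by
  classical
  induction s using Finset.induction_on with
  | empty => simp [W, wI]
  | insert a s ha ih =>
      simp only [Finset.sum_insert ha]
      exact (W_add_le (hf a)).trans (add_le_add le_rfl ih)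

lemma cont_J : ∀ (k : ℕ) {u : ℝ → Eu 4 → ℝ}, SmoothTX u →
    Continuous fun q : ℝ × Eu 4 => J k (u q.1) q.2
  | 0, _, hu => (stx_cont hu).pow 2
  | k + 1, _, hu => ((stx_cont hu).pow 2).add
      (continuous_finsetSum _ fun i _ => cont_J k (stx_sd hu i))

lemma stx_dAl {u : ℝ → Eu 4 → ℝ} (hu : SmoothTX u) : SmoothTX (dAlembert u) :=
  stx_sub (stx_td (stx_td hu)) (stx_sum _ fun i => stx_sd (stx_sd hu i) i)

lemma sd_slice (i : Fin 4) (u : ℝ → Eu 4 → ℝ) : (fun t => sd i (u t)) = pd (n := 4) i.succ u := by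
  funext t x; exact (pd_succ i u t x).symm

lemma pd_dAl {u : ℝ → Eu 4 → ℝ} (hu : SmoothTX u) (α : Fin 5) :
    pd (n := 4) α (dAlembert u) = dAlembert (pd (n := 4) α u) := by
  have e : ∀ v : ℝ → Eu 4 → ℝ, dAlembert v = fun t x => pd (n := 4) 0 (pd (n := 4) 0 v) t x
      - ∑ i : Fin 4, pd (n := 4) i.succ (pd (n := 4) i.succ v) t x := fun v => by
    funext t x
    rw [pd_zero, pd_zero]
    unfold dAlembert
    congr 1
  funext t x
  rw [e u, e (pd (n := 4) α u), pd_sub (stx_pd (stx_pd hu _) _)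
    (stx_sum _ fun i => stx_pd (stx_pd hu _) _), pd_sum _ fun i => stx_pd (stx_pd hu _) _]
  congr 1
  · rw [pd_comm (stx_pd hu 0) α 0, pd_comm hu α 0]
  · refine Finset.sum_congr rfl fun i _ => ?_
    rw [pd_comm (stx_pd hu i.succ) α i.succ, pd_comm hu α i.succ]

lemma pdIter_cons {m : ℕ} (α : Fin 5) (μ : Fin m → Fin 5) (u : ℝ → Eu 4 → ℝ) :
    pdIter (n := 4) (Fin.cons α μ : Fin (m + 1) → Fin 5) u = pd (n := 4) α (pdIter (n := 4) μ u) := by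
  simp [pdIter]

lemma sdIter_cons {m : ℕ} (i : Fin 4) (μ : Fin m → Fin 4) (v : Eu 4 → ℝ) :
    sdIter (Fin.cons i μ : Fin (m + 1) → Fin 4) v = sd i (sdIter μ v) := by
  simp [sdIter]

lemma stx_pdIter : ∀ {m : ℕ} (μ : Fin m → Fin 5) {u : ℝ → Eu 4 → ℝ}, SmoothTX u →
    SmoothTX (pdIter (n := 4) μ u)
  | 0, _, _, hu => hu
  | _ + 1, μ, _, hu => stx_pd (stx_pdIter (fun i => μ i.succ) hu) (μ 0)

lemma tdIter_eq_pdIter (u : ℝ → Eu 4 → ℝ) : ∀ j : ℕ,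
    td^[j] u = pdIter (n := 4) (fun _ : Fin j => (0 : Fin 5)) u
  | 0 => rfl
  | j + 1 => by
      rw [Function.iterate_succ_apply', tdIter_eq_pdIter u j]
      exact (pd_zero _).symm

lemma tdIter_dAl {u : ℝ → Eu 4 → ℝ} (hu : SmoothTX u) : ∀ j : ℕ,
    td^[j] (dAlembert u) = dAlembert (td^[j] u)
  | 0 => rfl
  | j + 1 => by
      rw [Function.iterate_succ_apply', Function.iterate_succ_apply', tdIter_dAl hu j, ← pd_zero,
        ← pd_zero, pd_dAl (stx_tdIter hu j)]

lemma stx_sdIterT : ∀ {k : ℕ} (μ : Fin k → Fin 4) {v : ℝ → Eu 4 → ℝ}, SmoothTX v →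
    SmoothTX (sdIterT μ v)
  | 0, _, _, hv => hv
  | _ + 1, μ, _, hv => stx_sd (stx_sdIterT (fun i => μ i.succ) hv) (μ 0)

lemma sdIterT_succ {k : ℕ} (μ : Fin (k + 1) → Fin 4) (v : ℝ → Eu 4 → ℝ) :
    sdIterT μ v = pd (n := 4) (μ 0).succ (sdIterT (fun i => μ i.succ) v) := by
  rw [← sd_slice]; rfl

lemma td_sdIterT : ∀ {k : ℕ} (μ : Fin k → Fin 4) {v : ℝ → Eu 4 → ℝ}, SmoothTX v →
    td (sdIterT μ v) = sdIterT μ (td v)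
  | 0, _, _, _ => rfl
  | _ + 1, μ, v, hv => by
      rw [sdIterT_succ μ (td v), sdIterT_succ μ v, ← td_sdIterT _ hv, ← pd_zero, ← pd_zero,
        pd_comm (stx_sdIterT _ hv)]

/-- Space-time derivatives can be sorted: time derivatives innermost. -/
lemma pdIter_sort {u : ℝ → Eu 4 → ℝ} (hu : SmoothTX u) : ∀ {m : ℕ} (μ : Fin m → Fin 5),
    pdIter (n := 4) μ u = td^[m] u ∨ ∃ (j k : ℕ) (i : Fin 4) (κ : Fin k → Fin 4), k + j + 1 = m ∧
      pdIter (n := 4) μ u = sdIterT κ (pd (n := 4) i.succ (td^[j] u))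
  | 0, _ => Or.inl rfl
  | m + 1, μ => by
      have e : pdIter (n := 4) μ u = pd (n := 4) (μ 0) (pdIter (n := 4) (fun i => μ i.succ) u) := rfl
      rw [e]
      obtain h | ⟨j, k, i, κ, hk, h⟩ := pdIter_sort hu fun i => μ i.succ
      · rw [h]
        refine Fin.cases ?_ (fun l => ?_) (μ 0)
        · left; rw [pd_zero, Function.iterate_succ_apply']
        · right; exact ⟨m, 0, l, Fin.elim0, by omega, rfl⟩
      · rw [h]
        right
        refine Fin.cases ?_ (fun l => ?_) (μ 0)
        · refine ⟨j + 1, k, i, κ, by omega, ?_⟩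
          rw [pd_zero, td_sdIterT κ (stx_pd (stx_tdIter hu j) _), Function.iterate_succ_apply',
            ← pd_zero, ← pd_zero, pd_comm (stx_tdIter hu j)]
        · refine ⟨j, k + 1, i, Fin.cons l κ, by omega, ?_⟩
          rw [sdIterT_succ]
          simp

lemma J_sdIter : ∀ {k : ℕ} (κ : Fin k → Fin 4) (l : ℕ) (v : Eu 4 → ℝ) (x : Eu 4),
    J l (sdIter κ v) x ≤ J (l + k) v x
  | 0, _, _, _, _ => le_rfl
  | k + 1, κ, l, v, x => by
      have h1 := J_sd_le l (sdIter (fun i => κ i.succ) v) (κ 0) x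
      have h2 := J_sdIter (fun i => κ i.succ) (l + 1) v x
      rw [show l + 1 + k = l + (k + 1) by omega] at h2
      exact h1.trans h2
end

/-! ### Higher order estimates -/

section
variable {ν : Measure ℝ} {ρ : Eu 4 → ℝ} {p : ℝ}

/-- Bounds for the members of a family closed under spatial derivatives bound its jets. -/
lemma W_J_family {B : ℝ≥0∞} {M : ℕ} (Q : ℕ → (ℝ → Eu 4 → ℝ) → Prop)
    (hQ : ∀ m u, Q m u → SmoothTX u) (hQB : ∀ m u, m ≤ M → Q m u → W ν ρ p (fun t x => u t x ^ 2) ≤ B)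
    (hQs : ∀ m u i, Q m u → Q (m + 1) (pd (n := 4) (Fin.succ i) u)) :
    ∀ (k m : ℕ) (u : ℝ → Eu 4 → ℝ), m + k ≤ M → Q m u → W ν ρ p (fun t x => J k (u t) x) ≤ 5 ^ k * B
  | 0, m, u, hm, hu => by
      rw [pow_zero, one_mul]
      exact hQB m u hm hu
  | k + 1, m, u, hm, hu => by
      have hs := hQ m u hu
      calc W ν ρ p (fun t x => J (k + 1) (u t) x)
          = W ν ρ p (fun t x => u t x ^ 2 + ∑ i, J k (sd i (u t)) x) := rfl
        _ ≤ W ν ρ p (fun t x => u t x ^ 2) + W ν ρ p (fun t x => ∑ i, J k (sd i (u t)) x) :=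
            W_add_le ((stx_cont hs).pow 2)
        _ ≤ B + ∑ i, W ν ρ p (fun t x => J k (sd i (u t)) x) := by
            refine add_le_add (hQB m u (by omega) hu)
              (W_sum_le _ fun i => ?_)
            exact cont_J k (stx_sd hs i)
        _ ≤ B + ∑ _i : Fin 4, 5 ^ k * B := by
            refine add_le_add le_rfl (Finset.sum_le_sum fun i _ => ?_)
            have := W_J_family Q hQ hQB hQs k (m + 1) _ (by omega) (hQs m u i hu)
            rw [← sd_slice] at this
            exact this
        _ ≤ 5 ^ k * B + ∑ _i : Fin 4, 5 ^ k * B := by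
            refine add_le_add ?_ le_rfl
            exact le_mul_of_one_le_left (zero_le) (one_le_pow₀ (by norm_num))
        _ = 5 ^ (k + 1) * B := by
            simp only [Finset.sum_const, Finset.card_univ, Fintype.card_fin, nsmul_eq_mul]
            push_cast
            ring

lemma stx_lap {u : ℝ → Eu 4 → ℝ} (hu : SmoothTX u) : SmoothTX fun t x => lap (u t) x :=
  stx_sum _ fun i => stx_sd (stx_sd hu i) i

lemma lap_eq {u : ℝ → Eu 4 → ℝ} (t : ℝ) :
    lap (u t) = fun x => td (td u) t x - dAlembert u t x := by
  funext x; simp [dAlembert, lap]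

lemma td_sq_le (u : ℝ → Eu 4 → ℝ) (t : ℝ) (x : Eu 4) : td u t x ^ 2 ≤ gradMag u t x ^ 2 := by
  rw [← sq_abs, ← pd_zero]
  exact pow_le_pow_left₀ (abs_nonneg _) (abs_pd_le u 0 t x) 2

lemma sum_sd_sq_le (u : ℝ → Eu 4 → ℝ) (t : ℝ) (x : Eu 4) :
    ∑ i, sd i (u t) x ^ 2 ≤ gradMag u t x ^ 2 := by
  rw [gradMag_sq']
  simp only [pd_succ]
  exact le_add_of_nonneg_left (sq_nonneg _)

/-- Elliptic regularity combined with `Δ = ∂ₜ² - □` trades all spatial derivatives for time derivatives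
of `φ` and derivatives of `□φ`. -/
lemma W_elliptic (hρ : Sm ρ) (hg : ∀ x, ρ x = 0 → fderiv ℝ ρ x ≠ 0) (Z : TF ρ) (hp : 0 ≤ p)
    (N m : ℕ) : ∃ C : NNReal, ∀ (ν : Measure ℝ) (φ : ℝ → Eu 4 → ℝ) (B : ℝ≥0∞), SmoothTX φ →
      (∀ j, ∀ᵐ t ∂ν, ∀ x, ρ x = 0 → td^[j] φ t x = 0) →
      (∀ j ≤ N, W ν ρ p (fun t x => gradMag (td^[j] φ) t x ^ 2) ≤ B) →
      (∀ k j, k + j + 1 ≤ N → W ν ρ p (fun t x => J k (dAlembert (td^[j] φ) t) x) ≤ B) →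
      ∀ j, m + j ≤ N → W ν ρ p (fun t x => ∑ i, J m (sd i (td^[j] φ t)) x) ≤ C * B := by
  induction m using Nat.strong_induction_on with
  | _ m ih =>
  cases m with
  | zero =>
      refine ⟨1, fun ν φ B hφ hb hG hD j hj => ?_⟩
      rw [ENNReal.coe_one, one_mul]
      exact (W_mono fun t x => sum_sd_sq_le _ t x).trans (hG j (by omega))
  | succ m =>
      obtain ⟨C₁, hC₁⟩ := ih m (by omega)
      obtain ⟨C₂, hC₂⟩ : ∃ C : NNReal, ∀ (ν : Measure ℝ) (φ : ℝ → Eu 4 → ℝ) (B : ℝ≥0∞), SmoothTX φ →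
          (∀ j, ∀ᵐ t ∂ν, ∀ x, ρ x = 0 → td^[j] φ t x = 0) →
          (∀ j ≤ N, W ν ρ p (fun t x => gradMag (td^[j] φ) t x ^ 2) ≤ B) →
          (∀ k j, k + j + 1 ≤ N → W ν ρ p (fun t x => J k (dAlembert (td^[j] φ) t) x) ≤ B) →
          ∀ j, m + 1 + j ≤ N → W ν ρ p (fun t x => J m (td^[j + 2] φ t) x) ≤ C * B := by
        have h2 : ∀ (ν : Measure ℝ) (φ : ℝ → Eu 4 → ℝ) (B : ℝ≥0∞) (j : ℕ), j + 1 ≤ N →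
            (∀ j ≤ N, W ν ρ p (fun t x => gradMag (td^[j] φ) t x ^ 2) ≤ B) →
            W ν ρ p (fun t x => td^[j + 2] φ t x ^ 2) ≤ B := fun ν φ B j hj hG => by
          refine (W_mono fun t x => ?_).trans (hG (j + 1) hj)
          rw [show j + 2 = (j + 1) + 1 from rfl, Function.iterate_succ_apply']
          exact td_sq_le _ t x
        cases m with
        | zero =>
            refine ⟨1, fun ν φ B hφ hb hG hD j hj => ?_⟩
            rw [ENNReal.coe_one, one_mul]
            exact h2 ν φ B j (by omega) hG
        | succ m =>
            obtain ⟨C₃, hC₃⟩ := ih m (by omega)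
            refine ⟨1 + C₃, fun ν φ B hφ hb hG hD j hj => ?_⟩
            refine (W_add_le (f := fun t x => td^[j + 2] φ t x ^ 2)
              (g := fun t x => ∑ i, J m (sd i (td^[j + 2] φ t)) x)
              ((stx_cont (stx_tdIter hφ _)).pow 2)).trans ?_
            rw [ENNReal.coe_add, ENNReal.coe_one, add_mul, one_mul]
            exact add_le_add (h2 ν φ B j (by omega) hG) (hC₃ ν φ B hφ hb hG hD (j + 2) (by omega))
      obtain ⟨E, hE0, hE⟩ := elliptic hρ hg Z hp m
      refine ⟨1 + E.toNNReal * (2 * (C₂ + 1) + C₁), fun ν φ B hφ hb hG hD j hj => ?_⟩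
      set ψ := td^[j] φ with hψd
      have hψ : SmoothTX ψ := stx_tdIter hφ j
      have hlap : W ν ρ p (fun t x => J m (lap (ψ t)) x) ≤ 2 * ((C₂ + 1) * B) := by
        have e2 : td (td ψ) = td^[j + 2] φ := by
          rw [hψd, Function.iterate_succ_apply', Function.iterate_succ_apply']
        have hs := stx_tdIter hφ (j + 2)
        calc _ ≤ ENNReal.ofReal 2 * W ν ρ p (fun t x => J m (td^[j + 2] φ t) x
                  + J m (dAlembert ψ t) x) := by
              refine W_le (by norm_num) fun t x => ?_
              rw [lap_eq, e2]
              exact J_sub m (stx_slice hs t) (stx_slice (stx_dAl hψ) t) x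
          _ ≤ ENNReal.ofReal 2 * (W ν ρ p (fun t x => J m (td^[j + 2] φ t) x)
                + W ν ρ p (fun t x => J m (dAlembert ψ t) x)) := by
              gcongr
              exact W_add_le (cont_J m hs)
          _ ≤ 2 * (C₂ * B + B) := by
              rw [show ENNReal.ofReal 2 = 2 by norm_num]
              gcongr
              · exact hC₂ ν φ B hφ hb hG hD j (by omega)
              · exact hD m j (by omega)
          _ = _ := by ring
      have hell : W ν ρ p (fun t x => ∑ i, ∑ k, J m (sd i (sd k (ψ t))) x)
          ≤ E.toNNReal * (2 * ((C₂ + 1) * B) + C₁ * B) := by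
        calc _ ≤ ENNReal.ofReal E * W ν ρ p (fun t x => ellR m (ψ t) x) := by
              unfold W
              rw [← lintegral_const_mul' _ _ ENNReal.ofReal_ne_top]
              refine lintegral_mono_ae ?_
              filter_upwards [hb j] with t ht
              exact hE _ (stx_slice hψ t) ht
          _ ≤ E.toNNReal * (W ν ρ p (fun t x => J m (lap (ψ t)) x)
                + W ν ρ p (fun t x => ∑ i, J m (sd i (ψ t)) x)) := by
              change ENNReal.ofReal E * _ ≤ ENNReal.ofReal E * _
              gcongr
              exact W_add_le (cont_J m (stx_lap hψ))
          _ ≤ _ := by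
              gcongr
              exact hC₁ ν φ B hφ hb hG hD j (by omega)
      calc W ν ρ p (fun t x => ∑ i, J (m + 1) (sd i (ψ t)) x)
          = W ν ρ p (fun t x => (∑ i, sd i (ψ t) x ^ 2)
            + ∑ i, ∑ k, J m (sd i (sd k (ψ t))) x) := by
              congr 1
              funext t x
              rw [Finset.sum_comm, ← Finset.sum_add_distrib]
              rfl
        _ ≤ W ν ρ p (fun t x => ∑ i, sd i (ψ t) x ^ 2)
            + W ν ρ p (fun t x => ∑ i, ∑ k, J m (sd i (sd k (ψ t))) x) :=
              W_add_le (continuous_finsetSum _ fun i _ => (stx_cont (stx_sd hψ i)).pow 2)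
        _ ≤ B + E.toNNReal * (2 * ((C₂ + 1) * B) + C₁ * B) :=
              add_le_add ((W_mono fun t x => sum_sd_sq_le _ t x).trans (hG j (by omega))) hell
        _ = _ := by push_cast; ring

/-- All space-time derivatives of the gradient of `φ` up to order `N` are controlled by the
gradients of `∂ₜʲφ`, `j ≤ N`, and the derivatives of `□φ` of order less than `N`. -/
lemma W_full (hρ : Sm ρ) (hg : ∀ x, ρ x = 0 → fderiv ℝ ρ x ≠ 0) (Z : TF ρ) (hp : 0 ≤ p)
    (N : ℕ) : ∃ C : NNReal, ∀ (ν : Measure ℝ) (φ : ℝ → Eu 4 → ℝ) (B : ℝ≥0∞), SmoothTX φ →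
      (∀ j, ∀ᵐ t ∂ν, ∀ x, ρ x = 0 → td^[j] φ t x = 0) →
      (∀ j ≤ N, W ν ρ p (fun t x => gradMag (td^[j] φ) t x ^ 2) ≤ B) →
      (∀ (m : ℕ) (μ : Fin m → Fin 5), m + 1 ≤ N →
        W ν ρ p (fun t x => dAlembert (pdIter (n := 4) μ φ) t x ^ 2) ≤ B) →
      ∀ (m : ℕ) (μ : Fin m → Fin 5), m ≤ N →
        W ν ρ p (fun t x => gradMag (pdIter (n := 4) μ φ) t x ^ 2) ≤ C * B := by
  choose C hC using W_elliptic hρ hg Z hp N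
  refine ⟨5 * (1 + 5 ^ N * ∑ k ∈ Finset.range (N + 1), C k),
    fun ν φ B hφ hb hG hD m μ hm => ?_⟩
  set B' : ℝ≥0∞ := 5 ^ N * B with hB'
  have hBB : B ≤ B' := le_mul_of_one_le_left zero_le (one_le_pow₀ (by norm_num))
  have hD' : ∀ k j, k + j + 1 ≤ N →
      W ν ρ p (fun t x => J k (dAlembert (td^[j] φ) t) x) ≤ B' := fun k j hkj => by
    have := W_J_family (ν := ν) (ρ := ρ) (p := p) (B := B) (M := N - 1)
      (fun m u => ∃ μ : Fin m → Fin 5, u = dAlembert (pdIter (n := 4) μ φ))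
      (by rintro m u ⟨μ, rfl⟩; exact stx_dAl (stx_pdIter μ hφ))
      (by rintro m u hm ⟨μ, rfl⟩; exact hD m μ (by omega))
      (by
        rintro m u i ⟨μ, rfl⟩
        exact ⟨Fin.cons i.succ μ, by rw [pdIter_cons, pd_dAl (stx_pdIter μ hφ)]⟩)
      k j (dAlembert (td^[j] φ)) (by omega) ⟨_, by rw [tdIter_eq_pdIter]⟩
    refine this.trans ?_
    rw [hB']
    gcongr
    · norm_num
    · omega
  have hE := fun (k j : ℕ) (hkj : k + j ≤ N) =>
    hC k ν φ B' hφ hb (fun j hj => (hG j hj).trans hBB) hD' j hkj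
  have h1 : ∀ α : Fin 5, W ν ρ p (fun t x => pd (n := 4) α (pdIter (n := 4) μ φ) t x ^ 2)
      ≤ B + (∑ k ∈ Finset.range (N + 1), (C k : ℝ≥0∞)) * B' := fun α => by
    rw [← pdIter_cons]
    obtain h | ⟨j, k, i, κ, hk, h⟩ := pdIter_sort hφ (Fin.cons α μ : Fin (m + 1) → Fin 5)
    · rw [h]
      refine le_add_right ((W_mono fun t x => ?_).trans (hG m hm))
      rw [Function.iterate_succ_apply']
      exact td_sq_le _ t x
    · rw [h]
      refine le_add_left (((W_mono fun t x => ?_).trans (hE k j (by omega))).trans ?_)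
      · have a1 := J_sdIter κ 0 (pd (n := 4) i.succ (td^[j] φ) t) x
        rw [zero_add, ← sd_slice] at a1
        rw [← sd_slice]
        exact a1.trans (Finset.single_le_sum (f := fun i => J k (sd i (td^[j] φ t)) x)
          (fun i _ => J_nonneg _ _ _) (Finset.mem_univ i))
      · gcongr
        exact Finset.single_le_sum (f := fun k => (C k : ℝ≥0∞)) (fun _ _ => zero_le)
          (Finset.mem_range.2 (by omega))
  simp only [gradMag_sq]
  calc _ ≤ ∑ α, W ν ρ p (fun t x => pd (n := 4) α (pdIter (n := 4) μ φ) t x ^ 2) :=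
        W_sum_le _ fun α => (stx_cont (stx_pd (stx_pdIter μ hφ) α)).pow 2
    _ ≤ ∑ _α : Fin 5, (B + (∑ k ∈ Finset.range (N + 1), (C k : ℝ≥0∞)) * B') :=
        Finset.sum_le_sum fun α _ => h1 α
    _ = _ := by
        simp only [Finset.sum_const, Finset.card_univ, Fintype.card_fin, nsmul_eq_mul, hB']
        push_cast
        ring
end

/-! ### The data at time zero -/

section
variable {ρ : Eu 4 → ℝ} {p : ℝ}

lemma wI_congr (hρ : Sm ρ) (hg : ∀ x, ρ x = 0 → fderiv ℝ ρ x ≠ 0) {f g : Eu 4 → ℝ}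
    (h : ∀ x, 0 < ρ x → f x = g x) : wI ρ p f = wI ρ p g := by
  unfold wI
  rw [setLIntegral_congr (ae_nonneg_iff_pos hρ hg), setLIntegral_congr (ae_nonneg_iff_pos hρ hg)]
  refine setLIntegral_congr_fun (measurableSet_lt measurable_const hρ.cont.measurable) fun x hx => ?_
  simp only [h x hx]

lemma W_dirac (a : ℝ) (f : ℝ → Eu 4 → ℝ) : W (Measure.dirac a) ρ p f = wI ρ p (f a) := by
  unfold W; rw [lintegral_dirac]

lemma wI_zero_sq (u : Eu 4 → ℝ) : wI ρ 0 (fun x => u x ^ 2) = L2x {x | 0 ≤ ρ x} u ^ 2 := by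
  rw [L2x_sq]; unfold wI; simp only [jw_zero, one_pow, one_mul]

lemma W_dirac_sq (a : ℝ) (u : ℝ → Eu 4 → ℝ) :
    W (Measure.dirac a) ρ 0 (fun t x => u t x ^ 2) = L2x {x | 0 ≤ ρ x} (u a) ^ 2 := by
  rw [W_dirac, wI_zero_sq]

lemma W_st_sq {T : ℝ} {u : ℝ → Eu 4 → ℝ} (hu : Continuous fun q : ℝ × Eu 4 => u q.1 q.2) :
    L2st T {x | 0 ≤ ρ x} (fun t x => jw p x * u t x) ^ 2
      = W (volume.restrict (Icc 0 T)) ρ p (fun t x => u t x ^ 2) := by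
  have hm : Measurable fun q : ℝ × Eu 4 => jw p q.2 * u q.1 q.2 :=
    (((sm_jw (n := 4) p).cont.comp (continuous_snd (X := ℝ))).mul hu).measurable
  rw [L2st_sq (u := fun t x => jw p x * u t x) _ hm]
  simp only [W, wI, mul_pow]

lemma le_of_sq_le {X R : ℝ≥0∞} {c : NNReal} (h : X ^ 2 ≤ c * R ^ 2) : X ≤ (c + 1 : NNReal) * R := by
  refine ennreal_sqrt_le (h.trans ?_)
  rw [mul_pow]
  gcongr
  norm_cast
  nlinarith [c.2]

/-- Jets of a time slice agree with those of the data on the open exterior, hence a.e. -/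
lemma wI_J_data (hρ : Sm ρ) (hg : ∀ x, ρ x = 0 → fderiv ℝ ρ x ≠ 0) {u f : Eu 4 → ℝ}
    (h : ∀ x, 0 ≤ ρ x → u x = f x) (k : ℕ) : wI ρ p (J k u) = wI ρ p (J k f) := by
  refine wI_congr hρ hg fun x hx => J_eventuallyEq k ?_
  filter_upwards [(isOpen_lt continuous_const hρ.cont).mem_nhds hx] with y hy
  exact h y (le_of_lt hy)

lemma J_lap_le (k : ℕ) {v : Eu 4 → ℝ} (hv : Sm v) (x : Eu 4) : J k (lap v) x ≤ 4 * J (k + 2) v x := by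
  have h1 := J_sum k (fun i : Fin 4 => sd i (sd i v)) (fun i => sm_sd (sm_sd hv i) i) x
  rw [Fintype.card_fin] at h1
  refine h1.trans ?_
  push_cast
  refine mul_le_mul_of_nonneg_left ?_ (by norm_num)
  calc ∑ i, J k (sd i (sd i v)) x ≤ ∑ i, J (k + 1) (sd i v) x :=
        Finset.sum_le_sum fun i _ => J_sd_le k _ i x
    _ ≤ J (k + 2) v x := le_add_of_nonneg_left (sq_nonneg _)

/-- At time zero the equation `∂ₜ²φ = Δφ + □φ` expresses all derivatives of `φ` by derivatives of
the data and of `□φ`. -/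
lemma W_init (hρ : Sm ρ) (hg : ∀ x, ρ x = 0 → fderiv ℝ ρ x ≠ 0) (N : ℕ) : ∀ j : ℕ, ∃ C : NNReal,
    ∀ (φ : ℝ → Eu 4 → ℝ) (f g : Eu 4 → ℝ) (B : ℝ≥0∞), SmoothTX φ → Sm f → Sm g →
      (∀ x, 0 ≤ ρ x → φ 0 x = f x ∧ td φ 0 x = g x) →
      (∀ (m : ℕ) (μ : Fin m → Fin 4), m ≤ N + 1 → L2x {x | 0 ≤ ρ x} (sdIter μ f) ^ 2 ≤ B) →
      (∀ (m : ℕ) (μ : Fin m → Fin 4), m ≤ N → L2x {x | 0 ≤ ρ x} (sdIter μ g) ^ 2 ≤ B) →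
      (∀ (m : ℕ) (μ : Fin m → Fin 5), m ≤ N →
        L2x {x | 0 ≤ ρ x} (pdIter (n := 4) μ (dAlembert φ) 0) ^ 2 ≤ B) →
      ∀ k, k + j ≤ N + 1 → wI ρ 0 (J k (td^[j] φ 0)) ≤ C * B := by
  have hdata : ∀ (M : ℕ) (f : Eu 4 → ℝ) (B : ℝ≥0∞), Sm f →
      (∀ (m : ℕ) (μ : Fin m → Fin 4), m ≤ M → L2x {x | 0 ≤ ρ x} (sdIter μ f) ^ 2 ≤ B) →
      ∀ k ≤ M, wI ρ 0 (J k f) ≤ 5 ^ k * B := fun M f B hf hB k hk => by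
    have := W_J_family (ν := Measure.dirac 0) (ρ := ρ) (p := 0) (B := B) (M := M)
      (fun m u => ∃ μ : Fin m → Fin 4, u = fun _ => sdIter μ f)
      (by rintro m u ⟨μ, rfl⟩; exact stx_static (sm_sdIter μ hf))
      (by
        rintro m u hm ⟨μ, rfl⟩
        rw [W_dirac_sq 0 (fun _ => sdIter μ f)]
        exact hB m μ hm)
      (by
        rintro m u i ⟨μ, rfl⟩
        refine ⟨Fin.cons i μ, ?_⟩
        rw [← sd_slice]
        funext _ x
        rw [sdIter_cons])
      k 0 (fun _ => f) (by omega) ⟨Fin.elim0, rfl⟩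
    rwa [W_dirac] at this
  intro j
  induction j using Nat.twoStepInduction with
  | zero =>
      refine ⟨5 ^ (N + 1), fun φ f g B hφ hf hg' hd h1 h2 h3 k hk => ?_⟩
      rw [show td^[0] φ 0 = φ 0 from rfl, wI_J_data hρ hg (fun x hx => (hd x hx).1)]
      refine (hdata (N + 1) f B hf h1 k (by omega)).trans ?_
      push_cast
      gcongr
      · norm_num
      · omega
  | one =>
      refine ⟨5 ^ (N + 1), fun φ f g B hφ hf hg' hd h1 h2 h3 k hk => ?_⟩
      rw [show td^[1] φ 0 = td φ 0 from rfl, wI_J_data hρ hg (fun x hx => (hd x hx).2)]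
      refine (hdata N g B hg' h2 k (by omega)).trans ?_
      push_cast
      gcongr
      · norm_num
      · omega
  | more j ih _ =>
      obtain ⟨C, hC⟩ := ih
      refine ⟨2 * (4 * C + 5 ^ (N + 1)), fun φ f g B hφ hf hg' hd h1 h2 h3 k hk => ?_⟩
      have hψ := stx_tdIter hφ j
      have hbox : wI ρ 0 (J k (dAlembert (td^[j] φ) 0)) ≤ 5 ^ k * B := by
        have := W_J_family (ν := Measure.dirac 0) (ρ := ρ) (p := 0) (B := B) (M := N)
          (fun m u => ∃ μ : Fin m → Fin 5, u = pdIter (n := 4) μ (dAlembert φ))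
          (by rintro m u ⟨μ, rfl⟩; exact stx_pdIter μ (stx_dAl hφ))
          (by
            rintro m u hm ⟨μ, rfl⟩
            rw [W_dirac_sq 0 (pdIter (n := 4) μ (dAlembert φ))]
            exact h3 m μ hm)
          (by
            rintro m u i ⟨μ, rfl⟩
            exact ⟨Fin.cons i.succ μ, (pdIter_cons _ _ _).symm⟩)
          k j (dAlembert (td^[j] φ)) (by omega)
          ⟨_, by rw [← tdIter_dAl hφ, tdIter_eq_pdIter]⟩
        rwa [W_dirac] at this
      have e : td^[j + 2] φ 0 = fun x => lap (td^[j] φ 0) x + dAlembert (td^[j] φ) 0 x := by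
        rw [Function.iterate_succ_apply', Function.iterate_succ_apply']
        funext x
        simp [lap_eq]
      have s1 := stx_slice hψ 0
      have s2 := stx_slice (stx_dAl hψ) 0
      calc wI ρ 0 (J k (td^[j + 2] φ 0))
          ≤ ENNReal.ofReal 2 * wI ρ 0 (fun x => J k (lap (td^[j] φ 0)) x
            + J k (dAlembert (td^[j] φ) 0) x) := by
            refine wI_le (by norm_num) fun x => ?_
            rw [e]
            exact J_add k (sm_lap s1) s2 x
        _ ≤ ENNReal.ofReal 2 * (wI ρ 0 (J k (lap (td^[j] φ 0)))
            + wI ρ 0 (J k (dAlembert (td^[j] φ) 0))) := by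
            gcongr
            exact wI_add_le (J_cont k (sm_lap s1))
        _ ≤ 2 * (ENNReal.ofReal 4 * wI ρ 0 (J (k + 2) (td^[j] φ 0)) + 5 ^ (N + 1) * B) := by
            rw [show ENNReal.ofReal 2 = 2 by norm_num]
            gcongr
            · exact wI_le (by norm_num) fun x => J_lap_le k s1 x
            · refine hbox.trans ?_
              gcongr
              · norm_num
              · omega
        _ ≤ 2 * (4 * (C * B) + 5 ^ (N + 1) * B) := by
            rw [show ENNReal.ofReal 4 = 4 by norm_num]
            gcongr
            exact hC φ f g B hφ hf hg' hd h1 h2 h3 (k + 2) (by omega)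
        _ = _ := by push_cast; ring

/-- The initial energies of the time derivatives of `φ`. -/
lemma init_L2 (hρ : Sm ρ) (hg : ∀ x, ρ x = 0 → fderiv ℝ ρ x ≠ 0) (N : ℕ) : ∃ C : NNReal,
    ∀ (φ : ℝ → Eu 4 → ℝ) (f g : Eu 4 → ℝ) (R : ℝ≥0∞), SmoothTX φ → Sm f → Sm g →
      (∀ x, 0 ≤ ρ x → φ 0 x = f x ∧ td φ 0 x = g x) →
      (∀ (m : ℕ) (μ : Fin m → Fin 4), m ≤ N + 1 → L2x {x | 0 ≤ ρ x} (sdIter μ f) ≤ R) →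
      (∀ (m : ℕ) (μ : Fin m → Fin 4), m ≤ N → L2x {x | 0 ≤ ρ x} (sdIter μ g) ≤ R) →
      (∀ (m : ℕ) (μ : Fin m → Fin 5), m ≤ N →
        L2x {x | 0 ≤ ρ x} (pdIter (n := 4) μ (dAlembert φ) 0) ≤ R) →
      ∀ j ≤ N, L2x {x | 0 ≤ ρ x} (gradMag (td^[j] φ) 0) ≤ C * R ∧
        L2x {x | 0 ≤ ρ x} (td^[j] φ 0) ≤ C * R := by
  choose C hC using W_init hρ hg N
  set D : NNReal := ∑ j ∈ Finset.range (N + 2), C j with hD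
  have hle : ∀ j ≤ N + 1, (C j : ℝ≥0∞) ≤ D := fun j hj => by
    norm_cast
    exact Finset.single_le_sum (f := C) (fun _ _ => zero_le) (Finset.mem_range.2 (by omega))
  refine ⟨2 * D + 1, fun φ f g R hφ hf hg' hd h1 h2 h3 j hj => ?_⟩
  have key : ∀ k j, k + j ≤ N + 1 → wI ρ 0 (J k (td^[j] φ 0)) ≤ D * R ^ 2 := fun k j hkj =>
    (hC j φ f g (R ^ 2) hφ hf hg' hd (fun m μ hm => by gcongr; exact h1 m μ hm)
      (fun m μ hm => by gcongr; exact h2 m μ hm) (fun m μ hm => by gcongr; exact h3 m μ hm) k hkj).trans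
      (by gcongr; exact_mod_cast hle j (by omega))
  constructor
  · refine le_of_sq_le ?_
    rw [← wI_zero_sq]
    calc _ ≤ wI ρ 0 (fun x => J 0 (td^[j + 1] φ 0) x + J 1 (td^[j] φ 0) x) := by
          refine wI_mono fun x => ?_
          rw [gradMag_sq', Function.iterate_succ_apply', pd_zero]
          simp only [pd_succ]
          exact add_le_add le_rfl (le_add_of_nonneg_left (sq_nonneg _))
      _ ≤ D * R ^ 2 + D * R ^ 2 :=
          (wI_add_le (J_cont 0 (stx_slice (stx_tdIter hφ _) 0))).trans
            (add_le_add (key 0 (j + 1) (by omega)) (key 1 j (by omega)))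
      _ = _ := by push_cast; ring
  · refine le_of_sq_le ?_
    rw [← wI_zero_sq]
    refine (key 0 j (by omega)).trans ?_
    gcongr
    rw [two_mul]; exact le_self_add

lemma fderiv_self_eq_sum (u : Eu 4 → ℝ) (x : Eu 4) : fderiv ℝ u x x = ∑ i, x i * sd i u x := by
  have e : x = ∑ i, x i • EuclideanSpace.single i (1 : ℝ) := by
    have := (EuclideanSpace.basisFun (Fin 4) ℝ).sum_repr x
    simpa using this.symm
  conv_lhs => rw [e]
  rw [map_sum]
  refine Finset.sum_congr rfl fun i _ => ?_
  rw [map_smul, smul_eq_mul, ← e]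
  rfl

/-- On the boundary of a star-shaped obstacle the radial derivative of the defining function is
nonnegative. -/
lemma star_radial (hρ : Sm ρ) (hstar : ∀ x, ρ x ≤ 0 → ∀ s : ℝ, s ∈ Icc (0 : ℝ) 1 → ρ (s • x) ≤ 0)
    {x : Eu 4} (hx : ρ x = 0) : 0 ≤ ∑ i, x i * sd i ρ x := by
  rw [← fderiv_self_eq_sum]
  have hd : HasDerivAt (fun s : ℝ => ρ (s • x)) (fderiv ℝ ρ x x) 1 := by
    have h1 : HasFDerivAt ρ (fderiv ℝ ρ x) ((1 : ℝ) • x) := by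
      rw [one_smul]; exact (hρ.diff x).hasFDerivAt
    have h2 : HasDerivAt (fun s : ℝ => s • x) x 1 := by
      simpa using (hasDerivAt_id (1 : ℝ)).smul_const x
    exact h1.comp_hasDerivAt 1 h2
  have ht := hd.tendsto_slope.mono_left (nhdsLT_le_nhdsNE (1 : ℝ))
  refine ge_of_tendsto ht ?_
  filter_upwards [Ioo_mem_nhdsLT (zero_lt_one (α := ℝ))] with s hs
  rw [slope_def_field, one_smul, hx]
  have := hstar x hx.le s ⟨hs.1.le, hs.2.le⟩
  exact div_nonneg_of_nonpos (by linarith) (by linarith [hs.2])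
end

/-! ### Assembly of the estimate -/

section
variable {ρ : Eu 4 → ℝ} {h : Fin 5 → Fin 5 → ℝ → Eu 4 → ℝ}

lemma jw_one_le {x : Eu 4} (hx : x ≠ 0) : jw 1 x ≤ ‖x‖⁻¹ := by
  unfold jw
  rw [Real.rpow_neg_one]
  exact inv_anti₀ (norm_pos_iff.2 hx) (norm_le_jap x)

lemma measurable_L2x {u : ℝ → Eu 4 → ℝ} (hu : Continuous fun q : ℝ × Eu 4 => u q.1 q.2) :
    Measurable fun t => L2x {x | 0 ≤ ρ x} (u t) := by
  have h1 : Measurable fun t => wI ρ 0 (fun x => u t x ^ 2) :=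
    measurable_wI (f := fun t x => u t x ^ 2) (hu.pow 2)
  have h2 : (fun t => L2x {x | 0 ≤ ρ x} (u t))
      = fun t => (wI ρ 0 (fun x => u t x ^ 2)) ^ (1 / 2 : ℝ) := by
    funext t
    rw [wI_zero_sq, ← ENNReal.rpow_natCast, ← ENNReal.rpow_mul]
    norm_num
  rw [h2]
  exact h1.pow_const _

/-- The weight `|h|/r` dominates the regularized one `|h| ⟨x⟩⁻¹` away from the origin. -/
lemma L2x_pert_le {S : Set (Eu 4)} (ψ : ℝ → Eu 4 → ℝ) (t : ℝ) :
    L2x S (fun x => (dhabs h t x + habs h t x * jw 1 x) * gradMag ψ t x)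
      ≤ L2x S (fun x => (dhabs h t x + habs h t x / ‖x‖) * gradMag ψ t x) := by
  refine eLpNorm_mono_ae ?_
  have h0 : ∀ᵐ x : Eu 4 ∂volume.restrict S, x ≠ 0 :=
    ae_restrict_of_ae (Measure.ae_ne volume 0)
  filter_upwards [h0] with x hx
  have ha : 0 ≤ habs h t x := Finset.sum_nonneg fun _ _ => Finset.sum_nonneg fun _ _ => abs_nonneg _
  have hd : 0 ≤ dhabs h t x := Finset.sum_nonneg fun _ _ => Finset.sum_nonneg fun _ _ =>
    Finset.sum_nonneg fun _ _ => abs_nonneg _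
  have hG := gradMag_nonneg ψ t x
  have hj := (jw_pos 1 x).le
  have key : habs h t x * jw 1 x ≤ habs h t x / ‖x‖ := by
    rw [div_eq_mul_inv]; exact mul_le_mul_of_nonneg_left (jw_one_le hx) ha
  rw [Real.norm_of_nonneg (by positivity), Real.norm_of_nonneg (by positivity)]
  exact mul_le_mul_of_nonneg_right (by linarith) hG

/-- The localized energy estimate for a single function, in the form used for `∂ₜʲ φ`. -/
lemma energy_one (hρ : Sm ρ) (hg : ∀ x, ρ x = 0 → fderiv ℝ ρ x ≠ 0)
    (hst : ∀ x, ρ x = 0 → 0 ≤ ∑ i, x i * sd i ρ x)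
    (hh : ∀ α β, SmoothTX (h α β)) (hsym : ∀ α β t x, h α β t x = h β α t x)
    (hδ : ∀ t x, habs h t x ≤ 1 / 100) {ψ : ℝ → Eu 4 → ℝ} (hψ : SmoothTX ψ)
    (hb : ∀ t x, 0 ≤ t → ρ x = 0 → ψ t x = 0) {d : ℝ} (hd : 0 < d) (hd1 : d ≤ 1 / 2)
    {T : ℝ} (hT : 0 ≤ T) {R : ℝ≥0∞} (hR : R ≠ ⊤) {c D : NNReal}
    (hD : D = Real.toNNReal (2 / d) * (2000000 * (c + 2) ^ 2) + 64 * (c + 2) ^ 2)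
    (h0 : L2x {x | 0 ≤ ρ x} (gradMag ψ 0) ≤ c * R) (h0' : L2x {x | 0 ≤ ρ x} (ψ 0) ≤ c * R)
    (h1 : ∫⁻ t in Icc 0 T, L2x {x | 0 ≤ ρ x} (boxH h ψ t) ≤ R)
    (h2 : ∫⁻ t in Icc 0 T, L2x {x | 0 ≤ ρ x}
      (fun x => (dhabs h t x + habs h t x / ‖x‖) * gradMag ψ t x) ≤ R) :
    W (Measure.dirac T) ρ 0 (fun t x => gradMag ψ t x ^ 2) ≤ D * R ^ 2 ∧
    W (volume.restrict (Icc 0 T)) ρ ((1 + d) / 2) (fun t x => gradMag ψ t x ^ 2) ≤ D * R ^ 2 ∧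
    W (volume.restrict (Icc 0 T)) ρ (3 / 2) (fun t x => ψ t x ^ 2) ≤ D * R ^ 2 := by
  have hM : L2x {x | 0 ≤ ρ x} (gradMag ψ 0) + ∫⁻ t in Icc 0 T, (L2x {x | 0 ≤ ρ x} (boxH h ψ t)
      + L2x {x | 0 ≤ ρ x} (fun x => (dhabs h t x + habs h t x * jw 1 x) * gradMag ψ t x))
      ≤ (c + 2) * R := by
    rw [lintegral_add_left (measurable_L2x (stx_cont (cont_boxH hh hψ)))]
    calc _ ≤ c * R + (R + R) := add_le_add h0 (add_le_add h1
            ((lintegral_mono fun t => L2x_pert_le ψ t).trans h2))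
      _ = _ := by ring
  obtain ⟨k1, k2⟩ := kss hρ hg hst hh hsym hδ hψ hb hd hd1 hT
    (ne_top_of_le_ne_top (ENNReal.mul_ne_top ENNReal.coe_ne_top hR) h0') hM
    (ENNReal.mul_ne_top (by simp) hR)
  have e : ENNReal.ofReal (2 / d) * (2000000 * ((c + 2) * R) ^ 2) ≤ D * R ^ 2 := by
    rw [hD]; push_cast
    calc _ = (ENNReal.ofReal (2 / d) * (2000000 * ((c : ℝ≥0∞) + 2) ^ 2)) * R ^ 2 := by ring
      _ ≤ _ := by
        gcongr
        exact le_self_add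
  refine ⟨?_, ?_, ?_⟩
  · rw [W_dirac_sq]
    calc _ ≤ (8 * (((c : ℝ≥0∞) + 2) * R)) ^ 2 := by gcongr; exact k1 T ⟨hT, le_rfl⟩
      _ = (64 * ((c : ℝ≥0∞) + 2) ^ 2) * R ^ 2 := by ring
      _ ≤ _ := by
        rw [hD]; push_cast; gcongr; exact le_add_self
  · refine le_trans ?_ (k2.trans e)
    refine lintegral_mono fun t => lintegral_mono fun x => ENNReal.ofReal_le_ofReal ?_
    have : jw ((1 + d) / 2) x ^ 2 = jw (1 + d) x := by rw [sq, jw_mul]; congr 1; ring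
    rw [this]
    have := mul_nonneg (jw_pos 3 x).le (sq_nonneg (ψ t x))
    linarith
  · refine le_trans ?_ (k2.trans e)
    refine lintegral_mono fun t => lintegral_mono fun x => ENNReal.ofReal_le_ofReal ?_
    have : jw (3 / 2) x ^ 2 = jw 3 x := by rw [sq, jw_mul]; congr 1; norm_num
    rw [this]
    have := mul_nonneg (jw_pos (1 + d) x).le (sq_nonneg (gradMag ψ t x))
    linarith

lemma W_anti {ν : Measure ℝ} {p q : ℝ} (hpq : p ≤ q) {f : ℝ → Eu 4 → ℝ} (hf : ∀ t x, 0 ≤ f t x) :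
    W ν ρ q f ≤ W ν ρ p f := by
  refine lintegral_mono fun t => lintegral_mono fun x => ENNReal.ofReal_le_ofReal ?_
  have := jw_anti hpq x
  have h0 := (jw_pos q x).le
  exact mul_le_mul_of_nonneg_right (by gcongr) (hf t x)

/-- A summand indexed by a multi-index is at most the full double sum. -/
lemma le_double_sum {k N : ℕ} (F : ∀ m : ℕ, (Fin m → Fin k) → ℝ≥0∞) {m : ℕ} (hm : m < N)
    (μ : Fin m → Fin k) : F m μ ≤ ∑ m ∈ Finset.range N, ∑ μ : Fin m → Fin k, F m μ :=
  (Finset.single_le_sum (f := F m) (fun _ _ => zero_le) (Finset.mem_univ μ)).trans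
    (Finset.single_le_sum (f := fun m => ∑ μ : Fin m → Fin k, F m μ) (fun _ _ => zero_le)
      (Finset.mem_range.2 hm))

/-- Dirichlet conditions for `t ≥ 0` are inherited by time derivatives. -/
lemma tdIter_bdry {φ : ℝ → Eu 4 → ℝ} (hφ : SmoothTX φ)
    (hb : ∀ t x, 0 ≤ t → ρ x = 0 → φ t x = 0) : ∀ (j : ℕ) t x, 0 ≤ t → ρ x = 0 → td^[j] φ t x = 0
  | 0, t, x, ht, hx => hb t x ht hx
  | j + 1, t, x, ht, hx => by
      rw [Function.iterate_succ_apply']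
      exact td_eq_zero (stx_tdIter hφ j) (fun s hs => tdIter_bdry hφ hb j s x hs hx) ht

/-- The estimate with the right-hand side replaced by any finite bound `R` for all of its terms. -/
lemma main_bound (hρ : Sm ρ) (hg : ∀ x, ρ x = 0 → fderiv ℝ ρ x ≠ 0)
    (hst : ∀ x, ρ x = 0 → 0 ≤ ∑ i, x i * sd i ρ x) (hb1 : ∀ x, ρ x = 0 → ‖x‖ ≤ 1)
    (N : ℕ) {δ' : ℝ} (hδ' : 0 < δ') (c₁ : NNReal) : ∃ C : NNReal,
    ∀ (φ : ℝ → Eu 4 → ℝ) (h : Fin 5 → Fin 5 → ℝ → Eu 4 → ℝ) (f g : Eu 4 → ℝ) (T : ℝ) (R : ℝ≥0∞),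
      R ≠ ⊤ → 0 < T → SmoothTX φ → (∀ α β, SmoothTX (h α β)) →
      (∀ α β t x, h α β t x = h β α t x) → (∀ t x, habs h t x ≤ 1 / 100) →
      (∀ t x, 0 ≤ t → ρ x = 0 → φ t x = 0) → Sm f → Sm g →
      (∀ x, 0 ≤ ρ x → φ 0 x = f x ∧ td φ 0 x = g x) →
      (∀ (m : ℕ) (μ : Fin m → Fin 4), m ≤ N + 1 → L2x {x | 0 ≤ ρ x} (sdIter μ f) ≤ c₁ * R) →
      (∀ (m : ℕ) (μ : Fin m → Fin 4), m ≤ N → L2x {x | 0 ≤ ρ x} (sdIter μ g) ≤ c₁ * R) →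
      (∀ (m : ℕ) (μ : Fin m → Fin 5), m ≤ N →
        L2x {x | 0 ≤ ρ x} (pdIter (n := 4) μ (dAlembert φ) 0) ≤ c₁ * R) →
      (∀ j ≤ N, ∫⁻ t in Icc 0 T, L2x {x | 0 ≤ ρ x} (boxH h (td^[j] φ) t) ≤ R) →
      (∀ j ≤ N, ∫⁻ t in Icc 0 T, L2x {x | 0 ≤ ρ x}
        (fun x => (dhabs h t x + habs h t x / ‖x‖) * gradMag (td^[j] φ) t x) ≤ R) →
      (∀ (m : ℕ) (μ : Fin m → Fin 5), m < N →
        L2st T {x | 0 ≤ ρ x} (dAlembert (pdIter (n := 4) μ φ)) ≤ R) →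
      (∀ (m : ℕ) (μ : Fin m → Fin 5), m < N →
        L2x {x | 0 ≤ ρ x} (dAlembert (pdIter (n := 4) μ φ) T) ≤ R) →
      ∀ (m : ℕ) (μ : Fin m → Fin 5), m ≤ N →
        L2st T {x | 0 ≤ ρ x} (fun t x => jap x ^ (-(1 / 2 : ℝ) - δ') *
            gradMag (pdIter (n := 4) μ φ) t x) ≤ C * R ∧
        L2st T {x | 0 ≤ ρ x} (fun t x => jap x ^ (-(3 : ℝ) / 2) * pdIter (n := 4) μ φ t x) ≤ C * R ∧
        L2x {x | 0 ≤ ρ x} (fun x => gradMag (pdIter (n := 4) μ φ) T x) ≤ C * R := by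
  obtain ⟨c₀, hc₀⟩ := init_L2 hρ hg N
  set d : ℝ := 2 * min δ' (1 / 4) with hd
  have hmin : 0 < min δ' (1 / 4) := lt_min hδ' (by norm_num)
  have hd0 : 0 < d := by linarith
  have hd1 : d ≤ 1 / 2 := by have := min_le_right δ' (1 / 4); linarith
  have hdδ : d / 2 ≤ δ' := by have := min_le_left δ' (1 / 4); linarith
  set p : ℝ := (1 + d) / 2 with hp
  have hp0 : 0 ≤ p := by linarith
  have Z := tangentialFields hρ hg hb1
  obtain ⟨C₁, hC₁⟩ := W_full hρ hg Z hp0 N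
  obtain ⟨C₂, hC₂⟩ := W_full hρ hg Z le_rfl N
  obtain ⟨D, hD⟩ : ∃ D : NNReal, D = Real.toNNReal (2 / d) * (2000000 * (c₀ * c₁ + 2) ^ 2)
    + 64 * (c₀ * c₁ + 2) ^ 2 := ⟨_, rfl⟩
  set E : NNReal := D + 1 with hE
  refine ⟨C₁ * E + C₂ * E + E + 1, fun φ h f g T R hR hT hφ hh hsym hδ hb hf hg' hdat a1 a2 a3 a4 a5
    a6 a7 => ?_⟩
  have hbj := tdIter_bdry hφ hb
  have hDE : (D : ℝ≥0∞) ≤ E := by rw [hE]; push_cast; exact le_self_add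
  have h1E : (1 : ℝ≥0∞) ≤ E := by rw [hE]; push_cast; exact le_add_self
  have en := fun j (hj : j ≤ N) => by
    have h0 := hc₀ φ f g (c₁ * R) hφ hf hg' hdat a1 a2 a3 j hj
    rw [← mul_assoc, ← ENNReal.coe_mul] at h0
    exact energy_one hρ hg hst hh hsym hδ (stx_tdIter hφ j) (hbj j) hd0 hd1 hT.le hR hD h0.1 h0.2
      (a4 j hj) (a5 j hj)
  have f1 : ∀ (m : ℕ) (μ : Fin m → Fin 5), m ≤ N → W (volume.restrict (Icc 0 T)) ρ p
      (fun t x => gradMag (pdIter (n := 4) μ φ) t x ^ 2) ≤ C₁ * (E * R ^ 2) := by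
    refine hC₁ _ φ _ hφ (fun j => ?_) (fun j hj => (en j hj).2.1.trans (by gcongr)) fun m μ hm => ?_
    · filter_upwards [ae_restrict_mem measurableSet_Icc] with t ht x hx
      exact hbj j t x ht.1 hx
    · refine (W_anti hp0 fun t x => sq_nonneg _).trans ?_
      rw [← W_st_sq (stx_cont (stx_dAl (stx_pdIter μ hφ)))]
      simp only [jw_zero, one_mul]
      calc _ ≤ R ^ 2 := by gcongr; exact a6 m μ (by omega)
        _ ≤ _ := le_mul_of_one_le_left' h1E
  have f2 : ∀ (m : ℕ) (μ : Fin m → Fin 5), m ≤ N → W (Measure.dirac T) ρ 0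
      (fun t x => gradMag (pdIter (n := 4) μ φ) t x ^ 2) ≤ C₂ * (E * R ^ 2) := by
    refine hC₂ _ φ _ hφ (fun j => ?_) (fun j hj => (en j hj).1.trans (by gcongr)) fun m μ hm => ?_
    · rw [ae_dirac_eq]
      exact fun x hx => hbj j T x hT.le hx
    · rw [W_dirac_sq]
      calc _ ≤ R ^ 2 := by gcongr; exact a7 m μ (by omega)
        _ ≤ _ := le_mul_of_one_le_left' h1E
  have fin : ∀ {X : ℝ≥0∞} {c : NNReal}, c ≤ C₁ * E + C₂ * E + E → X ^ 2 ≤ c * R ^ 2 →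
      X ≤ (C₁ * E + C₂ * E + E + 1 : NNReal) * R := fun hc hX =>
    le_of_sq_le (hX.trans (by gcongr))
  have hc1 : C₁ * E ≤ C₁ * E + C₂ * E + E := by rw [add_assoc]; exact le_self_add
  have hc2 : C₂ * E ≤ C₁ * E + C₂ * E + E := le_add_right le_add_self
  intro m μ hm
  have hs := stx_pdIter μ hφ
  refine ⟨fin hc1 ?_, ?_, fin hc2 ?_⟩
  · have e : ∀ x : Eu 4, jap x ^ (-(1 / 2 : ℝ) - δ') = jw (1 / 2 + δ') x := fun x => by
      unfold jw; congr 1; ring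
    simp only [e]
    rw [W_st_sq (cont_gradMag hs)]
    refine (W_anti (p := p) (by rw [hp]; linarith) fun t x => sq_nonneg _).trans ((f1 m μ hm).trans ?_)
    push_cast; rw [mul_assoc]
  · have e : ∀ x : Eu 4, jap x ^ (-(3 : ℝ) / 2) = jw (3 / 2) x := fun x => by
      unfold jw; congr 1; ring
    simp only [e]
    rcases m with _ | m
    · refine fin (c := E) le_add_self ?_
      rw [W_st_sq (stx_cont hs)]
      exact (en 0 (Nat.zero_le _)).2.2.trans (by gcongr)
    · refine fin hc1 ?_
      rw [W_st_sq (stx_cont hs)]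
      refine (W_anti (p := p) (by rw [hp]; linarith) fun t x => sq_nonneg _).trans ?_
      refine (W_mono (g := fun t x => gradMag (pdIter (n := 4) (fun i : Fin m => μ i.succ) φ) t x ^ 2)
        fun t x => ?_).trans ((f1 m _ (by omega)).trans ?_)
      · exact sq_le_sq' (abs_le.1 (abs_pd_le _ (μ 0) t x)).1 (abs_le.1 (abs_pd_le _ (μ 0) t x)).2
      · push_cast; rw [mul_assoc]
  · have := f2 m μ hm
    rw [W_dirac_sq] at this
    push_cast; rw [mul_assoc]; exact this

end

end PLE

/-- Localized energy estimate for the perturbed d'Alembertian,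
exterior to a star-shaped obstacle (the ∂^μ version, \eqref{kssext1}). -/
theorem perturbed_localized_energy_pd (O : SmoothObstacle 4)
    (hsub : O.K ⊆ Metric.ball (0 : Eu 4) 1)
    (hstar : ∀ x ∈ O.K, ∀ s : ℝ, s ∈ Icc (0 : ℝ) 1 → s • x ∈ O.K)
    (N : ℕ) (δ' : ℝ) (hδ' : 0 < δ') (R C₁ : ℝ) :
    ∃ δ : ℝ, 0 < δ ∧ ∃ C : ℝ, 0 < C ∧
      ∀ (φ F : ℝ → Eu 4 → ℝ) (h : Fin 5 → Fin 5 → ℝ → Eu 4 → ℝ)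
        (f g : Eu 4 → ℝ) (ε T : ℝ), 0 < ε → 0 < T →
        SmoothTX φ → (∀ α β, SmoothTX (h α β)) →
        (∀ α β t x, h α β t x = h β α t x) →
        (∀ t x, habs h t x ≤ δ) →
        (∀ t : ℝ, ∀ x, 0 ≤ t → 0 ≤ O.ρ x → boxH h φ t x = F t x) →
        (∀ t : ℝ, ∀ x, 0 ≤ t → O.ρ x = 0 → φ t x = 0) →
        ContDiff ℝ (⊤ : ℕ∞) f → ContDiff ℝ (⊤ : ℕ∞) g →
        (∀ x, 0 ≤ O.ρ x → φ 0 x = f x ∧ td φ 0 x = g x) →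
        (∀ x : Eu 4, R ≤ ‖x‖ → f x = 0 ∧ g x = 0) →
        -- the compatibility conditions
        (∀ k : ℕ, ∀ x, O.ρ x = 0 → td^[k] φ 0 x = 0) →
        -- smallness of the data
        ((∑ m ∈ Finset.range (N + 2), ∑ μ : Fin m → Fin 4,
            L2x {x : Eu 4 | 0 ≤ O.ρ x} (sdIter μ f))
          + (∑ m ∈ Finset.range (N + 1), ∑ μ : Fin m → Fin 4,
              L2x {x : Eu 4 | 0 ≤ O.ρ x} (sdIter μ g))
          ≤ ENNReal.ofReal ε) →
        -- Σ_{|μ|≤N} ‖∂^μ □φ(0,·)‖ ≤ C₁ ε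
        ((∑ m ∈ Finset.range (N + 1), ∑ μ : Fin m → Fin 5,
            L2x {x : Eu 4 | 0 ≤ O.ρ x} (pdIter (n := 4) μ (dAlembert φ) 0))
          ≤ ENNReal.ofReal (C₁ * ε)) →
        (∑ m ∈ Finset.range (N + 1), ∑ μ : Fin m → Fin 5,
            (L2st T {x : Eu 4 | 0 ≤ O.ρ x}
                (fun t x => jap x ^ (-(1/2 : ℝ) - δ') * gradMag (pdIter (n := 4) μ φ) t x)
              + L2st T {x : Eu 4 | 0 ≤ O.ρ x}
                  (fun t x => jap x ^ (-(3 : ℝ)/2) * pdIter (n := 4) μ φ t x)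
              + L2x {x : Eu 4 | 0 ≤ O.ρ x} (fun x => gradMag (pdIter (n := 4) μ φ) T x)))
          ≤ ENNReal.ofReal C *
            (ENNReal.ofReal ε
              + (∑ j ∈ Finset.range (N + 1), ∫⁻ t in Icc (0 : ℝ) T,
                  L2x {x : Eu 4 | 0 ≤ O.ρ x} (boxH h (td^[j] φ) t))
              + (∑ j ∈ Finset.range (N + 1), ∫⁻ t in Icc (0 : ℝ) T,
                  L2x {x : Eu 4 | 0 ≤ O.ρ x}
                    (fun x => (dhabs h t x + habs h t x / ‖x‖) * gradMag (td^[j] φ) t x))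
              + (∑ m ∈ Finset.range N, ∑ μ : Fin m → Fin 5,
                  L2st T {x : Eu 4 | 0 ≤ O.ρ x} (dAlembert (pdIter (n := 4) μ φ)))
              + (∑ m ∈ Finset.range N, ∑ μ : Fin m → Fin 5,
                  L2x {x : Eu 4 | 0 ≤ O.ρ x}
                    (fun x => dAlembert (pdIter (n := 4) μ φ) T x))) := by
  have hρ : PLE.Sm O.ρ := O.smooth
  have hg := O.grad_ne
  have hK : ∀ x, x ∈ O.K ↔ O.ρ x ≤ 0 := fun x => by rw [O.K_def]; rfl
  have hb1 : ∀ x, O.ρ x = 0 → ‖x‖ ≤ 1 := fun x hx => by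
    simpa using (Metric.mem_ball.1 (hsub ((hK x).2 hx.le))).le
  have hst : ∀ x, O.ρ x = 0 → 0 ≤ ∑ i, x i * sd i O.ρ x := fun x hx =>
    PLE.star_radial hρ (fun y hy s hs => (hK _).1 (hstar y ((hK y).2 hy) s hs)) hx
  obtain ⟨A, hA⟩ := PLE.main_bound hρ hg hst hb1 N hδ' (Real.toNNReal |C₁| + 1)
  set B : NNReal := (∑ m ∈ Finset.range (N + 1), ∑ _μ : Fin m → Fin 5, (A + A + A)) + 1 with hB
  refine ⟨1 / 100, by norm_num, B, by rw [hB]; positivity, ?_⟩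
  intro φ F h f g ε T _ hT hφ hh hsym hδ _ hbd hf hg' hdat _ _ hs1 hs2
  rw [ENNReal.ofReal_coe_nnreal]
  set I1 := ∑ j ∈ Finset.range (N + 1), ∫⁻ t in Icc (0 : ℝ) T,
    L2x {x : Eu 4 | 0 ≤ O.ρ x} (boxH h (td^[j] φ) t) with hI1
  set I2 := ∑ j ∈ Finset.range (N + 1), ∫⁻ t in Icc (0 : ℝ) T, L2x {x : Eu 4 | 0 ≤ O.ρ x}
    (fun x => (dhabs h t x + habs h t x / ‖x‖) * gradMag (td^[j] φ) t x) with hI2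
  set I3 := ∑ m ∈ Finset.range N, ∑ μ : Fin m → Fin 5,
    L2st T {x : Eu 4 | 0 ≤ O.ρ x} (dAlembert (pdIter (n := 4) μ φ)) with hI3
  set I4 := ∑ m ∈ Finset.range N, ∑ μ : Fin m → Fin 5,
    L2x {x : Eu 4 | 0 ≤ O.ρ x} (fun x => dAlembert (pdIter (n := 4) μ φ) T x) with hI4
  set Q : ℝ≥0∞ := ENNReal.ofReal ε + I1 + I2 + I3 + I4 with hQ
  by_cases hQt : Q = ⊤
  · rw [hQt, ENNReal.mul_top (by rw [hB]; simp)]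
    exact le_top
  have q4 : I4 ≤ Q := le_add_self
  have q3 : I3 ≤ Q := le_add_self.trans le_self_add
  have q2 : I2 ≤ Q := le_add_self.trans (le_self_add.trans le_self_add)
  have q1 : I1 ≤ Q := le_add_self.trans (le_self_add.trans (le_self_add.trans le_self_add))
  have q0 : ENNReal.ofReal ε ≤ Q :=
    le_self_add.trans (le_self_add.trans (le_self_add.trans le_self_add))
  have hc : ENNReal.ofReal ε ≤ ((Real.toNNReal |C₁| + 1 : NNReal) : ℝ≥0∞) * Q := by
    refine q0.trans (le_mul_of_one_le_left' ?_)
    push_cast; exact le_add_self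
  have hc' : ENNReal.ofReal (C₁ * ε) ≤ ((Real.toNNReal |C₁| + 1 : NNReal) : ℝ≥0∞) * Q := by
    calc _ ≤ ENNReal.ofReal (|C₁| * ε) := ENNReal.ofReal_le_ofReal
            (mul_le_mul_of_nonneg_right (le_abs_self _) (by linarith))
      _ = ENNReal.ofReal |C₁| * ENNReal.ofReal ε := ENNReal.ofReal_mul (abs_nonneg _)
      _ ≤ _ := by
        push_cast
        exact mul_le_mul' le_self_add q0
  have key := hA φ h f g T Q hQt hT hφ hh hsym hδ hbd hf hg' hdat
    (fun m μ hm => (PLE.le_double_sum (fun m μ => L2x {x : Eu 4 | 0 ≤ O.ρ x} (sdIter μ f))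
      (by omega : m < N + 2) μ).trans (le_self_add.trans (hs1.trans hc)))
    (fun m μ hm => (PLE.le_double_sum (fun m μ => L2x {x : Eu 4 | 0 ≤ O.ρ x} (sdIter μ g))
      (by omega : m < N + 1) μ).trans (le_add_self.trans (hs1.trans hc)))
    (fun m μ hm => (PLE.le_double_sum
      (fun m μ => L2x {x : Eu 4 | 0 ≤ O.ρ x} (pdIter (n := 4) μ (dAlembert φ) 0))
      (by omega : m < N + 1) μ).trans (hs2.trans hc'))
    (fun j hj => (Finset.single_le_sum (f := fun j => ∫⁻ t in Icc (0 : ℝ) T,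
      L2x {x : Eu 4 | 0 ≤ O.ρ x} (boxH h (td^[j] φ) t)) (fun _ _ => zero_le)
      (Finset.mem_range.2 (by omega))).trans q1)
    (fun j hj => (Finset.single_le_sum (f := fun j => ∫⁻ t in Icc (0 : ℝ) T,
      L2x {x : Eu 4 | 0 ≤ O.ρ x}
        (fun x => (dhabs h t x + habs h t x / ‖x‖) * gradMag (td^[j] φ) t x)) (fun _ _ => zero_le)
      (Finset.mem_range.2 (by omega))).trans q2)
    (fun m μ hm => (PLE.le_double_sum (fun m μ =>
      L2st T {x : Eu 4 | 0 ≤ O.ρ x} (dAlembert (pdIter (n := 4) μ φ))) hm μ).trans q3)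
    (fun m μ hm => (PLE.le_double_sum (fun m μ => L2x {x : Eu 4 | 0 ≤ O.ρ x}
      (fun x => dAlembert (pdIter (n := 4) μ φ) T x)) hm μ).trans q4)
  calc _ ≤ ∑ m ∈ Finset.range (N + 1), ∑ _μ : Fin m → Fin 5, ((A + A + A : NNReal) : ℝ≥0∞) * Q := by
        refine Finset.sum_le_sum fun m hm => Finset.sum_le_sum fun μ _ => ?_
        obtain ⟨k1, k2, k3⟩ := key m μ (by have := Finset.mem_range.1 hm; omega)
        push_cast
        rw [add_mul, add_mul]
        exact add_le_add (add_le_add k1 k2) k3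
    _ = ((∑ m ∈ Finset.range (N + 1), ∑ _μ : Fin m → Fin 5, (A + A + A) : NNReal) : ℝ≥0∞) * Q := by
        push_cast
        simp only [Finset.sum_mul]
    _ ≤ _ := by
        refine mul_le_mul' ?_ le_rfl
        rw [hB]
        exact_mod_cast le_self_add
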